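/- Weighted fractional interpolation inequality on Euclidean space (Theorem 1.4): Let n ≥ 1 be an integer, s ∈ (0, n), q⋆ = 2n/(n−s), q ∈ (2, q⋆), β = 2n(1 − q/q⋆), and κ_{n,s} = Γ((n−s)/2)/Γ((n+s)/2). Set a = ((q−2)/(q⋆−2)) · κ_{n,s} · 2^{n(2/q⋆ − 2/q)} · |Sⁿ|^{2/q − 1} and b = ((q⋆−q)/(q⋆−2)) · 2^{n(1 − 2/q)} · |Sⁿ|^{2/q − 1}. Then for every real-valued Schwartz function f on ℝⁿ, ( ∫_{ℝⁿ} |f(x)|^q (1+|x|²)^{−β/2} dx )^{2/q} ≤ a · ‖f‖²_{Ḣ^{s/2}} + b · ∫_{ℝⁿ} |f(x)|² (1+|x|²)^{−s} dx. -/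

import Mathlib

open MeasureTheory Real SchwartzMap
open scoped FourierTransform

/-- The homogeneous Sobolev seminorm squared `‖f‖²_{Ḣ^{s/2}}` of a Schwartz function
`f` on `ℝⁿ`, written via the Fourier transform. -/
noncomputable def homogSobolevNormSq (n : ℕ) (s : ℝ)
    (f : SchwartzMap (EuclideanSpace ℝ (Fin n)) ℝ) : ℝ :=
  ∫ ξ : EuclideanSpace ℝ (Fin n),
    (2 * π * ‖ξ‖) ^ s * ‖𝓕 (fun x => (f x : ℂ)) ξ‖ ^ 2

namespace WFI

theorem lint_gamma {r b : ℝ} (hr : 0 < r) (hb : 0 < b) :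
    ∫⁻ t in Set.Ioi (0:ℝ), ENNReal.ofReal (t ^ (r - 1) * exp (-(b * t)))
      = ENNReal.ofReal (Gamma r * b ^ (-r)) := by
  have h := Real.integral_rpow_mul_exp_neg_mul_Ioi hr hb
  have hpos : 0 < (1 / b) ^ r * Gamma r := by
    have := Gamma_pos_of_pos hr
    positivity
  have hgint : Integrable (fun t : ℝ => t ^ (r - 1) * exp (-(b * t)))
      (volume.restrict (Set.Ioi (0:ℝ))) := by
    by_contra hc
    rw [integral_undef hc] at h
    linarith
  rw [← ofReal_integral_eq_lintegral_ofReal hgint, h]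
  · congr 1
    rw [one_div, Real.inv_rpow hb.le, Real.rpow_neg hb.le, mul_comm]
  · filter_upwards [ae_restrict_mem measurableSet_Ioi] with t ht
    have : (0:ℝ) < t := ht
    positivity

theorem lint_gauss (n : ℕ) {b : ℝ} (hb : 0 < b) :
    ∫⁻ x : EuclideanSpace ℝ (Fin n), ENNReal.ofReal (exp (-(b * ‖x‖ ^ 2)))
      = ENNReal.ofReal ((π / b) ^ ((n:ℝ) / 2)) := by
  have h := GaussianFourier.integral_rexp_neg_mul_sq_norm (V := EuclideanSpace ℝ (Fin n)) hb
  simp only [finrank_euclideanSpace, Fintype.card_fin] at h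
  have hpos : 0 < (π / b) ^ ((n:ℝ) / 2) := by positivity
  have hgint : Integrable (fun x : EuclideanSpace ℝ (Fin n) => exp (-b * ‖x‖ ^ 2)) := by
    by_contra hc
    rw [integral_undef hc] at h
    linarith
  rw [← h, ofReal_integral_eq_lintegral_ofReal hgint]
  · simp only [neg_mul]
  · filter_upwards with x
    positivity

theorem lint_japan (n : ℕ) {r : ℝ} (hr : (n:ℝ) / 2 < r) :
    ∫⁻ x : EuclideanSpace ℝ (Fin n), ENNReal.ofReal ((1 + ‖x‖ ^ 2) ^ (-r))
      = ENNReal.ofReal (π ^ ((n:ℝ) / 2) * Gamma (r - n / 2) / Gamma r) := by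
  have hn : (0:ℝ) ≤ (n:ℝ) / 2 := by positivity
  have hr0 : 0 < r := by linarith
  have hG := Gamma_pos_of_pos hr0
  have hG' : 0 < Gamma (r - n / 2) := Gamma_pos_of_pos (by linarith)
  have key : ENNReal.ofReal (Gamma r) *
      ∫⁻ x : EuclideanSpace ℝ (Fin n), ENNReal.ofReal ((1 + ‖x‖ ^ 2) ^ (-r))
      = ENNReal.ofReal (π ^ ((n:ℝ) / 2) * Gamma (r - n / 2)) := by
    rw [← lintegral_const_mul _ (by fun_prop)]
    calc _ = ∫⁻ x : EuclideanSpace ℝ (Fin n), ∫⁻ t in Set.Ioi (0:ℝ),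
          ENNReal.ofReal (t ^ (r - 1) * exp (-((1 + ‖x‖ ^ 2) * t))) := by
          congr 1; ext x
          rw [lint_gamma hr0 (by positivity), ENNReal.ofReal_mul hG.le]
      _ = ∫⁻ t in Set.Ioi (0:ℝ), ∫⁻ x : EuclideanSpace ℝ (Fin n),
          ENNReal.ofReal (t ^ (r - 1) * exp (-((1 + ‖x‖ ^ 2) * t))) := by
          apply lintegral_lintegral_swap
          apply Measurable.aemeasurable
          fun_prop
      _ = ∫⁻ t in Set.Ioi (0:ℝ), ENNReal.ofReal (π ^ ((n:ℝ) / 2)) *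
            ENNReal.ofReal (t ^ ((r - n / 2) - 1) * exp (-(1 * t))) := by
          apply setLIntegral_congr_fun measurableSet_Ioi
          intro t ht
          have ht : (0:ℝ) < t := ht
          have : ∀ x : EuclideanSpace ℝ (Fin n),
            ENNReal.ofReal (t ^ (r - 1) * exp (-((1 + ‖x‖ ^ 2) * t))) =
            ENNReal.ofReal (t ^ (r - 1) * exp (-t)) * ENNReal.ofReal (exp (-(t * ‖x‖ ^ 2))) := by
            intro x
            rw [← ENNReal.ofReal_mul (by positivity), mul_assoc, ← Real.exp_add]
            ring_nf
          simp only [this]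
          rw [lintegral_const_mul _ (by fun_prop), lint_gauss n ht,
            ← ENNReal.ofReal_mul (by positivity), ← ENNReal.ofReal_mul (by positivity)]
          congr 1
          rw [Real.div_rpow (by positivity) ht.le, show r - n / 2 - 1 = (r - 1) - n / 2 by ring,
            Real.rpow_sub ht (r-1)]
          ring_nf
      _ = _ := by
          rw [lintegral_const_mul _ (by fun_prop), lint_gamma (by linarith) one_pos,
            ← ENNReal.ofReal_mul (by positivity)]
          simp
  have h0 : ENNReal.ofReal (Gamma r) ≠ 0 := by simpa using hG
  rw [← ENNReal.eq_div_iff h0 ENNReal.ofReal_ne_top] at key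
  rw [key, ENNReal.ofReal_div_of_pos hG]

end WFI

namespace WFI

noncomputable def rho {n : ℕ} (x : EuclideanSpace ℝ (Fin n)) : ℝ := 2 / (1 + ‖x‖ ^ 2)

noncomputable def ker {n : ℕ} (a : ℝ) (x y : EuclideanSpace ℝ (Fin n)) : ℝ :=
  (‖x - y‖ ^ 2 * (rho x * rho y)) ^ (-a)

noncomputable def E0 (n : ℕ) (a : ℝ) : ℝ :=
  2 ^ ((n:ℝ) - 2 * a) * (π ^ ((n:ℝ) / 2) * Gamma (n - a - n / 2) / Gamma (n - a))

noncomputable def sig (n : ℕ) : Measure (EuclideanSpace ℝ (Fin n)) :=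
  volume.withDensity (fun x => ENNReal.ofReal (rho x ^ n))

variable {n : ℕ}

theorem rho_pos (x : EuclideanSpace ℝ (Fin n)) : 0 < rho x := by unfold rho; positivity

theorem rho_le (x : EuclideanSpace ℝ (Fin n)) : rho x ≤ 2 := by
  unfold rho
  rw [div_le_iff₀ (by positivity)]
  nlinarith [sq_nonneg ‖x‖]

@[fun_prop]
theorem rho_cont : Continuous (rho : EuclideanSpace ℝ (Fin n) → ℝ) := by
  unfold rho
  apply Continuous.div (by fun_prop) (by fun_prop)
  intro x; positivity

@[fun_prop]
theorem rho_meas : Measurable (rho : EuclideanSpace ℝ (Fin n) → ℝ) := rho_cont.measurable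

theorem ker_nonneg (a : ℝ) (x y : EuclideanSpace ℝ (Fin n)) : 0 ≤ ker a x y := by
  have := rho_pos x
  have := rho_pos y
  unfold ker; positivity

theorem ker_symm (a : ℝ) (x y : EuclideanSpace ℝ (Fin n)) : ker a x y = ker a y x := by
  unfold ker; rw [norm_sub_rev, mul_comm (rho x)]

theorem ker_meas (a : ℝ) : Measurable (fun z : EuclideanSpace ℝ (Fin n) × EuclideanSpace ℝ (Fin n) =>
    ker a z.1 z.2) := by
  unfold ker; fun_prop

theorem E0_pos {a : ℝ} (ha : a < n / 2) : 0 < E0 n a := by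
  have hn : (0:ℝ) ≤ (n:ℝ) := by positivity
  have := Gamma_pos_of_pos (show 0 < (n:ℝ) - a - n / 2 by linarith)
  have := Gamma_pos_of_pos (show 0 < (n:ℝ) - a by linarith)
  unfold E0; positivity

/-- scaling of `rho` under the inversion centred at `x` with radius `√(1+|x|²)`. -/
theorem rho_inversion (x y : EuclideanSpace ℝ (Fin n)) (hxy : y ≠ x) :
    rho (EuclideanGeometry.inversion x (√(1 + ‖x‖ ^ 2)) y)
      = rho y * (dist y x ^ 2 / (1 + ‖x‖ ^ 2)) := by
  have hD : 0 < dist y x := dist_pos.2 hxy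
  have hR : (√(1 + ‖x‖ ^ 2)) ^ 2 = 1 + ‖x‖ ^ 2 := Real.sq_sqrt (by positivity)
  have h1 : ‖EuclideanGeometry.inversion x (√(1 + ‖x‖ ^ 2)) y‖ ^ 2 + 1
     = (1 + ‖x‖ ^ 2) / dist y x ^ 2 * (1 + ‖y‖ ^ 2) := by
    rw [EuclideanGeometry.inversion, vsub_eq_sub, vadd_eq_add, div_pow, hR, norm_add_sq_real,
      norm_smul, real_inner_smul_left, mul_pow, Real.norm_of_nonneg (by positivity)]
    have h2 : ‖y‖ ^ 2 = dist y x ^ 2 + 2 * inner ℝ (y - x) x + ‖x‖ ^ 2 := by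
      rw [dist_eq_norm, ← norm_add_sq_real]; simp
    rw [h2, ← dist_eq_norm]
    field_simp
    ring
  unfold rho
  rw [add_comm, h1]
  field_simp

theorem lint_ker_vol [NeZero n] {a : ℝ} (ha : a < n / 2) (x : EuclideanSpace ℝ (Fin n)) :
    ∫⁻ y, ENNReal.ofReal (ker a x y * rho y ^ n) = ENNReal.ofReal (E0 n a) := by
  set R := √(1 + ‖x‖ ^ 2) with hRdef
  have hR : R ^ 2 = 1 + ‖x‖ ^ 2 := Real.sq_sqrt (by positivity)
  have hRpos : 0 < R := Real.sqrt_pos.2 (by positivity)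
  have himg : EuclideanGeometry.inversion x R '' {x}ᶜ = {x}ᶜ := by
    ext y
    constructor
    · rintro ⟨z, hz, rfl⟩
      simpa [EuclideanGeometry.inversion_eq_center, hRpos.ne'] using hz
    · intro hy
      refine ⟨EuclideanGeometry.inversion x R y, ?_, ?_⟩
      · simpa [EuclideanGeometry.inversion_eq_center, hRpos.ne'] using hy
      · exact EuclideanGeometry.inversion_inversion x hRpos.ne' y
  have hinj : Set.InjOn (EuclideanGeometry.inversion x R) {x}ᶜ :=
    (EuclideanGeometry.inversion_injective x hRpos.ne').injOn
  have hcv := lintegral_image_eq_lintegral_abs_det_fderiv_mul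
    (volume : Measure (EuclideanSpace ℝ (Fin n)))
    (MeasurableSet.compl (measurableSet_singleton x))
    (fun y hy => (EuclideanGeometry.hasFDerivAt_inversion (R := R)
      (show y ≠ x from hy)).hasFDerivWithinAt) hinj
    (fun y => ENNReal.ofReal (ker a x y * rho y ^ n))
  rw [himg] at hcv
  have hae : ({x}ᶜ : Set (EuclideanSpace ℝ (Fin n))) =ᵐ[volume] Set.univ := by
    rw [ae_eq_univ]; simp
  rw [setLIntegral_congr hae, setLIntegral_univ] at hcv
  rw [hcv]
  have hpt : ∀ y ∈ ({x}ᶜ : Set (EuclideanSpace ℝ (Fin n))),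
      ENNReal.ofReal |((R / dist y x) ^ 2 •
        ((ℝ ∙ (y - x))ᗮ.reflection : EuclideanSpace ℝ (Fin n) →L[ℝ] EuclideanSpace ℝ (Fin n))).det| *
      ENNReal.ofReal (ker a x (EuclideanGeometry.inversion x R y) *
        rho (EuclideanGeometry.inversion x R y) ^ n) =
      ENNReal.ofReal (2 ^ ((n:ℝ) - 2 * a)) * ENNReal.ofReal ((1 + ‖y‖ ^ 2) ^ (-((n:ℝ) - a))) := by
    intro y hy
    have hxy : y ≠ x := hy
    have hD : 0 < dist y x := dist_pos.2 hxy
    have hry := rho_pos y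
    have hdet : |((R / dist y x) ^ 2 •
        ((ℝ ∙ (y - x))ᗮ.reflection : EuclideanSpace ℝ (Fin n) →L[ℝ] EuclideanSpace ℝ (Fin n))).det|
        = ((R / dist y x) ^ 2) ^ n := by
      have h3 : LinearMap.det ((ℝ ∙ (y - x))ᗮ.reflection.toLinearMap) =
        (-1) ^ Module.finrank ℝ ((ℝ ∙ (y - x))ᗮᗮ : Submodule ℝ _) := Submodule.det_reflection _
      have h4 : ((R / dist y x) ^ 2 •
        ((ℝ ∙ (y - x))ᗮ.reflection : EuclideanSpace ℝ (Fin n) →L[ℝ] EuclideanSpace ℝ (Fin n))).det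
        = ((R / dist y x) ^ 2) ^ n * LinearMap.det ((ℝ ∙ (y - x))ᗮ.reflection.toLinearMap) := by
        rw [ContinuousLinearMap.det, ContinuousLinearMap.toLinearMap_smul, LinearMap.det_smul,
          finrank_euclideanSpace_fin]
        rfl
      rw [h4, h3, abs_mul, abs_neg_one_pow, mul_one, abs_of_nonneg]
      positivity
    rw [hdet, ← ENNReal.ofReal_mul (by positivity), ← ENNReal.ofReal_mul (by positivity)]
    congr 1
    have hnorm : ‖x - EuclideanGeometry.inversion x R y‖ = R ^ 2 / dist y x := by
      rw [← dist_eq_norm, dist_comm, EuclideanGeometry.dist_inversion_center]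
    have h5 : ker a x (EuclideanGeometry.inversion x R y) = (2 * rho y) ^ (-a) := by
      unfold ker
      rw [hnorm, rho_inversion x y hxy, ← hR]
      congr 1
      unfold rho
      rw [← hR]
      field_simp
    rw [h5, rho_inversion x y hxy, ← hR]
    have h6 : ((R / dist y x) ^ 2) ^ n * ((2 * rho y) ^ (-a) * (rho y * (dist y x ^ 2 / R ^ 2)) ^ n)
       = (2 * rho y) ^ (-a) * rho y ^ n := by
      rw [mul_left_comm, ← mul_pow]
      congr 2
      field_simp
    rw [h6]
    have h7 : rho y = 2 * (1 + ‖y‖ ^ 2)⁻¹ := by unfold rho; rw [div_eq_mul_inv]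
    have hY : 0 < 1 + ‖y‖ ^ 2 := by positivity
    rw [← Real.rpow_natCast, Real.mul_rpow (by norm_num) hry.le, mul_assoc, ← Real.rpow_add hry,
      h7, Real.mul_rpow (by norm_num) (by positivity), ← mul_assoc, ← Real.rpow_add (by norm_num),
      Real.inv_rpow hY.le, ← Real.rpow_neg hY.le]
    ring_nf
  rw [setLIntegral_congr_fun (MeasurableSet.compl (measurableSet_singleton x)) hpt,
    setLIntegral_congr hae, setLIntegral_univ, lintegral_const_mul _ (by fun_prop),
    lint_japan n (by linarith), ← ENNReal.ofReal_mul (by positivity)]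
  rfl

end WFI

namespace WFI
variable {n : ℕ}

theorem lint_sig (F : EuclideanSpace ℝ (Fin n) → ENNReal) (hF : Measurable F) :
    ∫⁻ x, F x ∂(sig n) = ∫⁻ x, ENNReal.ofReal (rho x ^ n) * F x := by
  unfold sig
  rw [lintegral_withDensity_eq_lintegral_mul _ (by fun_prop) hF]
  rfl

theorem int_sig (F : EuclideanSpace ℝ (Fin n) → ℝ) :
    ∫ x, F x ∂(sig n) = ∫ x, F x * rho x ^ n := by
  unfold sig
  rw [integral_withDensity_eq_integral_toReal_smul (by fun_prop) (by simp)]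
  congr 1; ext x
  rw [ENNReal.toReal_ofReal (pow_nonneg (rho_pos x).le n), smul_eq_mul, mul_comm]

theorem integrable_sig (F : EuclideanSpace ℝ (Fin n) → ℝ) :
    Integrable F (sig n) ↔ Integrable (fun x => F x * rho x ^ n) volume := by
  unfold sig
  rw [integrable_withDensity_iff (by fun_prop) (by simp)]
  have : ∀ x : EuclideanSpace ℝ (Fin n), (ENNReal.ofReal (rho x ^ n)).toReal = rho x ^ n :=
    fun x => ENNReal.toReal_ofReal (pow_nonneg (rho_pos x).le n)
  simp only [this]

theorem lint_ker [NeZero n] {a : ℝ} (ha : a < n / 2) (x : EuclideanSpace ℝ (Fin n)) :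
    ∫⁻ y, ENNReal.ofReal (ker a x y) ∂(sig n) = ENNReal.ofReal (E0 n a) := by
  rw [lint_sig _ (by have := ker_meas (n := n) a; unfold ker; fun_prop), ← lint_ker_vol ha x]
  congr 1; ext y
  rw [mul_comm, ENNReal.ofReal_mul (ker_nonneg a x y)]

theorem sig_univ [NeZero n] : sig n Set.univ = ENNReal.ofReal (E0 n 0) := by
  have hn : (0:ℝ) < n := by exact_mod_cast Nat.pos_of_ne_zero (NeZero.ne n)
  rw [← lint_ker (n := n) (a := 0) (by positivity) 0]
  simp [ker]

instance [NeZero n] : IsFiniteMeasure (sig n) := ⟨by rw [sig_univ]; simp⟩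

theorem sig_real [NeZero n] : (sig n).real Set.univ = E0 n 0 := by
  have hn : (0:ℝ) < n := by exact_mod_cast Nat.pos_of_ne_zero (NeZero.ne n)
  rw [Measure.real, sig_univ, ENNReal.toReal_ofReal (E0_pos (by positivity)).le]

theorem sig_ac : sig n ≪ volume := withDensity_absolutelyContinuous _ _

theorem vol_ac : volume ≪ sig n := by
  apply withDensity_absolutelyContinuous' (by fun_prop)
  filter_upwards with x
  have := rho_pos x
  simpa using pow_pos this n

theorem integrable_ker [NeZero n] {a : ℝ} (ha : a < n / 2) (x : EuclideanSpace ℝ (Fin n)) :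
    Integrable (fun y => ker a x y) (sig n) := by
  refine ⟨(by have := ker_meas (n := n) a; unfold ker; fun_prop :
    Measurable (fun y => ker a x y)).aestronglyMeasurable, ?_⟩
  rw [hasFiniteIntegral_iff_ofReal (by filter_upwards with y using ker_nonneg a x y), lint_ker ha x]
  simp

theorem integral_ker [NeZero n] {a : ℝ} (ha : a < n / 2) (x : EuclideanSpace ℝ (Fin n)) :
    ∫ y, ker a x y ∂(sig n) = E0 n a := by
  rw [integral_eq_lintegral_of_nonneg_ae (by filter_upwards with y using ker_nonneg a x y)
    (integrable_ker ha x).1, lint_ker ha x, ENNReal.toReal_ofReal (E0_pos ha).le]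

theorem integrable_fst_ker [NeZero n] {a : ℝ} (ha : a < n / 2) {F : EuclideanSpace ℝ (Fin n) → ℝ}
    (hF : Integrable F (sig n)) :
    Integrable (fun z : EuclideanSpace ℝ (Fin n) × EuclideanSpace ℝ (Fin n) =>
      F z.1 * ker a z.1 z.2) ((sig n).prod (sig n)) := by
  have hm : AEStronglyMeasurable (fun z : EuclideanSpace ℝ (Fin n) × EuclideanSpace ℝ (Fin n) =>
      F z.1 * ker a z.1 z.2) ((sig n).prod (sig n)) :=
    hF.1.comp_fst.mul (ker_meas a).aestronglyMeasurable
  rw [integrable_prod_iff hm]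
  refine ⟨by filter_upwards with x using (integrable_ker ha x).const_mul _, ?_⟩
  have : ∀ x : EuclideanSpace ℝ (Fin n), ∫ y, ‖F x * ker a x y‖ ∂(sig n) = ‖F x‖ * E0 n a := by
    intro x
    simp only [norm_mul, Real.norm_of_nonneg (ker_nonneg a _ _)]
    rw [integral_const_mul, integral_ker ha]
  simp only [this]
  exact hF.norm.mul_const _

theorem integral_fst_ker [NeZero n] {a : ℝ} (ha : a < n / 2) {F : EuclideanSpace ℝ (Fin n) → ℝ}
    (hF : Integrable F (sig n)) :
    ∫ z : EuclideanSpace ℝ (Fin n) × EuclideanSpace ℝ (Fin n),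
      F z.1 * ker a z.1 z.2 ∂((sig n).prod (sig n)) = E0 n a * ∫ x, F x ∂(sig n) := by
  rw [integral_prod _ (integrable_fst_ker ha hF)]
  simp only [integral_const_mul, integral_ker ha]
  rw [integral_mul_const, mul_comm]

theorem integrable_snd_ker [NeZero n] {a : ℝ} (ha : a < n / 2) {F : EuclideanSpace ℝ (Fin n) → ℝ}
    (hF : Integrable F (sig n)) :
    Integrable (fun z : EuclideanSpace ℝ (Fin n) × EuclideanSpace ℝ (Fin n) =>
      F z.2 * ker a z.1 z.2) ((sig n).prod (sig n)) := by
  have := (integrable_fst_ker ha hF).swap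
  refine this.congr ?_
  filter_upwards with z
  simp [ker_symm a z.2 z.1]

theorem integral_snd_ker [NeZero n] {a : ℝ} (ha : a < n / 2) {F : EuclideanSpace ℝ (Fin n) → ℝ}
    (hF : Integrable F (sig n)) :
    ∫ z : EuclideanSpace ℝ (Fin n) × EuclideanSpace ℝ (Fin n),
      F z.2 * ker a z.1 z.2 ∂((sig n).prod (sig n)) = E0 n a * ∫ x, F x ∂(sig n) := by
  rw [← integral_fst_ker ha hF, ← integral_prod_swap]
  congr 1; ext z
  simp [ker_symm a z.2 z.1]

/-- The bilinear form with kernel `ker a`. -/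
noncomputable def bf (a : ℝ) (f g : EuclideanSpace ℝ (Fin n) → ℝ) : ℝ :=
  ∫ z : EuclideanSpace ℝ (Fin n) × EuclideanSpace ℝ (Fin n),
      f z.1 * g z.2 * ker a z.1 z.2 ∂((sig n).prod (sig n))

theorem bf_symm [NeZero n] (a : ℝ) (f g : EuclideanSpace ℝ (Fin n) → ℝ) : bf a f g = bf a g f := by
  unfold bf
  rw [← integral_prod_swap]
  congr 1; ext z
  simp only [Prod.fst_swap, Prod.snd_swap]
  rw [ker_symm a z.2 z.1]; ring

theorem bf_integrable [NeZero n] {a : ℝ} (ha : a < n / 2) {f g : EuclideanSpace ℝ (Fin n) → ℝ}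
    (hf : MemLp f 2 (sig n)) (hg : MemLp g 2 (sig n)) :
    Integrable (fun z : EuclideanSpace ℝ (Fin n) × EuclideanSpace ℝ (Fin n) =>
      f z.1 * g z.2 * ker a z.1 z.2) ((sig n).prod (sig n)) := by
  refine Integrable.mono ((integrable_fst_ker ha hf.integrable_sq).add
    (integrable_snd_ker ha hg.integrable_sq))
    ((hf.1.comp_fst.mul hg.1.comp_snd).mul (ker_meas a).aestronglyMeasurable) ?_
  filter_upwards with z
  have hk := ker_nonneg a z.1 z.2
  simp only [Pi.add_apply, ← add_mul]
  rw [norm_mul, norm_mul (_ + _), Real.norm_of_nonneg hk]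
  refine mul_le_mul_of_nonneg_right ?_ hk
  rw [Real.norm_eq_abs, Real.norm_of_nonneg (by positivity), abs_mul]
  nlinarith [sq_nonneg (|f z.1| - |g z.2|), sq_abs (f z.1), sq_abs (g z.2), abs_nonneg (f z.1), abs_nonneg (g z.2)]

theorem bf_le [NeZero n] {a : ℝ} (ha : a < n / 2) {f g : EuclideanSpace ℝ (Fin n) → ℝ}
    (hf : MemLp f 2 (sig n)) (hg : MemLp g 2 (sig n)) {c : ℝ} (hc : 0 < c) :
    |bf a f g| ≤ E0 n a * ((c * ∫ x, f x ^ 2 ∂(sig n)) + c⁻¹ * ∫ x, g x ^ 2 ∂(sig n)) / 2 := by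
  unfold bf
  have h1 := (integrable_fst_ker ha hf.integrable_sq).const_mul (c / 2)
  have h2 := (integrable_snd_ker ha hg.integrable_sq).const_mul (c⁻¹ / 2)
  calc _ ≤ ∫ z : EuclideanSpace ℝ (Fin n) × EuclideanSpace ℝ (Fin n),
      (c / 2 * (f z.1 ^ 2 * ker a z.1 z.2) + c⁻¹ / 2 * (g z.2 ^ 2 * ker a z.1 z.2))
      ∂((sig n).prod (sig n)) := by
        rw [← Real.norm_eq_abs]
        apply norm_integral_le_of_norm_le (h1.add h2)
        filter_upwards with z
        have hk := ker_nonneg a z.1 z.2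
        simp only [Pi.add_apply]
        rw [norm_mul, norm_mul, Real.norm_of_nonneg hk, ← mul_assoc, ← mul_assoc, ← add_mul]
        refine mul_le_mul_of_nonneg_right ?_ hk
        have : c / 2 * f z.1 ^ 2 + c⁻¹ / 2 * g z.2 ^ 2 - ‖f z.1‖ * ‖g z.2‖ =
          c⁻¹ / 2 * (c * ‖f z.1‖ - ‖g z.2‖) ^ 2 := by
          rw [Real.norm_eq_abs, Real.norm_eq_abs, ← sq_abs (f z.1), ← sq_abs (g z.2)]
          field_simp; ring
        have h3 : 0 ≤ c⁻¹ / 2 * (c * ‖f z.1‖ - ‖g z.2‖) ^ 2 := by positivity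
        linarith
    _ = _ := by
        rw [integral_add h1 h2, integral_const_mul, integral_const_mul, integral_fst_ker ha hf.integrable_sq,
          integral_snd_ker ha hg.integrable_sq]
        ring

theorem bf_congr [NeZero n] {a : ℝ} {f g f' g' : EuclideanSpace ℝ (Fin n) → ℝ}
    (hf : f =ᵐ[sig n] f') (hg : g =ᵐ[sig n] g') : bf a f g = bf a f' g' := by
  unfold bf
  apply integral_congr_ae
  have h1 := Measure.quasiMeasurePreserving_fst (μ := sig n) (ν := sig n) |>.ae_eq_comp hf
  have h2 := Measure.quasiMeasurePreserving_snd (μ := sig n) (ν := sig n) |>.ae_eq_comp hg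
  filter_upwards [h1, h2] with z hz1 hz2
  simp only [Function.comp] at hz1 hz2
  rw [hz1, hz2]

theorem bf_add_left [NeZero n] {a : ℝ} (ha : a < n / 2) {f f' g : EuclideanSpace ℝ (Fin n) → ℝ}
    (hf : MemLp f 2 (sig n)) (hf' : MemLp f' 2 (sig n)) (hg : MemLp g 2 (sig n)) :
    bf a (f + f') g = bf a f g + bf a f' g := by
  unfold bf
  rw [← integral_add (bf_integrable ha hf hg) (bf_integrable ha hf' hg)]
  congr 1; ext z; simp; ring

theorem bf_smul_left [NeZero n] {a : ℝ} (c : ℝ) (f g : EuclideanSpace ℝ (Fin n) → ℝ) :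
    bf a (c • f) g = c * bf a f g := by
  unfold bf
  rw [← integral_const_mul]
  congr 1; ext z; simp; ring

theorem bf_add_right [NeZero n] {a : ℝ} (ha : a < n / 2) {f g g' : EuclideanSpace ℝ (Fin n) → ℝ}
    (hf : MemLp f 2 (sig n)) (hg : MemLp g 2 (sig n)) (hg' : MemLp g' 2 (sig n)) :
    bf a f (g + g') = bf a f g + bf a f g' := by
  rw [bf_symm, bf_add_left ha hg hg' hf, bf_symm a g, bf_symm a g']

theorem bf_smul_right [NeZero n] {a : ℝ} (c : ℝ) (f g : EuclideanSpace ℝ (Fin n) → ℝ) :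
    bf a f (c • g) = c * bf a f g := by
  rw [bf_symm, bf_smul_left, bf_symm]

/-- algebraic version of the form on `L²`. -/
noncomputable def bformLin (n : ℕ) [NeZero n] (a : ℝ) (ha : a < n / 2) :
    Lp ℝ 2 (sig n) →ₗ[ℝ] Lp ℝ 2 (sig n) →ₗ[ℝ] ℝ :=
  LinearMap.mk₂ ℝ (fun f g => bf a f g)
    (fun f f' g => by
      rw [← bf_add_left ha (Lp.memLp f) (Lp.memLp f') (Lp.memLp g)]
      exact bf_congr (Lp.coeFn_add f f') (by rfl))
    (fun c f g => by
      rw [smul_eq_mul, ← bf_smul_left]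
      exact bf_congr (Lp.coeFn_smul c f) (by rfl))
    (fun f g g' => by
      rw [← bf_add_right ha (Lp.memLp f) (Lp.memLp g) (Lp.memLp g')]
      exact bf_congr (by rfl) (Lp.coeFn_add g g'))
    (fun c f g => by
      rw [smul_eq_mul, ← bf_smul_right]
      exact bf_congr (by rfl) (Lp.coeFn_smul c g))

theorem L2_norm_sq (f : Lp ℝ 2 (sig n)) : ∫ x, f x ^ 2 ∂(sig n) = ‖f‖ ^ 2 := by
  rw [← real_inner_self_eq_norm_sq, L2.inner_def]
  simp [sq]

noncomputable def bform (n : ℕ) [NeZero n] (a : ℝ) (ha : a < n / 2) :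
    Lp ℝ 2 (sig n) →L[ℝ] Lp ℝ 2 (sig n) →L[ℝ] ℝ :=
  LinearMap.mkContinuous₂ (bformLin n a ha) (E0 n a) (by
    intro f g
    change ‖bf a f g‖ ≤ _
    rcases eq_or_ne f 0 with rfl | hf
    · have : bformLin n a ha 0 g = 0 := by simp
      change bf a _ g = 0 at this
      rw [this]; simp
    rcases eq_or_ne g 0 with rfl | hg
    · have : bformLin n a ha f 0 = 0 := by simp
      change bf a f _ = 0 at this
      rw [this]; simp
    have hf' : 0 < ‖f‖ := norm_pos_iff.2 hf
    have hg' : 0 < ‖g‖ := norm_pos_iff.2 hg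
    have := bf_le ha (Lp.memLp f) (Lp.memLp g) (c := ‖g‖ / ‖f‖) (by positivity)
    rw [L2_norm_sq, L2_norm_sq] at this
    refine this.trans (le_of_eq ?_)
    field_simp
    ring)

theorem bform_apply [NeZero n] {a : ℝ} (ha : a < n / 2) (f g : Lp ℝ 2 (sig n)) :
    bform n a ha f g = bf a f g := rfl

theorem bform_toLp [NeZero n] {a : ℝ} (ha : a < n / 2) {f g : EuclideanSpace ℝ (Fin n) → ℝ}
    (hf : MemLp f 2 (sig n)) (hg : MemLp g 2 (sig n)) :
    bform n a ha (hf.toLp f) (hg.toLp g) = bf a f g := by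
  rw [bform_apply]
  exact bf_congr hf.coeFn_toLp hg.coeFn_toLp

end WFI

namespace WFI
variable {n : ℕ}

/-- coordinates of the inverse stereographic projection -/
noncomputable def xi (i : Option (Fin n)) (x : EuclideanSpace ℝ (Fin n)) : ℝ :=
  match i with
  | none => 1 - rho x
  | some i => rho x * x i

/-- generators of dilations and translations -/
noncomputable def fld (i : Option (Fin n)) (x : EuclideanSpace ℝ (Fin n)) : EuclideanSpace ℝ (Fin n) :=
  match i with
  | none => x
  | some i => EuclideanSpace.single i 1

noncomputable def Dd (i : Option (Fin n)) (P : EuclideanSpace ℝ (Fin n) → ℝ)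
    (x : EuclideanSpace ℝ (Fin n)) : ℝ := fderiv ℝ P x (fld i x)

theorem rho_normsq (x : EuclideanSpace ℝ (Fin n)) : rho x * ‖x‖ ^ 2 = 2 - rho x := by
  unfold rho; field_simp; ring

theorem rho_hasFDerivAt (x : EuclideanSpace ℝ (Fin n)) :
    HasFDerivAt (rho : EuclideanSpace ℝ (Fin n) → ℝ) (-(rho x ^ 2) • innerSL ℝ x) x := by
  have h1 : HasFDerivAt (fun x : EuclideanSpace ℝ (Fin n) => 1 + ‖x‖ ^ 2) (2 • innerSL ℝ x) x :=
    (hasStrictFDerivAt_norm_sq x).hasFDerivAt.const_add 1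
  have h2 := ((hasDerivAt_inv (x := 1 + ‖x‖ ^ 2) (by positivity)).comp_hasFDerivAt x h1).const_mul 2
  refine (h2.congr_fderiv ?_).congr_of_eventuallyEq (Filter.Eventually.of_forall fun y => ?_)
  · ext v
    have : (1 + ‖x‖ ^ 2) ≠ 0 := by positivity
    simp only [smul_apply, smul_eq_mul, innerSL_apply_apply, rho, nsmul_eq_mul]
    push_cast
    field_simp
  · simp [rho, div_eq_mul_inv]

theorem rho_contDiff : ContDiff ℝ 1 (rho : EuclideanSpace ℝ (Fin n) → ℝ) := by
  unfold rho
  exact contDiff_const.div (contDiff_const.add (contDiff_norm_sq ℝ)) (fun x => by positivity)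

theorem xi_contDiff (i : Option (Fin n)) : ContDiff ℝ 1 (xi i) := by
  cases i with
  | none => exact contDiff_const.sub rho_contDiff
  | some i => 
    refine rho_contDiff.mul ?_
    exact (EuclideanSpace.proj (𝕜 := ℝ) i).contDiff

theorem sum_xi_sq (x : EuclideanSpace ℝ (Fin n)) : ∑ i, xi i x ^ 2 = 1 := by
  rw [Fintype.sum_option]
  simp only [xi, mul_pow]
  rw [← Finset.mul_sum]
  have : ∑ i, x i ^ 2 = ‖x‖ ^ 2 := by rw [EuclideanSpace.norm_sq_eq]; simp
  rw [this]
  nlinarith [rho_normsq x]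

theorem sum_xi_mul (x y : EuclideanSpace ℝ (Fin n)) :
    ∑ i, xi i x * xi i y = 1 - ‖x - y‖ ^ 2 * (rho x * rho y) / 2 := by
  rw [Fintype.sum_option]
  simp only [xi]
  have : ∑ i, rho x * x i * (rho y * y i) = rho x * rho y * inner ℝ x y := by
    rw [PiLp.inner_apply, Finset.mul_sum]
    congr 1; ext i; simp; ring
  rw [this, norm_sub_sq_real]
  have h1 := rho_normsq x
  have h2 := rho_normsq y
  have e1 : (‖x‖ ^ 2 - 2 * inner ℝ x y + ‖y‖ ^ 2) * (rho x * rho y)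
    = (rho x * ‖x‖ ^ 2) * rho y - 2 * inner ℝ x y * (rho x * rho y) + (rho y * ‖y‖ ^ 2) * rho x := by ring
  rw [e1, h1, h2]; ring

theorem abs_xi_le (i : Option (Fin n)) (x : EuclideanSpace ℝ (Fin n)) : |xi i x| ≤ 1 := by
  rw [← sq_le_one_iff_abs_le_one, ← sum_xi_sq x]
  exact Finset.single_le_sum (f := fun i => xi i x ^ 2) (fun i _ => sq_nonneg _) (Finset.mem_univ i)

theorem D_rho_some (i : Fin n) (x : EuclideanSpace ℝ (Fin n)) :
    Dd (some i) rho x = - rho x * xi (some i) x := by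
  unfold Dd
  rw [(rho_hasFDerivAt x).fderiv]
  simp [fld, xi, PiLp.inner_apply]
  ring

theorem D_rho_none (x : EuclideanSpace ℝ (Fin n)) :
    Dd none rho x = - rho x * (1 + xi none x) := by
  unfold Dd
  rw [(rho_hasFDerivAt x).fderiv]
  simp [fld, xi]
  have := rho_normsq x
  linear_combination (rho x) * this

theorem D_mul {P Q : EuclideanSpace ℝ (Fin n) → ℝ} (hP : ContDiff ℝ 1 P) (hQ : ContDiff ℝ 1 Q)
    (i : Option (Fin n)) : Dd i (P * Q) = P * Dd i Q + Dd i P * Q := by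
  ext x
  unfold Dd
  rw [fderiv_mul (hP.differentiable (by norm_num)).differentiableAt (hQ.differentiable (by norm_num)).differentiableAt]
  simp [mul_comm]

theorem D_add {P Q : EuclideanSpace ℝ (Fin n) → ℝ} (hP : ContDiff ℝ 1 P) (hQ : ContDiff ℝ 1 Q)
    (i : Option (Fin n)) : Dd i (P + Q) = Dd i P + Dd i Q := by
  ext x
  unfold Dd
  rw [fderiv_add (hP.differentiable (by norm_num)).differentiableAt (hQ.differentiable (by norm_num)).differentiableAt]
  simp

theorem D_smul {P : EuclideanSpace ℝ (Fin n) → ℝ} (hP : ContDiff ℝ 1 P) (c : ℝ)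
    (i : Option (Fin n)) : Dd i (c • P) = c • Dd i P := by
  ext x
  unfold Dd
  rw [fderiv_const_smul (hP.differentiable (by norm_num)).differentiableAt]
  simp

theorem D_const (c : ℝ) (i : Option (Fin n)) : Dd i (fun _ => c) = 0 := by
  ext x
  simp [Dd]

theorem D_coord (i : Option (Fin n)) (j : Fin n) (x : EuclideanSpace ℝ (Fin n)) :
    Dd i (fun x : EuclideanSpace ℝ (Fin n) => x j) x = fld i x j := by
  unfold Dd
  have : (fun x : EuclideanSpace ℝ (Fin n) => x j) = EuclideanSpace.proj (𝕜 := ℝ) j := by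
    ext x; simp
  rw [this, ContinuousLinearMap.fderiv]
  simp

theorem coord_contDiff (j : Fin n) : ContDiff ℝ 1 (fun x : EuclideanSpace ℝ (Fin n) => x j) :=
  (EuclideanSpace.proj (𝕜 := ℝ) j).contDiff

/-- The spaces of restrictions of polynomials of degree at most `k`. -/
noncomputable def V (n : ℕ) : ℕ → Submodule ℝ (EuclideanSpace ℝ (Fin n) → ℝ)
  | 0 => Submodule.span ℝ {fun _ => 1}
  | k + 1 => Submodule.span ℝ
      {g | g ∈ V n k ∨ ∃ i : Option (Fin n), ∃ P ∈ V n k, g = xi i * P}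

theorem V_le_succ (k : ℕ) : V n k ≤ V n (k + 1) :=
  fun g hg => Submodule.subset_span (Or.inl hg)

theorem V_mono : Monotone (V n) := monotone_nat_of_le_succ V_le_succ

theorem xi_mul_mem {k : ℕ} {P : EuclideanSpace ℝ (Fin n) → ℝ} (hP : P ∈ V n k) (i : Option (Fin n)) :
    xi i * P ∈ V n (k + 1) := Submodule.subset_span (Or.inr ⟨i, P, hP, rfl⟩)

theorem one_mem_V (k : ℕ) : (1 : EuclideanSpace ℝ (Fin n) → ℝ) ∈ V n k :=
  V_mono (Nat.zero_le k) (Submodule.subset_span rfl)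

theorem const_mem_V (k : ℕ) (c : ℝ) : (fun _ : EuclideanSpace ℝ (Fin n) => c) ∈ V n k := by
  have := (V n k).smul_mem c (one_mem_V k)
  convert this using 1
  ext; simp

theorem xi_mem (i : Option (Fin n)) : xi i ∈ V n 1 := by
  have := xi_mul_mem (one_mem_V (n := n) 0) i
  simpa using this

theorem V_induction {p : (EuclideanSpace ℝ (Fin n) → ℝ) → Prop}
    (hadd : ∀ f g, p f → p g → p (f + g)) (hsmul : ∀ (c : ℝ) f, p f → p (c • f))
    (hone : p 1) (hxi : ∀ i f, p f → p (xi i * f)) :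
    ∀ k, ∀ f ∈ V n k, p f := by
  have hz : p 0 := by simpa using hsmul 0 1 hone
  intro k
  induction k with
  | zero =>
    intro f hf
    refine Submodule.span_induction ?_ hz (fun f g _ _ => hadd f g) (fun c f _ => hsmul c f) hf
    rintro f rfl
    exact hone
  | succ k ih =>
    intro f hf
    refine Submodule.span_induction ?_ hz (fun f g _ _ => hadd f g) (fun c f _ => hsmul c f) hf
    rintro f (h | ⟨i, P, hP, rfl⟩)
    · exact ih f h
    · exact hxi i P (ih P hP)

theorem V_mul {k : ℕ} {P : EuclideanSpace ℝ (Fin n) → ℝ} (hP : P ∈ V n k) :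
    ∀ l, ∀ Q ∈ V n l, ∃ m, P * Q ∈ V n m := by
  apply V_induction
  · rintro f g ⟨m, hm⟩ ⟨m', hm'⟩
    refine ⟨max m m', ?_⟩
    rw [mul_add]
    exact (V n _).add_mem (V_mono (le_max_left _ _) hm) (V_mono (le_max_right _ _) hm')
  · rintro c f ⟨m, hm⟩
    refine ⟨m, ?_⟩
    rw [mul_smul_comm]
    exact (V n _).smul_mem _ hm
  · exact ⟨k, by simpa using hP⟩
  · rintro i f ⟨m, hm⟩
    exact ⟨m + 1, by rw [mul_left_comm]; exact xi_mul_mem hm i⟩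

theorem V_contDiff : ∀ k, ∀ P ∈ V n k, ContDiff ℝ 1 P := by
  apply V_induction
  · exact fun f g hf hg => hf.add hg
  · exact fun c f hf => contDiff_const.smul hf
  · exact contDiff_const
  · exact fun i f hf => (xi_contDiff i).mul hf

theorem V_bdd : ∀ k, ∀ P ∈ V n k, ∃ C, ∀ x, |P x| ≤ C := by
  apply V_induction
  · rintro f g ⟨C, hC⟩ ⟨C', hC'⟩
    exact ⟨C + C', fun x => (abs_add_le _ _).trans (add_le_add (hC x) (hC' x))⟩
  · rintro c f ⟨C, hC⟩
    refine ⟨|c| * C, fun x => ?_⟩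
    simp only [Pi.smul_apply, smul_eq_mul, abs_mul]
    exact mul_le_mul_of_nonneg_left (hC x) (abs_nonneg c)
  · exact ⟨1, fun x => by simp⟩
  · rintro i f ⟨C, hC⟩
    refine ⟨C, fun x => ?_⟩
    simp only [Pi.mul_apply, abs_mul]
    calc _ ≤ 1 * |f x| := mul_le_mul_of_nonneg_right (abs_xi_le i x) (abs_nonneg _)
      _ ≤ C := by rw [one_mul]; exact hC x

/-- derivative of the coordinates -/
theorem D_xi (i j : Option (Fin n)) : Dd i (xi j) + xi i * xi j ∈ V n 1 := by
  have hsub : Dd i (xi none : EuclideanSpace ℝ (Fin n) → ℝ) = fun x => - Dd i rho x := by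
    ext x
    unfold Dd
    change fderiv ℝ (fun x => 1 - rho x) x _ = _
    rw [fderiv_const_sub]
    simp
  have hprod : ∀ j, Dd i (xi (some j) : EuclideanSpace ℝ (Fin n) → ℝ) =
      fun x => rho x * fld i x j + Dd i rho x * x j := by
    intro j
    have := D_mul rho_contDiff (coord_contDiff (n := n) j) i
    ext x
    have h2 := congrFun this x
    simp only [Pi.add_apply, Pi.mul_apply, D_coord] at h2
    rw [← h2]
    rfl
  match i, j with
  | none, none =>
    convert const_mem_V (n := n) 1 1 using 1
    ext x
    simp only [hsub, Pi.add_apply, Pi.mul_apply, D_rho_none]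
    simp only [xi]; ring
  | none, some j =>
    convert const_mem_V (n := n) 1 0 using 1
    ext x
    simp only [hprod, Pi.add_apply, Pi.mul_apply, D_rho_none]
    simp only [xi, fld]; ring
  | some i, none =>
    convert xi_mem (n := n) (some i) using 1
    ext x
    simp only [hsub, Pi.add_apply, Pi.mul_apply, D_rho_some]
    simp only [xi]; ring
  | some i, some j =>
    have h := (V n 1).smul_mem (if i = j then (1:ℝ) else 0) ((V n 1).sub_mem (one_mem_V 1) (xi_mem (n := n) none))
    convert h using 1
    ext x
    simp only [hprod, Pi.add_apply, Pi.mul_apply, D_rho_some]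
    simp [xi, fld, eq_comm]
    split_ifs <;> ring

theorem D_V (i : Option (Fin n)) : ∀ k, ∀ P ∈ V n k, Dd i P + (k:ℝ) • (xi i * P) ∈ V n k := by
  intro k
  induction k with
  | zero =>
    intro P hP
    obtain ⟨c, rfl⟩ := Submodule.mem_span_singleton.1 hP
    have : (c • fun _ : EuclideanSpace ℝ (Fin n) => (1:ℝ)) = fun _ => c := by ext; simp
    rw [this, D_const]
    simp
  | succ k ih =>
    have ih' : ∀ P ∈ V n k, Dd i P ∈ V n (k + 1) := by
      intro P hP
      have h := (V n (k+1)).sub_mem (V_le_succ k (ih P hP)) ((V n (k+1)).smul_mem (k:ℝ) (xi_mul_mem hP i))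
      simpa using h
    intro P hP
    have key : P ∈ V n (k + 1) ∧ Dd i P + ((k + 1 : ℕ):ℝ) • (xi i * P) ∈ V n (k + 1) := by
      refine Submodule.span_induction (p := fun P _ => P ∈ V n (k + 1) ∧ Dd i P + ((k + 1 : ℕ):ℝ) • (xi i * P) ∈ V n (k + 1)) ?_ ?_ ?_ ?_ hP
      · rintro f (h | ⟨j, P, hP, rfl⟩)
        · exact ⟨V_le_succ k h, (V n _).add_mem (ih' f h) ((V n _).smul_mem _ (xi_mul_mem h i))⟩
        · refine ⟨xi_mul_mem hP j, ?_⟩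
          rw [D_mul (xi_contDiff j) (V_contDiff k P hP)]
          have e : xi j * Dd i P + Dd i (xi j) * P + ((k + 1 : ℕ):ℝ) • (xi i * (xi j * P))
            = xi j * (Dd i P + (k:ℝ) • (xi i * P)) + (Dd i (xi j) + xi i * xi j) * P := by
            ext x; simp; ring
          rw [e]
          refine (V n _).add_mem (xi_mul_mem (ih P hP) j) ?_
          have : ∀ L ∈ V n 1, L * P ∈ V n (k + 1) := by
            intro L hL
            refine Submodule.span_induction (p := fun L _ => L * P ∈ V n (k + 1)) ?_ ?_ ?_ ?_ hL
            · rintro f (h | ⟨j, Q, hQ, rfl⟩)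
              · obtain ⟨c, rfl⟩ := Submodule.mem_span_singleton.1 h
                have := (V n (k+1)).smul_mem c (V_le_succ k hP)
                convert this using 1
                ext; simp
              · obtain ⟨c, rfl⟩ := Submodule.mem_span_singleton.1 hQ
                have := (V n (k+1)).smul_mem c (xi_mul_mem hP j)
                convert this using 1
                ext; simp; ring
            · simp
            · intro f g _ _ hf hg; rw [add_mul]; exact (V n _).add_mem hf hg
            · intro c f _ hf; rw [smul_mul_assoc]; exact (V n _).smul_mem c hf
          exact this _ (D_xi i j)
      · refine ⟨(V n _).zero_mem, ?_⟩
        have : Dd i (0 : EuclideanSpace ℝ (Fin n) → ℝ) = 0 := D_const 0 i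
        rw [this]; simp
      · rintro f g _ _ ⟨hf1, hf2⟩ ⟨hg1, hg2⟩
        refine ⟨(V n _).add_mem hf1 hg1, ?_⟩
        rw [D_add (V_contDiff _ _ hf1) (V_contDiff _ _ hg1)]
        convert (V n (k+1)).add_mem hf2 hg2 using 1
        rw [mul_add, smul_add]; abel
      · rintro c f _ ⟨hf1, hf2⟩
        refine ⟨(V n _).smul_mem c hf1, ?_⟩
        rw [D_smul (V_contDiff _ _ hf1)]
        convert (V n (k+1)).smul_mem c hf2 using 1
        ext; simp; ring
    exact key.2

theorem D_V_mem (i : Option (Fin n)) (k : ℕ) (P : EuclideanSpace ℝ (Fin n) → ℝ) (hP : P ∈ V n k) :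
    Dd i P ∈ V n (k + 1) := by
  have h := (V n (k+1)).sub_mem (V_le_succ k (D_V i k P hP)) ((V n (k+1)).smul_mem (k:ℝ) (xi_mul_mem hP i))
  simpa using h

theorem V_memLp [NeZero n] {k : ℕ} {P : EuclideanSpace ℝ (Fin n) → ℝ} (hP : P ∈ V n k) (p : ENNReal) :
    MemLp P p (sig n) := by
  obtain ⟨C, hC⟩ := V_bdd k P hP
  exact MemLp.of_bound (V_contDiff k P hP).continuous.aestronglyMeasurable C
    (by filter_upwards with x using hC x)

end WFI

namespace WFI
variable {n : ℕ}

noncomputable def KK {n : ℕ} (a : ℝ) (x y : EuclideanSpace ℝ (Fin n)) : ℝ := (‖x - y‖ ^ 2) ^ (-a)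

noncomputable def wt (a : ℝ) (x : EuclideanSpace ℝ (Fin n)) : ℝ := rho x ^ ((n:ℝ) - a)

theorem KK_nonneg (a : ℝ) (x y : EuclideanSpace ℝ (Fin n)) : 0 ≤ KK a x y := by
  unfold KK; positivity

theorem KK_meas (a : ℝ) : Measurable (fun z : EuclideanSpace ℝ (Fin n) × EuclideanSpace ℝ (Fin n) =>
    KK a z.1 z.2) := by
  unfold KK; fun_prop

theorem wt_pos (a : ℝ) (x : EuclideanSpace ℝ (Fin n)) : 0 < wt a x := by
  have := rho_pos x
  unfold wt; positivity

@[fun_prop]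
theorem wt_meas (a : ℝ) : Measurable (wt a : EuclideanSpace ℝ (Fin n) → ℝ) := by
  unfold wt; fun_prop

theorem ker_mul (a : ℝ) (x y : EuclideanSpace ℝ (Fin n)) :
    ker a x y * (rho x ^ n * rho y ^ n) = wt a x * wt a y * KK a x y := by
  have hx := rho_pos x
  have hy := rho_pos y
  unfold ker wt KK
  rw [Real.mul_rpow (by positivity) (by positivity), Real.mul_rpow hx.le hy.le, 
    Real.rpow_sub hx, Real.rpow_sub hy, Real.rpow_neg hx.le, Real.rpow_neg hy.le,
    Real.rpow_natCast, Real.rpow_natCast]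
  field_simp

theorem sig_prod : (sig n).prod (sig n) =
    ((volume : Measure (EuclideanSpace ℝ (Fin n))).prod volume).withDensity
      (fun z => ENNReal.ofReal (rho z.1 ^ n * rho z.2 ^ n)) := by
  unfold sig
  rw [prod_withDensity (by fun_prop) (by fun_prop)]
  congr 1; ext z
  rw [ENNReal.ofReal_mul (pow_nonneg (rho_pos _).le _)]

theorem int_sig_prod (F : EuclideanSpace ℝ (Fin n) × EuclideanSpace ℝ (Fin n) → ℝ) :
    ∫ z, F z ∂((sig n).prod (sig n)) = 
    ∫ z, F z * (rho z.1 ^ n * rho z.2 ^ n) ∂((volume : Measure (EuclideanSpace ℝ (Fin n))).prod volume) := by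
  rw [sig_prod, integral_withDensity_eq_integral_toReal_smul (by fun_prop) (by simp)]
  congr 1; ext z
  rw [ENNReal.toReal_ofReal (mul_nonneg (pow_nonneg (rho_pos _).le n) (pow_nonneg (rho_pos _).le n)),
    smul_eq_mul, mul_comm]

theorem integrable_sig_prod (F : EuclideanSpace ℝ (Fin n) × EuclideanSpace ℝ (Fin n) → ℝ) :
    Integrable F ((sig n).prod (sig n)) ↔
    Integrable (fun z => F z * (rho z.1 ^ n * rho z.2 ^ n))
      ((volume : Measure (EuclideanSpace ℝ (Fin n))).prod volume) := by
  rw [sig_prod, integrable_withDensity_iff (by fun_prop) (by simp)]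
  have : ∀ z : EuclideanSpace ℝ (Fin n) × EuclideanSpace ℝ (Fin n),
    (ENNReal.ofReal (rho z.1 ^ n * rho z.2 ^ n)).toReal = rho z.1 ^ n * rho z.2 ^ n :=
    fun z => ENNReal.toReal_ofReal (mul_nonneg (pow_nonneg (rho_pos _).le n) (pow_nonneg (rho_pos _).le n))
  simp only [this]

theorem bf_vol (a : ℝ) (R P : EuclideanSpace ℝ (Fin n) → ℝ) :
    bf a R P = ∫ z, (R z.1 * wt a z.1) * (P z.2 * wt a z.2) * KK a z.1 z.2
      ∂((volume : Measure (EuclideanSpace ℝ (Fin n))).prod volume) := by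
  unfold bf
  rw [int_sig_prod]
  congr 1; ext z
  rw [mul_assoc, ker_mul]; ring

theorem wt_KK_integrable [NeZero n] {a : ℝ} (ha : a < n / 2) :
    Integrable (fun z => wt a z.1 * wt a z.2 * KK a z.1 z.2)
      ((volume : Measure (EuclideanSpace ℝ (Fin n))).prod volume) := by
  have h1 : MemLp (fun _ : EuclideanSpace ℝ (Fin n) => (1:ℝ)) 2 (sig n) := memLp_const 1
  have := (integrable_sig_prod _).1 (bf_integrable ha h1 h1)
  refine this.congr ?_
  filter_upwards with z
  rw [one_mul, one_mul, ker_mul]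

/-- measurable functions with the decay of `wt a` -/
def Dec (a : ℝ) (r : EuclideanSpace ℝ (Fin n) → ℝ) : Prop :=
  Measurable r ∧ ∃ C, ∀ x, |r x| ≤ C * wt a x

theorem IK_int [NeZero n] {a : ℝ} (ha : a < n / 2) {r p : EuclideanSpace ℝ (Fin n) → ℝ}
    (hr : Dec a r) (hp : Dec a p) :
    Integrable (fun z => r z.1 * p z.2 * KK a z.1 z.2)
      ((volume : Measure (EuclideanSpace ℝ (Fin n))).prod volume) := by
  obtain ⟨hr, C, hC⟩ := hr
  obtain ⟨hp, C', hC'⟩ := hp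
  refine Integrable.mono' ((wt_KK_integrable ha).const_mul (C * C'))
    (((hr.comp measurable_fst).mul (hp.comp measurable_snd)).mul (KK_meas a)).aestronglyMeasurable ?_
  filter_upwards with z
  rw [norm_mul, norm_mul, Real.norm_of_nonneg (KK_nonneg _ _ _)]
  have h := mul_le_mul (hC z.1) (hC' z.2) (abs_nonneg _) ((abs_nonneg _).trans (hC z.1))
  have := mul_le_mul_of_nonneg_right h (KK_nonneg a z.1 z.2)
  simp only [Real.norm_eq_abs]
  linarith

theorem trans_id [NeZero n] {a : ℝ} (ha : a < n / 2) {r p : EuclideanSpace ℝ (Fin n) → ℝ}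
    (hr : Dec a r) (hp : Dec a p) (i : Fin n) (hr1 : ContDiff ℝ 1 r) (hp1 : ContDiff ℝ 1 p)
    (hr' : Dec a (Dd (some i) r)) (hp' : Dec a (Dd (some i) p)) :
    (∫ z, Dd (some i) r z.1 * p z.2 * KK a z.1 z.2
      ∂((volume : Measure (EuclideanSpace ℝ (Fin n))).prod volume))
    + (∫ z, r z.1 * Dd (some i) p z.2 * KK a z.1 z.2
      ∂((volume : Measure (EuclideanSpace ℝ (Fin n))).prod volume)) = 0 := by
  have ld : ∀ (q : EuclideanSpace ℝ (Fin n) → ℝ) (hq : ContDiff ℝ 1 q) x,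
      HasDerivAt (fun t : ℝ => q (x + t • EuclideanSpace.single i 1)) (Dd (some i) q x) 0 := by
    intro q hq x
    have := (hq.differentiable (by norm_num) x).hasFDerivAt.hasLineDerivAt (EuclideanSpace.single i 1)
    exact this
  have := integral_bilinear_hasLineDerivAt_right_eq_neg_left_of_integrable
    (μ := (volume : Measure (EuclideanSpace ℝ (Fin n))).prod volume)
    (f := fun z => r z.1 * KK a z.1 z.2) (f' := fun z => Dd (some i) r z.1 * KK a z.1 z.2)
    (g := fun z => p z.2) (g' := fun z => Dd (some i) p z.2) 
    (v := (EuclideanSpace.single i 1, EuclideanSpace.single i 1)) (B := ContinuousLinearMap.mul ℝ ℝ)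
    ?_ ?_ ?_ ?_ ?_
  · simp only [ContinuousLinearMap.mul_apply'] at this
    rw [eq_neg_iff_add_eq_zero, add_comm] at this
    rw [← this]
    congr 2 <;> ext z <;> ring
  · refine (IK_int ha hr' hp).congr ?_
    filter_upwards with z
    simp; ring
  · refine (IK_int ha hr hp').congr ?_
    filter_upwards with z
    simp; ring
  · refine (IK_int ha hr hp).congr ?_
    filter_upwards with z
    simp; ring
  · rintro z -
    have := (ld r hr1 z.1).mul_const (KK a z.1 z.2)
    unfold HasLineDerivAt
    refine this.congr_of_eventuallyEq (Filter.Eventually.of_forall fun t => ?_)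
    change r (z.1 + t • EuclideanSpace.single i 1) * (‖(z.1 + t • EuclideanSpace.single i 1) - 
      (z.2 + t • EuclideanSpace.single i 1)‖ ^ 2) ^ (-a) = _
    rw [add_sub_add_right_eq_sub]
    rfl
  · rintro z -
    exact ld p hp1 z.2

theorem rho_smul_le (x : EuclideanSpace ℝ (Fin n)) {c : ℝ} (hc : c ∈ Set.Ioo (1/2:ℝ) 2) :
    rho (c • x) ≤ 4 * rho x := by
  unfold rho
  rw [norm_smul, mul_pow, Real.norm_eq_abs, sq_abs, ← mul_div_assoc, div_le_div_iff₀ (by positivity) (by positivity)]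
  have : 1/4 ≤ c ^ 2 := by nlinarith [hc.1]
  nlinarith [mul_le_mul_of_nonneg_right this (sq_nonneg ‖x‖)]

theorem Dec.smul_bound [NeZero n] {a : ℝ} (ha : a < n / 2) {r : EuclideanSpace ℝ (Fin n) → ℝ}
    (hr : Dec a r) : ∃ C, 0 ≤ C ∧ ∀ c ∈ Set.Ioo (1/2:ℝ) 2, ∀ x, |r (c • x)| ≤ C * wt a x := by
  obtain ⟨hr, C, hC⟩ := hr
  have hn : (0:ℝ) < n := by exact_mod_cast Nat.pos_of_ne_zero (NeZero.ne n)
  have hC0 : 0 ≤ C := by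
    have := (abs_nonneg _).trans (hC 0)
    exact nonneg_of_mul_nonneg_left this (wt_pos a 0)
  refine ⟨C * 4 ^ ((n:ℝ) - a), by positivity, fun c hc x => (hC _).trans ?_⟩
  rw [mul_assoc]
  refine mul_le_mul_of_nonneg_left ?_ hC0
  unfold wt
  rw [← Real.mul_rpow (by norm_num) (rho_pos x).le]
  exact Real.rpow_le_rpow (rho_pos _).le (rho_smul_le x hc) (by linarith)

theorem dil_id [NeZero n] {a : ℝ} (ha : a < n / 2) {r p : EuclideanSpace ℝ (Fin n) → ℝ}
    (hr : Dec a r) (hp : Dec a p) (hr1 : ContDiff ℝ 1 r) (hp1 : ContDiff ℝ 1 p)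
    (hr' : Dec a (Dd none r)) (hp' : Dec a (Dd none p)) :
    (∫ z, Dd none r z.1 * p z.2 * KK a z.1 z.2
      ∂((volume : Measure (EuclideanSpace ℝ (Fin n))).prod volume))
    + (∫ z, r z.1 * Dd none p z.2 * KK a z.1 z.2
      ∂((volume : Measure (EuclideanSpace ℝ (Fin n))).prod volume)) 
    + 2 * (n - a) * (∫ z, r z.1 * p z.2 * KK a z.1 z.2
      ∂((volume : Measure (EuclideanSpace ℝ (Fin n))).prod volume)) = 0 := by
  have hn : (0:ℝ) < n := by exact_mod_cast Nat.pos_of_ne_zero (NeZero.ne n)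
  obtain ⟨C1, h10, h1⟩ := hr.smul_bound ha
  obtain ⟨C2, h20, h2⟩ := hp.smul_bound ha
  obtain ⟨C3, h30, h3⟩ := hr'.smul_bound ha
  obtain ⟨C4, h40, h4⟩ := hp'.smul_bound ha
  set m : ℝ := 2 * (n - a) with hm
  have hm0 : 0 < m := by linarith
  have ld : ∀ (q : EuclideanSpace ℝ (Fin n) → ℝ) (hq : ContDiff ℝ 1 q) x (c : ℝ), 0 < c → 
      HasDerivAt (fun t : ℝ => q (t • x)) (c⁻¹ * Dd none q (c • x)) c := by
    intro q hq x c hc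
    have h1 := (hq.differentiable (by norm_num) (c • x)).hasFDerivAt
    have h2 := h1.comp_hasDerivAt c ((hasDerivAt_id c).smul_const x)
    have e : c⁻¹ * Dd none q (c • x) = (fderiv ℝ q (c • x)) ((1:ℝ) • x) := by
      simp only [Dd, fld, map_smul, smul_eq_mul, one_smul]
      field_simp
    rw [e]
    exact h2
  have key := hasDerivAt_integral_of_dominated_loc_of_deriv_le
    (μ := (volume : Measure (EuclideanSpace ℝ (Fin n))).prod volume)
    (F := fun (c:ℝ) z => c ^ m * (r (c • z.1) * p (c • z.2)) * KK a z.1 z.2)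
    (F' := fun (c:ℝ) z => (m * c ^ (m - 1) * (r (c • z.1) * p (c • z.2)) + c ^ m * 
      (c⁻¹ * Dd none r (c • z.1) * p (c • z.2) + r (c • z.1) * (c⁻¹ * Dd none p (c • z.2)))) * KK a z.1 z.2)
    (x₀ := 1) (s := Set.Ioo (1/2:ℝ) 2)
    (bound := fun z => (m * 2 ^ m * 2 * (C1 * C2) + 2 ^ m * (2 * C3 * C2 + C1 * (2 * C4))) * 
      (wt a z.1 * wt a z.2 * KK a z.1 z.2)) ?_ ?_ ?_ ?_ ?_ ?_ ?_
  · obtain ⟨-, hder⟩ := key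
    have hconst : (fun c : ℝ => ∫ z, c ^ m * (r (c • z.1) * p (c • z.2)) * KK a z.1 z.2
        ∂((volume : Measure (EuclideanSpace ℝ (Fin n))).prod volume)) =ᶠ[nhds 1]
        fun _ => ∫ z, r z.1 * p z.2 * KK a z.1 z.2
        ∂((volume : Measure (EuclideanSpace ℝ (Fin n))).prod volume) := by
      filter_upwards [Ioi_mem_nhds (show (0:ℝ) < 1 by norm_num)] with c hc
      have hc : 0 < c := hc
      have := Measure.integral_comp_smul ((volume : Measure (EuclideanSpace ℝ (Fin n))).prod volume)
        (fun z => r z.1 * p z.2 * KK a z.1 z.2) c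
      have hf : Module.finrank ℝ (EuclideanSpace ℝ (Fin n) × EuclideanSpace ℝ (Fin n)) = n + n := by
        rw [Module.finrank_prod]; simp
      rw [hf, abs_of_pos (by positivity), smul_eq_mul, eq_inv_mul_iff_mul_eq₀ (by positivity)] at this
      rw [← this, ← integral_const_mul]
      congr 1; ext z
      simp only [Prod.smul_fst, Prod.smul_snd, KK, ← smul_sub]
      rw [norm_smul, mul_pow, Real.mul_rpow (by positivity) (by positivity), Real.norm_of_nonneg hc.le,
        ← Real.rpow_natCast (c) (2), ← Real.rpow_mul hc.le, ← Real.rpow_natCast c (n+n)]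
      have : c ^ m = c ^ (((n + n : ℕ)):ℝ) * c ^ (((2:ℕ):ℝ) * -a) := by
        rw [← Real.rpow_add hc, hm]
        congr 1; push_cast; ring
      rw [this]; ring
    have h0 := (hder.congr_of_eventuallyEq hconst.symm).unique (hasDerivAt_const _ _)
    simp only [one_smul, Real.one_rpow, inv_one, one_mul, mul_one] at h0
    have e2 := integral_add
      ((IK_int ha hr' hp).add (IK_int ha hr hp')) ((IK_int ha hr hp).const_mul m)
    simp only [Pi.add_apply] at e2
    rw [← h0, ← integral_const_mul, ← integral_add (IK_int ha hr' hp) (IK_int ha hr hp'), ← e2]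
    congr 1; ext z; ring
  · exact Ioo_mem_nhds (by norm_num) (by norm_num)
  · filter_upwards with c
    refine Measurable.aestronglyMeasurable ?_
    have := hr.1
    have := hp.1
    have := KK_meas (n := n) a
    fun_prop
  · simpa using IK_int ha hr hp
  · refine Measurable.aestronglyMeasurable ?_
    have := hr.1
    have := hp.1
    have := hr'.1
    have := hp'.1
    have := KK_meas (n := n) a
    fun_prop
  · filter_upwards with z c hc
    have hc0 : 0 < c := by linarith [hc.1]
    have b1 := h1 c hc z.1
    have b2 := h2 c hc z.2
    have b3 := h3 c hc z.1
    have b4 := h4 c hc z.2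
    have w1 := wt_pos a z.1
    have w2 := wt_pos a z.2
    have hcm : c ^ m ≤ 2 ^ m := Real.rpow_le_rpow hc0.le hc.2.le hm0.le
    have hcm0 : 0 < c ^ m := by positivity
    have hci : c⁻¹ ≤ 2 := by
      rw [inv_le_comm₀ hc0 (by norm_num)]; linarith [hc.1]
    have hci0 : 0 < c⁻¹ := by positivity
    have hcm1 : c ^ (m - 1) ≤ 2 ^ m * 2 := by
      rw [Real.rpow_sub_one hc0.ne', div_eq_mul_inv]
      exact mul_le_mul hcm hci hci0.le (by positivity)
    rw [norm_mul, Real.norm_of_nonneg (KK_nonneg _ _ _)]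
    rw [← mul_assoc (m * 2 ^ m * 2 * (C1 * C2) + _)]
    refine mul_le_mul_of_nonneg_right ?_ (KK_nonneg _ _ _)
    rw [Real.norm_eq_abs]
    calc _ ≤ m * c ^ (m - 1) * (|r (c • z.1)| * |p (c • z.2)|) + c ^ m * 
      (c⁻¹ * |Dd none r (c • z.1)| * |p (c • z.2)| + |r (c • z.1)| * (c⁻¹ * |Dd none p (c • z.2)|)) := by
          refine (abs_add_le _ _).trans ?_
          rw [abs_mul, abs_mul (c ^ m), abs_of_nonneg (show 0 ≤ m * c ^ (m-1) by positivity), abs_of_pos hcm0, abs_mul]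
          gcongr
          refine (abs_add_le _ _).trans ?_
          rw [abs_mul, abs_mul, abs_mul, abs_mul, abs_of_pos hci0]
      _ ≤ m * (2 ^ m * 2) * ((C1 * wt a z.1) * (C2 * wt a z.2)) + 2 ^ m * 
      (2 * (C3 * wt a z.1) * (C2 * wt a z.2) + (C1 * wt a z.1) * (2 * (C4 * wt a z.2))) := by
          gcongr
      _ = _ := by ring
  · exact (wt_KK_integrable ha).const_mul _
  · filter_upwards with z c hc
    have hc0 : 0 < c := by linarith [hc.1]
    exact ((Real.hasDerivAt_rpow_const (Or.inl hc0.ne')).mul ((ld r hr1 z.1 c hc0).mul (ld p hp1 z.2 c hc0))).mul_const _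

end WFI

namespace WFI
variable {n : ℕ}

theorem wt_contDiff (a : ℝ) : ContDiff ℝ 1 (wt a : EuclideanSpace ℝ (Fin n) → ℝ) :=
  rho_contDiff.rpow_const_of_ne (fun x => (rho_pos x).ne')

theorem D_wt (a : ℝ) (i : Option (Fin n)) (x : EuclideanSpace ℝ (Fin n)) :
    Dd i (wt a) x = (n - a) * (wt a x / rho x) * Dd i rho x := by
  have h := ((rho_contDiff (n := n)).differentiable (by norm_num) x).hasFDerivAt
  have h2 := h.rpow_const (p := (n:ℝ) - a) (Or.inl (rho_pos x).ne')
  unfold Dd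
  have : (wt a : EuclideanSpace ℝ (Fin n) → ℝ) = fun x => rho x ^ ((n:ℝ) - a) := rfl
  rw [this, h2.fderiv]
  simp only [smul_apply, smul_eq_mul]
  rw [Real.rpow_sub_one (rho_pos x).ne']

theorem Dec_mul_wt (a : ℝ) {k : ℕ} {P : EuclideanSpace ℝ (Fin n) → ℝ} (hP : P ∈ V n k) :
    Dec a (P * wt a) := by
  obtain ⟨C, hC⟩ := V_bdd k P hP
  refine ⟨((V_contDiff k P hP).mul (wt_contDiff a)).continuous.measurable, C, fun x => ?_⟩
  rw [Pi.mul_apply, abs_mul, abs_of_pos (wt_pos a x)]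
  exact mul_le_mul_of_nonneg_right (hC x) (wt_pos a x).le

theorem D_mul_wt_some (a : ℝ) (i : Fin n) {k : ℕ} {P : EuclideanSpace ℝ (Fin n) → ℝ} (hP : P ∈ V n k) :
    Dd (some i) (P * wt a) = (Dd (some i) P - ((n:ℝ) - a) • (xi (some i) * P)) * wt a := by
  rw [D_mul (V_contDiff k P hP) (wt_contDiff a)]
  ext x
  have := rho_pos x
  simp only [Pi.add_apply, Pi.mul_apply, D_wt, D_rho_some, Pi.sub_apply, Pi.smul_apply, smul_eq_mul]
  field_simp
  ring

theorem D_mul_wt_none (a : ℝ) {k : ℕ} {P : EuclideanSpace ℝ (Fin n) → ℝ} (hP : P ∈ V n k) :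
    Dd none (P * wt a) = (Dd none P - ((n:ℝ) - a) • (xi none * P) - ((n:ℝ) - a) • P) * wt a := by
  rw [D_mul (V_contDiff k P hP) (wt_contDiff a)]
  ext x
  have := rho_pos x
  simp only [Pi.add_apply, Pi.mul_apply, D_wt, D_rho_none, Pi.sub_apply, Pi.smul_apply, smul_eq_mul]
  field_simp
  ring

theorem bf_sub_left [NeZero n] {a : ℝ} (ha : a < n / 2) {f f' g : EuclideanSpace ℝ (Fin n) → ℝ}
    (hf : MemLp f 2 (sig n)) (hf' : MemLp f' 2 (sig n)) (hg : MemLp g 2 (sig n)) :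
    bf a (f - f') g = bf a f g - bf a f' g := by
  rw [sub_eq_add_neg, bf_add_left ha hf hf'.neg hg, ← neg_one_smul ℝ f', bf_smul_left]; ring

theorem bf_sub_right [NeZero n] {a : ℝ} (ha : a < n / 2) {f g g' : EuclideanSpace ℝ (Fin n) → ℝ}
    (hf : MemLp f 2 (sig n)) (hg : MemLp g 2 (sig n)) (hg' : MemLp g' 2 (sig n)) :
    bf a f (g - g') = bf a f g - bf a f g' := by
  rw [bf_symm, bf_sub_left ha hg hg' hf, bf_symm a g, bf_symm a g']

/-- infinitesimal conformal invariance of the form -/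
theorem bf_D [NeZero n] {a : ℝ} (ha : a < n / 2) (i : Option (Fin n)) {k l : ℕ}
    {R P : EuclideanSpace ℝ (Fin n) → ℝ} (hR : R ∈ V n k) (hP : P ∈ V n l) :
    bf a (Dd i R) P + bf a R (Dd i P) = (n - a) * (bf a (xi i * R) P + bf a R (xi i * P)) := by
  have hR1 := (V_contDiff k R hR).mul (wt_contDiff a)
  have hP1 := (V_contDiff l P hP).mul (wt_contDiff a)
  have mR := V_memLp hR 2
  have mP := V_memLp hP 2
  have mDR := V_memLp (D_V_mem i k R hR) 2
  have mDP := V_memLp (D_V_mem i l P hP) 2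
  have mxR := V_memLp (xi_mul_mem hR i) 2
  have mxP := V_memLp (xi_mul_mem hP i) 2
  have msR := V_memLp (Submodule.smul_mem _ ((n:ℝ) - a) (xi_mul_mem hR i)) 2
  have msP := V_memLp (Submodule.smul_mem _ ((n:ℝ) - a) (xi_mul_mem hP i)) 2
  have mtR := V_memLp (Submodule.smul_mem _ ((n:ℝ) - a) hR) 2
  have mtP := V_memLp (Submodule.smul_mem _ ((n:ℝ) - a) hP) 2
  cases i with
  | some i =>
    have hDR : Dec a (Dd (some i) (R * wt a)) := by
      rw [D_mul_wt_some a i hR]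
      exact Dec_mul_wt a (Submodule.sub_mem _ (D_V_mem _ _ _ hR) (Submodule.smul_mem _ _ (xi_mul_mem hR _)))
    have hDP : Dec a (Dd (some i) (P * wt a)) := by
      rw [D_mul_wt_some a i hP]
      exact Dec_mul_wt a (Submodule.sub_mem _ (D_V_mem _ _ _ hP) (Submodule.smul_mem _ _ (xi_mul_mem hP _)))
    have h := trans_id ha (Dec_mul_wt a hR) (Dec_mul_wt a hP) i hR1 hP1 hDR hDP
    rw [D_mul_wt_some a i hR, D_mul_wt_some a i hP] at h
    simp only [Pi.mul_apply _ (wt a)] at h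
    rw [← bf_vol, ← bf_vol, bf_sub_left ha mDR msR mP, bf_sub_right ha mR mDP msP, bf_smul_left,
      bf_smul_right] at h
    linarith
  | none =>
    have hDR : Dec a (Dd none (R * wt a)) := by
      rw [D_mul_wt_none a hR]
      exact Dec_mul_wt a (Submodule.sub_mem _ (Submodule.sub_mem _ (D_V_mem _ _ _ hR) 
        (Submodule.smul_mem _ _ (xi_mul_mem hR _))) (Submodule.smul_mem _ _ (V_le_succ _ hR)))
    have hDP : Dec a (Dd none (P * wt a)) := by
      rw [D_mul_wt_none a hP]
      exact Dec_mul_wt a (Submodule.sub_mem _ (Submodule.sub_mem _ (D_V_mem _ _ _ hP) 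
        (Submodule.smul_mem _ _ (xi_mul_mem hP _))) (Submodule.smul_mem _ _ (V_le_succ _ hP)))
    have h := dil_id ha (Dec_mul_wt a hR) (Dec_mul_wt a hP) hR1 hP1 hDR hDP
    rw [D_mul_wt_none a hR, D_mul_wt_none a hP] at h
    simp only [Pi.mul_apply _ (wt a)] at h
    rw [← bf_vol, ← bf_vol, ← bf_vol, bf_sub_left ha (mDR.sub msR) mtR mP, bf_sub_right ha mR (mDP.sub msP) mtP,
      bf_sub_left ha mDR msR mP, bf_sub_right ha mR mDP msP, bf_smul_left, bf_smul_left,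
      bf_smul_right, bf_smul_right] at h
    linarith

noncomputable def ip (f g : EuclideanSpace ℝ (Fin n) → ℝ) : ℝ := ∫ x, f x * g x ∂(sig n)

theorem bf_zero [NeZero n] (f g : EuclideanSpace ℝ (Fin n) → ℝ) :
    bf 0 f g = (∫ x, f x ∂(sig n)) * ∫ x, g x ∂(sig n) := by
  unfold bf
  rw [← integral_prod_mul]
  congr 1; ext z
  simp [ker]

theorem ip_symm (f g : EuclideanSpace ℝ (Fin n) → ℝ) : ip f g = ip g f := by
  unfold ip; simp only [mul_comm]

theorem ip_add_left {f f' g : EuclideanSpace ℝ (Fin n) → ℝ}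
    (hf : MemLp f 2 (sig n)) (hf' : MemLp f' 2 (sig n)) (hg : MemLp g 2 (sig n)) :
    ip (f + f') g = ip f g + ip f' g := by
  unfold ip
  have h1 : Integrable (fun x => f x * g x) (sig n) := hf.integrable_mul hg
  have h2 : Integrable (fun x => f' x * g x) (sig n) := hf'.integrable_mul hg
  rw [← integral_add h1 h2]
  congr 1; ext x; simp; ring

theorem ip_smul_left (c : ℝ) (f g : EuclideanSpace ℝ (Fin n) → ℝ) :
    ip (c • f) g = c * ip f g := by
  unfold ip
  rw [← integral_const_mul]
  congr 1; ext x; simp; ring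

theorem ip_add_right {f g g' : EuclideanSpace ℝ (Fin n) → ℝ}
    (hf : MemLp f 2 (sig n)) (hg : MemLp g 2 (sig n)) (hg' : MemLp g' 2 (sig n)) :
    ip f (g + g') = ip f g + ip f g' := by
  rw [ip_symm, ip_add_left hg hg' hf, ip_symm g, ip_symm g']

theorem ip_smul_right (c : ℝ) (f g : EuclideanSpace ℝ (Fin n) → ℝ) :
    ip f (c • g) = c * ip f g := by
  rw [ip_symm, ip_smul_left, ip_symm]

theorem ip_xi (i : Option (Fin n)) (f g : EuclideanSpace ℝ (Fin n) → ℝ) :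
    ip (xi i * f) g = ip f (xi i * g) := by
  unfold ip
  congr 1; ext x; simp; ring

theorem ip_D [NeZero n] (i : Option (Fin n)) {k l : ℕ}
    {R P : EuclideanSpace ℝ (Fin n) → ℝ} (hR : R ∈ V n k) (hP : P ∈ V n l) :
    ip (Dd i R) P + ip R (Dd i P) = n * ip R (xi i * P) := by
  have hn : (0:ℝ) < n := by exact_mod_cast Nat.pos_of_ne_zero (NeZero.ne n)
  have h0 : (0:ℝ) < n / 2 := by positivity
  have hs : 0 < ∫ x : EuclideanSpace ℝ (Fin n), (1 : EuclideanSpace ℝ (Fin n) → ℝ) x ∂(sig n) := by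
    simp only [Pi.one_apply, integral_const, smul_eq_mul, mul_one, sig_real]
    exact E0_pos h0
  have hD1 : Dd i (1 : EuclideanSpace ℝ (Fin n) → ℝ) = 0 := D_const 1 i
  have b1 := bf_D h0 i (one_mem_V (n := n) 0) (one_mem_V (n := n) 0)
  rw [hD1] at b1
  simp only [bf_zero, mul_one] at b1
  have hx : ∫ x, xi i x ∂(sig n) = 0 := by
    simp only [Pi.zero_apply, integral_zero] at b1
    have : (2 * n * ∫ x : EuclideanSpace ℝ (Fin n), (1 : EuclideanSpace ℝ (Fin n) → ℝ) x ∂(sig n)) * ∫ x, xi i x ∂(sig n) = 0 := by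
      linarith
    rcases mul_eq_zero.1 this with h | h
    · exact absurd h (by positivity)
    · exact h
  obtain ⟨m, hm⟩ := V_mul hR l P hP
  have b2 := bf_D h0 i hm (one_mem_V (n := n) 0)
  rw [hD1] at b2
  simp only [bf_zero, mul_one] at b2
  rw [hx] at b2
  simp only [Pi.zero_apply, integral_zero, mul_zero, add_zero, sub_zero, ← mul_assoc] at b2
  have b3 := mul_right_cancel₀ hs.ne' b2
  rw [D_mul (V_contDiff _ _ hR) (V_contDiff _ _ hP)] at b3
  have e1 : ∫ x, (R * Dd i P + Dd i R * P) x ∂(sig n) = ip R (Dd i P) + ip (Dd i R) P := by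
    unfold ip
    exact integral_add ((V_memLp hR 2).integrable_mul (V_memLp (D_V_mem i _ _ hP) 2))
      ((V_memLp (D_V_mem i _ _ hR) 2).integrable_mul (V_memLp hP 2))
  rw [e1] at b3
  rw [add_comm, b3]
  unfold ip
  congr 2; ext x; simp; ring

/-- eigenvalues of the form `bf a` -/
noncomputable def ev (n : ℕ) (a : ℝ) : ℕ → ℝ
  | 0 => E0 n a
  | k + 1 => (k + a) / (k + n - a) * ev n a k

noncomputable def Vm (n : ℕ) : ℕ → Submodule ℝ (EuclideanSpace ℝ (Fin n) → ℝ)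
  | 0 => ⊥
  | k + 1 => V n k

theorem Vm_le (k : ℕ) : Vm n k ≤ V n k := by
  cases k with
  | zero => simp [Vm]
  | succ k => exact V_le_succ k

theorem xi_mul_Vm {k : ℕ} {P : EuclideanSpace ℝ (Fin n) → ℝ} (hP : P ∈ Vm n k) (i : Option (Fin n)) :
    xi i * P ∈ V n k := by
  cases k with
  | zero => 
    have : P = 0 := by simpa [Vm] using hP
    subst this; simp
  | succ k => exact xi_mul_mem hP i

theorem D_Vm {k : ℕ} {P : EuclideanSpace ℝ (Fin n) → ℝ} (hP : P ∈ Vm n k) (i : Option (Fin n)) :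
    Dd i P ∈ V n k := by
  cases k with
  | zero => 
    have : P = 0 := by simpa [Vm] using hP
    subst this
    rw [show Dd i (0 : EuclideanSpace ℝ (Fin n) → ℝ) = 0 from D_const 0 i]; simp
  | succ k => exact D_V_mem i k P hP

theorem bf_one [NeZero n] {a : ℝ} (ha : a < n / 2) {R : EuclideanSpace ℝ (Fin n) → ℝ}
    (hR : Integrable R (sig n)) : bf a R 1 = E0 n a * ∫ x, R x ∂(sig n) := by
  rw [← integral_fst_ker ha hR]
  unfold bf
  simp

theorem tri [NeZero n] {a : ℝ} (ha : a < n / 2) : ∀ k, ∀ P ∈ V n k, ∃ P' ∈ Vm n k,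
    ∀ l, ∀ R ∈ V n l, bf a R P = ev n a k * ip R P + ip R P' := by
  have hn : (0:ℝ) < n := by exact_mod_cast Nat.pos_of_ne_zero (NeZero.ne n)
  intro k
  induction k with
  | zero =>
    intro P hP
    obtain ⟨c, rfl⟩ := Submodule.mem_span_singleton.1 hP
    refine ⟨0, Submodule.zero_mem _, fun l R hR => ?_⟩
    change bf a R (c • 1) = ev n a 0 * ip R (c • 1) + _
    rw [bf_smul_right, bf_one ha ((V_memLp hR 1).integrable le_rfl), ip_smul_right]
    simp [ip, ev]; ring
  | succ k ih =>
    intro P hP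
    refine Submodule.span_induction (p := fun P _ => ∃ P' ∈ Vm n (k+1),
      ∀ l, ∀ R ∈ V n l, bf a R P = ev n a (k+1) * ip R P + ip R P') ?_ ?_ ?_ ?_ hP |>.imp ?_
    · rintro f (h | ⟨i, P, hP, rfl⟩)
      · obtain ⟨f', hf', hh⟩ := ih f h
        refine ⟨(ev n a k - ev n a (k+1)) • f + f', Submodule.add_mem _ (Submodule.smul_mem _ _ h) (Vm_le k hf'),
          fun l R hR => ?_⟩
        rw [hh l R hR, ip_add_right (V_memLp hR 2) (V_memLp (Submodule.smul_mem _ _ h) 2) (V_memLp (Vm_le k hf') 2),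
          ip_smul_right]
        ring
      · obtain ⟨P', hP', hP2⟩ := ih P hP
        have hQ := D_V i k P hP
        obtain ⟨Q', hQ', hQ2⟩ := ih _ hQ
        set Q := Dd i P + (k:ℝ) • (xi i * P) with hQd
        have hc : 0 < (n:ℝ) - a + k := by 
          have : (0:ℝ) ≤ k := by positivity
          linarith
        have m1 : (a • (xi i * P') + (-1:ℝ) • Dd i P' + Q') ∈ V n k := 
          Submodule.add_mem _ (Submodule.add_mem _ (Submodule.smul_mem _ _ (xi_mul_Vm hP' i)) 
            (Submodule.smul_mem _ _ (D_Vm hP' i))) (Vm_le k hQ')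
        refine ⟨((n:ℝ) - a + k)⁻¹ • (a • (xi i * P') + (-1:ℝ) • Dd i P' + Q'), Submodule.smul_mem _ _ m1,
          fun l R hR => ?_⟩
        have hRL := V_memLp hR 2
        have e1 := bf_D ha i hR hP
        have e2 := hP2 _ _ (D_V_mem i l R hR)
        have e3 := hP2 _ _ (xi_mul_mem hR i)
        have e4 := hQ2 _ _ hR
        have e5 := ip_D i hR hP
        have e6 := ip_D i hR (Vm_le k hP')
        have hxP : MemLp ((k:ℝ) • (xi i * P)) 2 (sig n) := V_memLp (Submodule.smul_mem _ _ (xi_mul_mem hP i)) 2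
        have hDP := V_memLp (D_V_mem i k P hP) 2
        have e7 : bf a R Q = bf a R (Dd i P) + k * bf a R (xi i * P) := by
          rw [hQd, bf_add_right ha hRL hDP hxP, bf_smul_right]
        have e8 : ip R Q = ip R (Dd i P) + k * ip R (xi i * P) := by
          rw [hQd, ip_add_right hRL hDP hxP, ip_smul_right]
        rw [ip_xi] at e3
        rw [ip_xi] at e3
        rw [ip_smul_right, ip_add_right hRL (V_memLp (Submodule.add_mem _ (Submodule.smul_mem _ _ (xi_mul_Vm hP' i)) 
            (Submodule.smul_mem _ _ (D_Vm hP' i))) 2) (V_memLp (Vm_le k hQ') 2),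
          ip_add_right hRL (V_memLp (Submodule.smul_mem _ _ (xi_mul_Vm hP' i)) 2) 
            (V_memLp (Submodule.smul_mem _ _ (D_Vm hP' i)) 2), ip_smul_right, ip_smul_right]
        have e9 : (n - a + k) * bf a R (xi i * P) = (k + a) * ev n a k * ip R (xi i * P)
          + (a * ip R (xi i * P') + -1 * ip R (Dd i P') + ip R Q') := by
          linear_combination (-1:ℝ) * e1 + e2 - (n - a) * e3 + e4 - e7 + ev n a k * e8 + ev n a k * e5 + e6
        have hc' : (k:ℝ) + n - a ≠ 0 := by linarith
        rw [← mul_right_inj' hc.ne', e9]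
        simp only [ev]
        field_simp
        ring
    · exact ⟨0, Submodule.zero_mem _, fun l R hR => by simp [bf, ip]⟩
    · rintro f g hf hg ⟨f', hf', h1⟩ ⟨g', hg', h2⟩
      refine ⟨f' + g', Submodule.add_mem _ hf' hg', fun l R hR => ?_⟩
      have hRL := V_memLp hR 2
      have mf : MemLp f 2 (sig n) := V_memLp (k := k+1) hf 2
      have mg : MemLp g 2 (sig n) := V_memLp (k := k+1) hg 2
      rw [bf_add_right ha hRL mf mg, ip_add_right hRL mf mg, ip_add_right hRL (V_memLp hf' 2) (V_memLp hg' 2),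
        h1 l R hR, h2 l R hR]
      ring
    · rintro c f hf ⟨f', hf', h1⟩
      refine ⟨c • f', Submodule.smul_mem _ _ hf', fun l R hR => ?_⟩
      rw [bf_smul_right, ip_smul_right, ip_smul_right, h1 l R hR]; ring
    · exact fun _ h => h

end WFI

namespace WFI

section Abstract
variable {H : Type*} [NormedAddCommGroup H] [InnerProductSpace ℝ H]

/-- `w` of level `k` is orthogonal to lower levels -/
def TopAt (W : ℕ → Submodule ℝ H) (k : ℕ) (w : H) : Prop :=
  w ∈ W k ∧ ∀ j < k, ∀ v ∈ W j, inner ℝ v w = 0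

def Diag (W : ℕ → Submodule ℝ H) (B : H →L[ℝ] H →L[ℝ] ℝ) (e : ℕ → ℝ) : Prop :=
  ∀ k w, TopAt W k w → ∀ v, B v w = e k * inner ℝ v w

noncomputable def cmp (W : ℕ → Submodule ℝ H) [∀ k, (W k).HasOrthogonalProjection] (u : H) : ℕ → H
  | 0 => (W 0).starProjection u
  | (k+1) => (W (k+1)).starProjection u - (W k).starProjection u

variable {W : ℕ → Submodule ℝ H} [∀ k, (W k).HasOrthogonalProjection]

theorem cmp_top (hW : Monotone W) (u : H) (k : ℕ) : TopAt W k (cmp W u k) := by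
  cases k with
  | zero => exact ⟨Submodule.starProjection_apply_mem _ _, fun j hj => absurd hj (by omega)⟩
  | succ k =>
    refine ⟨Submodule.sub_mem _ (Submodule.starProjection_apply_mem _ _)
      (hW (Nat.le_succ k) (Submodule.starProjection_apply_mem _ _)), fun j hj v hv => ?_⟩
    have hv1 : v ∈ W k := hW (by omega) hv
    have hv2 : v ∈ W (k+1) := hW (by omega) hv
    rw [cmp, inner_sub_right, ← Submodule.inner_starProjection_left_eq_right,
      ← Submodule.inner_starProjection_left_eq_right,
      Submodule.starProjection_eq_self_iff.2 hv1, Submodule.starProjection_eq_self_iff.2 hv2, sub_self]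

theorem cmp_sum (u : H) (K : ℕ) : ∑ k ∈ Finset.range (K+1), cmp W u k = (W K).starProjection u := by
  induction K with
  | zero => simp [cmp]
  | succ K ih => rw [Finset.sum_range_succ, ih, cmp]; abel

theorem cmp_orth (hW : Monotone W) (u : H) {j k : ℕ} (h : j ≠ k) :
    inner ℝ (cmp W u j) (cmp W u k) = 0 := by
  rcases lt_or_gt_of_ne h with h | h
  · exact (cmp_top hW u k).2 j h _ (cmp_top hW u j).1
  · rw [real_inner_comm]; exact (cmp_top hW u j).2 k h _ (cmp_top hW u k).1

theorem cmp_self (hW : Monotone W) (u : H) (k : ℕ) :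
    inner ℝ u (cmp W u k) = ‖cmp W u k‖ ^ 2 := by
  have h := Submodule.starProjection_eq_self_iff.2 (cmp_top hW u k).1
  rw [← real_inner_self_eq_norm_sq]
  conv_lhs => rw [← h, ← Submodule.inner_starProjection_left_eq_right, ← cmp_sum, sum_inner]
  rw [Finset.sum_range_succ, Finset.sum_eq_zero, zero_add]
  intro j hj
  exact cmp_orth hW u (Finset.mem_range.1 hj).ne

theorem cmp_comb (hW : Monotone W) (u : H) {B : H →L[ℝ] H →L[ℝ] ℝ} {e : ℕ → ℝ} (hB : Diag W B e)
    (α β : ℕ → ℝ) (K : ℕ) :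
    B (∑ k ∈ Finset.range K, α k • cmp W u k) (∑ k ∈ Finset.range K, β k • cmp W u k)
      = ∑ k ∈ Finset.range K, α k * β k * e k * ‖cmp W u k‖ ^ 2 := by
  rw [map_sum]
  refine Finset.sum_congr rfl fun k hk => ?_
  rw [map_smul, hB k _ (cmp_top hW u k), sum_inner, Finset.sum_eq_single k, real_inner_smul_left,
    real_inner_self_eq_norm_sq, smul_eq_mul]
  · ring
  · intro j _ hj
    rw [real_inner_smul_left, cmp_orth hW u hj, mul_zero]
  · intro h; exact absurd hk h

theorem cmp_inner (hW : Monotone W) (u : H) (α : ℕ → ℝ) (K : ℕ) :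
    inner ℝ u (∑ k ∈ Finset.range K, α k • cmp W u k)
      = ∑ k ∈ Finset.range K, α k * ‖cmp W u k‖ ^ 2 := by
  rw [inner_sum]
  refine Finset.sum_congr rfl fun k hk => ?_
  rw [real_inner_smul_right, cmp_self hW]

theorem cmp_tendsto [CompleteSpace H] (hW : Monotone W) (hd : ⊤ ≤ (⨆ k, W k).topologicalClosure) (u : H) :
    Filter.Tendsto (fun K => ∑ k ∈ Finset.range (K+1), cmp W u k) Filter.atTop (nhds u) := by
  simp_rw [cmp_sum]
  exact Submodule.starProjection_tendsto_self W hW u hd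

theorem diag_psd [CompleteSpace H] (hW : Monotone W) (hd : ⊤ ≤ (⨆ k, W k).topologicalClosure)
    {B : H →L[ℝ] H →L[ℝ] ℝ} {e : ℕ → ℝ} (hB : Diag W B e) (he : ∀ k, 0 ≤ e k) (u : H) :
    0 ≤ B u u := by
  have h := cmp_tendsto hW hd u
  have hc : Continuous (fun v : H => B v v) := by fun_prop
  have h2 := (hc.tendsto u).comp h
  refine ge_of_tendsto' h2 fun K => ?_
  have := cmp_comb hW u hB (fun _ => 1) (fun _ => 1) (K+1)
  simp only [one_smul, one_mul] at this
  simp only [Function.comp]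
  rw [this]
  exact Finset.sum_nonneg fun k _ => mul_nonneg (he k) (by positivity)

theorem psd_cs {B : H →L[ℝ] H →L[ℝ] ℝ} (hs : ∀ u v, B u v = B v u) (hp : ∀ u, 0 ≤ B u u) (u v : H) :
    B u v ^ 2 ≤ B u u * B v v := by
  have h : ∀ t : ℝ, 0 ≤ B v v * (t * t) + (2 * B u v) * t + B u u := by
    intro t
    have := hp (u + t • v)
    simp only [map_add, map_smul, add_apply, smul_apply, smul_eq_mul] at this
    rw [hs v u] at this
    linarith
  have := discrim_le_zero h
  unfold discrim at this
  linarith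

theorem abstract_A4 [CompleteSpace H] (hW : Monotone W) (hd : ⊤ ≤ (⨆ k, W k).topologicalClosure)
    {B B' : H →L[ℝ] H →L[ℝ] ℝ} {e e' : ℕ → ℝ} (hB : Diag W B e) (hB' : Diag W B' e')
    (hs : ∀ u v, B u v = B v u)
    (he : ∀ k, 0 < e k) (he' : ∀ k, 0 < e' k) {θ N : ℝ} (hθ : 0 ≤ θ) (hθ1 : θ ≤ 1)
    (hcmp : ∀ k, (e k)⁻¹ ≤ (1 - θ) + θ * (e' k)⁻¹) (hN : 0 ≤ N) (u : H)
    (hu : ∀ k, ∀ g ∈ W k, inner ℝ u g ^ 2 ≤ N * B' g g) (h : H) :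
    inner ℝ u h ^ 2 ≤ ((1 - θ) * ‖u‖ ^ 2 + θ * N) * B h h := by
  have hp := diag_psd hW hd hB (fun k => (he k).le)
  have h1 := cmp_tendsto hW hd u
  have hc : Continuous (fun v : H => (inner ℝ v h : ℝ) ^ 2) := by fun_prop
  refine le_of_tendsto' ((hc.tendsto u).comp h1) fun K => ?_
  simp only [Function.comp]
  set g := ∑ k ∈ Finset.range (K+1), (e' k)⁻¹ • cmp W u k with hg
  set w := ∑ k ∈ Finset.range (K+1), (e k)⁻¹ • cmp W u k with hw
  have hgm : g ∈ W K := Submodule.sum_mem _ fun k hk => Submodule.smul_mem _ _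
    (hW (by simpa using Finset.mem_range_succ_iff.1 hk) (cmp_top hW u k).1)
  have hX := cmp_inner hW u (fun k => (e' k)⁻¹) (K+1)
  have hX' := cmp_comb hW u hB' (fun k => (e' k)⁻¹) (fun k => (e' k)⁻¹) (K+1)
  have hY := cmp_comb hW u hB (fun k => (e k)⁻¹) (fun k => (e k)⁻¹) (K+1)
  simp only [← hg, ← hw] at hX hX' hY
  have hX2 : B' g g = inner ℝ u g := by
    rw [hX, hX']; refine Finset.sum_congr rfl fun k _ => ?_
    have := (he' k).ne'
    field_simp
  have hXn : 0 ≤ inner ℝ u g := by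
    rw [hX]; exact Finset.sum_nonneg fun k _ => mul_nonneg (inv_nonneg.2 (he' k).le) (by positivity)
  have hXN : inner ℝ u g ≤ N := by
    have := hu K g hgm
    rw [hX2] at this
    rcases hXn.eq_or_lt with h0 | h0
    · rw [← h0]; exact hN
    · nlinarith
  have hnorm : ∑ k ∈ Finset.range (K+1), ‖cmp W u k‖ ^ 2 ≤ ‖u‖ ^ 2 := by
    have h3 := cmp_inner hW u (fun _ => 1) (K+1)
    simp only [one_smul, one_mul] at h3
    rw [← h3, cmp_sum]
    calc _ ≤ ‖u‖ * ‖(W K).starProjection u‖ := real_inner_le_norm _ _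
      _ ≤ ‖u‖ * ‖u‖ := by gcongr; exact Submodule.norm_starProjection_apply_le _ _
      _ = _ := by ring
  have hYle : B w w ≤ (1 - θ) * ‖u‖ ^ 2 + θ * N := by
    rw [hY]
    calc _ ≤ ∑ k ∈ Finset.range (K+1), ((1-θ) * ‖cmp W u k‖^2 + θ * ((e' k)⁻¹ * ‖cmp W u k‖^2)) := by
            refine Finset.sum_le_sum fun k _ => ?_
            rw [inv_mul_cancel_right₀ (he k).ne']
            nlinarith [hcmp k, sq_nonneg ‖cmp W u k‖]
      _ = (1-θ) * ∑ k ∈ Finset.range (K+1), ‖cmp W u k‖ ^ 2 + θ * inner ℝ u g := by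
            rw [Finset.sum_add_distrib, ← Finset.mul_sum, ← Finset.mul_sum, hX]
      _ ≤ _ := by
        have : 0 ≤ 1 - θ := by linarith
        gcongr
  have hh : inner ℝ (∑ k ∈ Finset.range (K+1), cmp W u k) h = B h w := by
    rw [hw, map_sum, real_inner_comm, inner_sum]
    refine Finset.sum_congr rfl fun k _ => ?_
    rw [map_smul, hB k _ (cmp_top hW u k), smul_eq_mul, inv_mul_cancel_left₀ (he k).ne']
  rw [hh]
  calc _ ≤ B h h * B w w := psd_cs hs hp h w
    _ ≤ B h h * _ := by gcongr; exact hp h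
    _ = _ := mul_comm _ _

theorem Diag.comb {W : ℕ → Submodule ℝ H} {B B' : H →L[ℝ] H →L[ℝ] ℝ} {e e' : ℕ → ℝ} (hB : Diag W B e) (hB' : Diag W B' e') (c c' : ℝ) :
    Diag W (c • B + c' • B') (fun k => c * e k + c' * e' k) := by
  intro k w hw v
  simp only [add_apply, smul_apply, smul_eq_mul, hB k w hw v, hB' k w hw v]
  ring

theorem diag_of_tri [CompleteSpace H] {W : ℕ → Submodule ℝ H}
    (hd : ⊤ ≤ (⨆ k, W k).topologicalClosure) (hW : Monotone W)
    {B : H →L[ℝ] H →L[ℝ] ℝ} {e : ℕ → ℝ} (hs : ∀ u v, B u v = B v u)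
    (ht : ∀ k, ∀ w ∈ W k, ∃ w', (w' = 0 ∨ ∃ j < k, w' ∈ W j) ∧
      ∀ l, ∀ v ∈ W l, B v w = e k * inner ℝ v w + inner ℝ v w') : Diag W B e := by
  have ht' : ∀ k, ∀ w ∈ W k, ∃ w', (w' = 0 ∨ ∃ j < k, w' ∈ W j) ∧
      ∀ v, B v w = e k * inner ℝ v w + inner ℝ v w' := by
    intro k w hw
    obtain ⟨w', h1, h2⟩ := ht k w hw
    refine ⟨w', h1, ?_⟩
    have hden : Dense ((⨆ k, W k : Submodule ℝ H) : Set H) :=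
      Submodule.dense_iff_topologicalClosure_eq_top.2 (top_le_iff.1 hd)
    have := Continuous.ext_on hden (f := fun v => B v w) (g := fun v => e k * inner ℝ v w + inner ℝ v w')
      (by fun_prop) (by fun_prop) (by
        intro v hv
        obtain ⟨l, hl⟩ := (Submodule.mem_iSup_of_directed _ (hW.directed_le)).1 hv
        exact h2 l v hl)
    exact fun v => congrFun this v
  intro k w hw v
  obtain ⟨w', h1, h2⟩ := ht' k w hw.1
  have : w' = 0 := by
    rcases h1 with h1 | ⟨j, hj, h1⟩
    · exact h1
    have hz := hw.2 j hj w' h1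
    have e1 : B w' w = inner ℝ w' w' := by rw [h2 w', hz]; ring
    obtain ⟨w'', h3, h4⟩ := ht' j w' h1
    have e2 : B w w' = 0 := by
      rw [h4 w, real_inner_comm, hz, mul_zero, zero_add, real_inner_comm]
      rcases h3 with h3 | ⟨i, hi, h3⟩
      · simp [h3]
      · exact hw.2 i (by omega) w'' h3
    rw [hs, e2] at e1
    exact inner_self_eq_zero.1 e1.symm
  rw [h2 v, this, inner_zero_right, add_zero]

end Abstract
end WFI

namespace WFI
variable {n : ℕ}

theorem V_fg (k : ℕ) : (V n k).FG := by
  induction k with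
  | zero => exact Submodule.fg_span (Set.finite_singleton _)
  | succ k ih =>
    have h : (V n k ⊔ ⨆ i : Option (Fin n), (V n k).map (LinearMap.mulLeft ℝ (xi i))).FG :=
      ih.sup (Submodule.fg_iSup _ fun i => ih.map _)
    have hle : V n (k+1) ≤ V n k ⊔ ⨆ i : Option (Fin n), (V n k).map (LinearMap.mulLeft ℝ (xi i)) := by
      refine Submodule.span_le.2 ?_
      rintro g (hg | ⟨i, P, hP, rfl⟩)
      · exact Submodule.mem_sup_left hg
      · refine Submodule.mem_sup_right (Submodule.mem_iSup_of_mem i ?_)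
        exact Submodule.mem_map.2 ⟨P, hP, rfl⟩
    have hfd : FiniteDimensional ℝ ↥(V n k ⊔ ⨆ i : Option (Fin n), (V n k).map (LinearMap.mulLeft ℝ (xi i))) :=
      Module.Finite.iff_fg.2 h
    exact Module.Finite.iff_fg.1 (Submodule.finiteDimensional_of_le hle)

instance (k : ℕ) : FiniteDimensional ℝ (V n k) := Module.Finite.iff_fg.2 (V_fg k)

noncomputable def TV (n : ℕ) [NeZero n] (k : ℕ) : V n k →ₗ[ℝ] Lp ℝ 2 (sig n) where
  toFun P := (V_memLp P.2 2).toLp (P : EuclideanSpace ℝ (Fin n) → ℝ)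
  map_add' P Q := rfl
  map_smul' c P := rfl

noncomputable def W (n : ℕ) [NeZero n] (k : ℕ) : Submodule ℝ (Lp ℝ 2 (sig n)) := (TV n k).range

instance [NeZero n] (k : ℕ) : FiniteDimensional ℝ (W n k) := by unfold W; infer_instance

theorem mem_W [NeZero n] {k : ℕ} {w : Lp ℝ 2 (sig n)} :
    w ∈ W n k ↔ ∃ P, ∃ hP : P ∈ V n k, w = (V_memLp hP 2).toLp P := by
  constructor
  · rintro ⟨P, rfl⟩; exact ⟨P.1, P.2, rfl⟩
  · rintro ⟨P, hP, rfl⟩; exact ⟨⟨P, hP⟩, rfl⟩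

theorem W_mono [NeZero n] : Monotone (W n) := by
  intro k l h w hw
  obtain ⟨P, hP, rfl⟩ := mem_W.1 hw
  exact mem_W.2 ⟨P, V_mono h hP, rfl⟩

/-- the algebra of all polynomials in `xi` -/
noncomputable def algV (n : ℕ) : StarSubalgebra ℝ (BoundedContinuousFunction (EuclideanSpace ℝ (Fin n)) ℝ) where
  carrier := {f | ∃ k, ⇑f ∈ V n k}
  mul_mem' := by
    rintro f g ⟨k, hk⟩ ⟨l, hl⟩
    exact V_mul hk l _ hl
  add_mem' := by
    rintro f g ⟨k, hk⟩ ⟨l, hl⟩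
    exact ⟨max k l, (V n _).add_mem (V_mono (le_max_left _ _) hk) (V_mono (le_max_right _ _) hl)⟩
  algebraMap_mem' := fun r => ⟨0, const_mem_V 0 r⟩
  star_mem' := by
    rintro f ⟨k, hk⟩
    refine ⟨k, ?_⟩
    have e : ⇑(star f) = ⇑f := by ext x; simp
    rw [e]; exact hk

theorem xi_sep {x y : EuclideanSpace ℝ (Fin n)} (h : ∀ i, xi i x = xi i y) : x = y := by
  have h0 : rho x = rho y := by have := h none; simp only [xi] at this; linarith
  ext i
  have := h (some i)
  simp only [xi, h0] at this
  exact mul_left_cancel₀ (rho_pos y).ne' this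

theorem algV_sep : ((algV n).map (BoundedContinuousFunction.toContinuousMapStarₐ ℝ)).SeparatesPoints := by
  intro x y hxy
  have : ∃ i, xi i x ≠ xi i y := by
    by_contra! h; exact hxy (xi_sep h)
  obtain ⟨i, hi⟩ := this
  obtain ⟨C, hC⟩ := V_bdd 1 _ (xi_mem (n := n) i)
  let g : BoundedContinuousFunction (EuclideanSpace ℝ (Fin n)) ℝ :=
    BoundedContinuousFunction.ofNormedAddCommGroup (xi i) (xi_contDiff i).continuous C hC
  refine ⟨xi i, ⟨BoundedContinuousFunction.toContinuousMapStarₐ ℝ g, ⟨g, ⟨1, xi_mem i⟩, rfl⟩, rfl⟩, hi⟩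

theorem ae_zero_of_V [NeZero n] {F : EuclideanSpace ℝ (Fin n) → ℝ} (hF : Integrable F (sig n))
    (h : ∀ k, ∀ P ∈ V n k, ∫ x, F x * P x ∂(sig n) = 0) : F =ᵐ[sig n] 0 := by
  have hm1 : AEMeasurable (fun x => ENNReal.ofReal (F x)) (sig n) := hF.1.aemeasurable.ennreal_ofReal
  have hm2 : AEMeasurable (fun x => ENNReal.ofReal (-F x)) (sig n) := hF.neg.1.aemeasurable.ennreal_ofReal
  have : IsFiniteMeasure ((sig n).withDensity (fun x => ENNReal.ofReal (F x))) :=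
    isFiniteMeasure_withDensity_ofReal hF.2
  have : IsFiniteMeasure ((sig n).withDensity (fun x => ENNReal.ofReal (-F x))) :=
    isFiniteMeasure_withDensity_ofReal hF.neg.2
  have key : (sig n).withDensity (fun x => ENNReal.ofReal (F x)) =
      (sig n).withDensity (fun x => ENNReal.ofReal (-F x)) := by
    apply ext_of_forall_mem_subalgebra_integral_eq_of_pseudoEMetric_complete_countable (algV_sep (n := n))
    rintro g ⟨k, hk⟩
    rw [integral_withDensity_eq_integral_toReal_smul₀ hm1 (by simp),
      integral_withDensity_eq_integral_toReal_smul₀ hm2 (by simp), ← sub_eq_zero, ← integral_sub]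
    · rw [← h k _ hk]
      congr 1; ext x
      simp only [smul_eq_mul, ENNReal.toReal_ofReal']
      rw [← sub_mul, max_zero_sub_max_neg_zero_eq_self]
    · obtain ⟨C, hC⟩ := V_bdd k _ hk
      refine Integrable.mul_bdd (c := C) ?_ g.continuous.aestronglyMeasurable (.of_forall hC)
      simp only [ENNReal.toReal_ofReal']
      exact hF.pos_part
    · obtain ⟨C, hC⟩ := V_bdd k _ hk
      refine Integrable.mul_bdd (c := C) ?_ g.continuous.aestronglyMeasurable (.of_forall hC)
      simp only [ENNReal.toReal_ofReal']
      exact hF.neg_part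
  rw [withDensity_eq_iff_of_sigmaFinite hm1 hm2] at key
  filter_upwards [key] with x hx
  have := congrArg ENNReal.toReal hx
  simp only [ENNReal.toReal_ofReal'] at this
  have h2 := max_zero_sub_max_neg_zero_eq_self (F x)
  rw [this, sub_self] at h2
  exact h2.symm

theorem W_dense [NeZero n] : ⊤ ≤ (⨆ k, W n k).topologicalClosure := by
  rw [top_le_iff, Submodule.topologicalClosure_eq_top_iff, Submodule.eq_bot_iff]
  intro F hF
  have h : ∀ k, ∀ P ∈ V n k, ∫ x, F x * P x ∂(sig n) = 0 := by
    intro k P hP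
    have h1 := (Submodule.mem_orthogonal _ _).1 hF _ (Submodule.mem_iSup_of_mem k (mem_W.2 ⟨P, hP, rfl⟩))
    rw [L2.inner_def] at h1
    rw [← h1]
    apply integral_congr_ae
    filter_upwards [(V_memLp hP 2).coeFn_toLp] with x hx
    simp [hx]
  exact (Lp.eq_zero_iff_ae_eq_zero).2 (ae_zero_of_V ((Lp.memLp F).integrable (by norm_num)) h)

theorem inner_toLp {f g : EuclideanSpace ℝ (Fin n) → ℝ}
    (hf : MemLp f 2 (sig n)) (hg : MemLp g 2 (sig n)) :
    inner ℝ (hf.toLp f) (hg.toLp g) = ip f g := by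
  rw [L2.inner_def]
  apply integral_congr_ae
  filter_upwards [hf.coeFn_toLp, hg.coeFn_toLp] with x hx hy
  simp [hx, hy, mul_comm]

theorem bform_symm [NeZero n] {a : ℝ} (ha : a < n / 2) (u v : Lp ℝ 2 (sig n)) :
    bform n a ha u v = bform n a ha v u := by
  rw [bform_apply, bform_apply, bf_symm]

theorem bform_diag [NeZero n] {a : ℝ} (ha : a < n / 2) : Diag (W n) (bform n a ha) (ev n a) := by
  refine diag_of_tri W_dense W_mono (bform_symm ha) ?_
  intro k w hw
  obtain ⟨P, hP, rfl⟩ := mem_W.1 hw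
  obtain ⟨P', hP', h⟩ := tri ha k P hP
  have hP'' := Vm_le k hP'
  refine ⟨(V_memLp hP'' 2).toLp P', ?_, ?_⟩
  · cases k with
    | zero =>
      left
      have : P' = 0 := by simpa [Vm] using hP'
      subst this; exact MemLp.toLp_zero _
    | succ k => exact Or.inr ⟨k, by omega, mem_W.2 ⟨P', hP', rfl⟩⟩
  · intro l v hv
    obtain ⟨R, hR, rfl⟩ := mem_W.1 hv
    rw [bform_toLp, inner_toLp, inner_toLp, h l R hR]

theorem ev_pos [NeZero n] {a : ℝ} (h0 : 0 < a) (ha : a < n / 2) (k : ℕ) : 0 < ev n a k := by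
  have hn : (0:ℝ) < n := by exact_mod_cast Nat.pos_of_ne_zero (NeZero.ne n)
  induction k with
  | zero => exact E0_pos ha
  | succ k ih =>
    rw [ev]
    have : (0:ℝ) < k + n - a := by have : (0:ℝ) ≤ k := by positivity
                                   linarith
    positivity

end WFI

namespace WFI
variable {n : ℕ}

theorem E0_sub_one [NeZero n] {a : ℝ} (ha : a < n / 2) :
    E0 n (a - 1) = 2 * ((n - 2 * a) / (n - a)) * E0 n a := by
  have hn : (0:ℝ) < n := by exact_mod_cast Nat.pos_of_ne_zero (NeZero.ne n)
  have h1 : 0 < (n:ℝ) - a := by linarith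
  have h2 : 0 < (n:ℝ) - a - n / 2 := by linarith
  unfold E0
  rw [show (n:ℝ) - (a - 1) - n / 2 = (n - a - n/2) + 1 by ring,
    show (n:ℝ) - (a - 1) = (n - a) + 1 by ring, Gamma_add_one h2.ne', Gamma_add_one h1.ne',
    show (n:ℝ) - 2 * (a - 1) = (n - 2 * a) + 2 by ring, rpow_add (by norm_num)]
  have := (Gamma_pos_of_pos h1).ne'
  norm_num
  field_simp
  ring

theorem ev_zero_succ (k : ℕ) : ev n 0 (k+1) = 0 := by
  induction k with
  | zero => simp [ev]
  | succ k ih => rw [ev, ih, mul_zero]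

theorem ev_cmp [NeZero n] {a : ℝ} (h0 : 0 < a) (ha : a < n / 2) (k : ℕ) :
    1 / 2 * ev n (a - 1) (k+1) ≤ ((n - 2 * a) / (n - a)) * ((n - a) / (n - a + 1)) * ev n a (k+1) := by
  have hn : (0:ℝ) < n := by exact_mod_cast Nat.pos_of_ne_zero (NeZero.ne n)
  have h1 : 0 < (n:ℝ) - a := by linarith
  have h2 : 0 < (n:ℝ) - 2 * a := by linarith
  induction k with
  | zero =>
    rw [ev, ev, ev, ev, E0_sub_one ha]
    have hE := E0_pos ha
    simp only [Nat.cast_zero, zero_add]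
    rw [show (n:ℝ) - (a - 1) = n - a + 1 by ring]
    have : (n - 2 * a) / (n - a) * ((n - a) / (n - a + 1)) * (a / (n - a) * E0 n a)
      - 1/2 * ((a - 1)/(n - a + 1) * (2 * ((n - 2 * a) / (n - a)) * E0 n a))
      = (n - 2 * a) / ((n - a) * (n - a + 1)) * E0 n a := by
      field_simp; ring
    have h3 : 0 ≤ (n - 2 * a) / ((n - a) * (n - a + 1)) * E0 n a := by positivity
    linarith
  | succ k ih =>
    have hE := ev_pos h0 ha (k+1)
    rw [show ev n (a-1) (k+1+1) = (((k+1:ℕ):ℝ) + (a-1)) / (((k+1:ℕ):ℝ) + n - (a-1)) * ev n (a-1) (k+1) from rfl,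
      show ev n a (k+1+1) = (((k+1:ℕ):ℝ) + a) / (((k+1:ℕ):ℝ) + n - a) * ev n a (k+1) from rfl]
    set M := ((n - 2 * a) / (n - a)) * ((n - a) / (n - a + 1)) with hM
    have hMp : 0 < M := by positivity
    have hk : (0:ℝ) ≤ k := by positivity
    push_cast
    have e1 : 0 ≤ ((k:ℝ) + 1 + (a - 1)) / (k + 1 + n - (a - 1)) :=
      div_nonneg (by linarith) (by linarith)
    have e2 : ((k:ℝ) + 1 + (a - 1)) / (k + 1 + n - (a - 1)) ≤ (k + 1 + a) / (k + 1 + n - a) := by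
      rw [div_le_div_iff₀ (by linarith) (by linarith)]
      nlinarith
    calc _ = ((k:ℝ) + 1 + (a - 1)) / (k + 1 + n - (a - 1)) * (1 / 2 * ev n (a-1) (k+1)) := by ring
      _ ≤ ((k:ℝ) + 1 + (a - 1)) / (k + 1 + n - (a - 1)) * (M * ev n a (k+1)) := by gcongr
      _ ≤ (k + 1 + a) / (k + 1 + n - a) * (M * ev n a (k+1)) := by gcongr
      _ = _ := by ring

theorem xi_mul_memLp {i : Option (Fin n)} {f : EuclideanSpace ℝ (Fin n) → ℝ} {p : ENNReal}
    (hf : MemLp f p (sig n)) : MemLp (xi i * f) p (sig n) := by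
  refine hf.mono ((xi_contDiff i).continuous.aestronglyMeasurable.mul hf.1) (.of_forall fun x => ?_)
  rw [Pi.mul_apply, norm_mul]
  calc _ ≤ 1 * ‖f x‖ := by gcongr; exact abs_xi_le i x
    _ = _ := one_mul _

theorem ae_ne [NeZero n] : ∀ᵐ z : EuclideanSpace ℝ (Fin n) × EuclideanSpace ℝ (Fin n) ∂((sig n).prod (sig n)),
    z.1 ≠ z.2 := by
  have hm : MeasurableSet {z : EuclideanSpace ℝ (Fin n) × EuclideanSpace ℝ (Fin n) | z.1 = z.2} :=
    measurableSet_eq_fun measurable_fst measurable_snd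
  have : ((sig n).prod (sig n)) {z : EuclideanSpace ℝ (Fin n) × EuclideanSpace ℝ (Fin n) | z.1 = z.2} = 0 := by
    rw [Measure.measure_prod_null hm]
    filter_upwards with x
    have : Prod.mk x ⁻¹' {z : EuclideanSpace ℝ (Fin n) × EuclideanSpace ℝ (Fin n) | z.1 = z.2} = {x} := by
      ext y; simp [eq_comm]
    rw [this]
    exact sig_ac (measure_singleton x)
  rw [ae_iff]
  simpa using this

theorem ker_sub_one {a : ℝ} {x y : EuclideanSpace ℝ (Fin n)} (h : x ≠ y) :
    ‖x - y‖ ^ 2 * (rho x * rho y) * ker a x y = ker (a - 1) x y := by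
  have h1 : 0 < ‖x - y‖ := norm_pos_iff.2 (sub_ne_zero.2 h)
  have := rho_pos x
  have := rho_pos y
  unfold ker
  have h2 : 0 < ‖x - y‖ ^ 2 * (rho x * rho y) := by positivity
  rw [show -(a - 1) = 1 + -a by ring, rpow_add h2, rpow_one]

theorem sum_bf_xi [NeZero n] {a : ℝ} (ha : a < n / 2) {h : EuclideanSpace ℝ (Fin n) → ℝ}
    (hh : MemLp h 2 (sig n)) :
    ∑ i, bf a (xi i * h) (xi i * h) = bf a h h - 1 / 2 * bf (a - 1) h h := by
  unfold bf
  rw [← integral_finsetSum _ (fun i _ => bf_integrable ha (xi_mul_memLp hh) (xi_mul_memLp hh)),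
    ← integral_const_mul, ← integral_sub (bf_integrable ha hh hh)
      ((bf_integrable (by linarith) hh hh).const_mul _)]
  apply integral_congr_ae
  filter_upwards [ae_ne] with z hz
  rw [← ker_sub_one hz]
  have := sum_xi_mul z.1 z.2
  have e : ∑ i : Option (Fin n), ((xi i * h : EuclideanSpace ℝ (Fin n) → ℝ) z.1) * ((xi i * h : EuclideanSpace ℝ (Fin n) → ℝ) z.2) * ker a z.1 z.2
     = (∑ i, xi i z.1 * xi i z.2) * (h z.1 * h z.2 * ker a z.1 z.2) := by
    rw [Finset.sum_mul]
    refine Finset.sum_congr rfl fun i _ => ?_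
    simp only [Pi.mul_apply]; ring
  rw [e, this]
  ring

/-- the key spectral inequality -/
theorem I1 [NeZero n] {a : ℝ} (h0 : 0 < a) (ha : a < n / 2) {h : EuclideanSpace ℝ (Fin n) → ℝ}
    (hh : MemLp h 2 (sig n)) :
    let τ := ((n:ℝ) - 2 * a) / (n - a)
    let c := τ / (n - a + 1)
    (1 - τ + c) * bf a h h - c * (E0 n a / E0 n 0 * (∫ x, h x ∂(sig n)) ^ 2)
      ≤ ∑ i, bf a (xi i * h) (xi i * h) := by
  intro τ c
  have hn : (0:ℝ) < n := by exact_mod_cast Nat.pos_of_ne_zero (NeZero.ne n)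
  have h1 : 0 < (n:ℝ) - a := by linarith
  have hz : (0:ℝ) < n / 2 := by positivity
  have ha1 : a - 1 < n / 2 := by linarith
  have D := ((bform_diag ha).comb (bform_diag ha1) (τ - c) (-(1/2))).comb (bform_diag hz) 1 (c * (E0 n a / E0 n 0))
  have hE := (E0_pos hz).ne'
  have hp := diag_psd W_mono W_dense D ?_ (hh.toLp h)
  · simp only [add_apply, smul_apply, smul_eq_mul, bform_toLp] at hp
    rw [sum_bf_xi ha hh]
    rw [bf_zero] at hp
    linarith
  · intro k
    cases k with
    | zero =>
      simp only [ev]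
      rw [E0_sub_one ha, mul_assoc c, div_mul_cancel₀ _ hE]
      apply le_of_eq
      change 0 = 1 * ((τ - c) * _ + -(1/2) * (2 * τ * _)) + _
      ring
    | succ k =>
      rw [ev_zero_succ]
      have := ev_cmp h0 ha k
      have e : ((n:ℝ) - 2 * a) / (n - a) * ((n - a) / (n - a + 1)) = τ - c := by
        simp only [c, τ]; field_simp; ring
      rw [e] at this
      linarith

/-- reciprocal normalised eigenvalues -/
noncomputable def gam (n : ℕ) (t : ℝ) (k : ℕ) : ℝ :=
  ∏ j ∈ Finset.range k, ((n:ℝ) + 2 * j + (n + j) * t) / (n + 2 * j + j * t)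

theorem gam_sum [NeZero n] {t : ℝ} (ht : 0 < t) (K : ℕ) :
    gam n t K = 1 + t * ∑ k ∈ Finset.range K, gam n t k * (n / (n + 2 * k + k * t)) := by
  have hn : (0:ℝ) < n := by exact_mod_cast Nat.pos_of_ne_zero (NeZero.ne n)
  induction K with
  | zero => simp [gam]
  | succ K ih =>
    rw [Finset.sum_range_succ, mul_add, ← add_assoc, ← ih]
    rw [show gam n t (K+1) = gam n t K * (((n:ℝ) + 2 * K + (n + K) * t) / (n + 2 * K + K * t)) from
      Finset.prod_range_succ _ _]
    have : (0:ℝ) < n + 2 * K + K * t := by positivity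
    field_simp
    ring

theorem gam_mono [NeZero n] {t T : ℝ} (ht : 0 < t) (hT : t ≤ T) (k : ℕ) :
    gam n t k * (n / (n + 2 * k + k * t)) ≤ gam n T k * (n / (n + 2 * k + k * T)) := by
  have hn : (0:ℝ) < n := by exact_mod_cast Nat.pos_of_ne_zero (NeZero.ne n)
  have hT0 : 0 < T := by linarith
  cases k with
  | zero => simp [gam]
  | succ k =>
    unfold gam
    rw [Finset.prod_range_succ', Finset.prod_range_succ', mul_assoc, mul_assoc]
    have e : ∀ s : ℝ, ((n:ℝ) + 2 * (0:ℕ) + (n + (0:ℕ)) * s) / (n + 2 * (0:ℕ) + (0:ℕ) * s) = 1 + s := by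
      intro s; push_cast; rw [div_eq_iff (by simp [hn.ne'])]; ring
    rw [e, e]
    refine mul_le_mul ?_ ?_ (by positivity) (Finset.prod_nonneg fun j _ => by positivity)
    · refine Finset.prod_le_prod (fun j _ => by positivity) fun j _ => ?_
      set m : ℝ := ((j+1 : ℕ) : ℝ)
      have hm : 0 ≤ m := by positivity
      rw [div_le_div_iff₀ (by positivity) (by positivity)]
      have := mul_nonneg (mul_nonneg hn.le (by positivity : 0 ≤ (n:ℝ) + 2 * m)) (sub_nonneg.2 hT)
      linarith
    · set m : ℝ := ((k+1 : ℕ) : ℝ)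
      have hm : 0 ≤ m := by positivity
      rw [← mul_div_assoc, ← mul_div_assoc, div_le_div_iff₀ (by positivity) (by positivity)]
      have := mul_nonneg (mul_nonneg hn.le (by positivity : 0 ≤ (n:ℝ) + m)) (sub_nonneg.2 hT)
      linarith

theorem gam_cmp [NeZero n] {t T : ℝ} (ht : 0 < t) (hT : t ≤ T) (k : ℕ) :
    gam n t k ≤ (1 - t / T) + t / T * gam n T k := by
  have hT0 : 0 < T := by linarith
  have h := gam_sum (n := n) ht k
  have h' := gam_sum (n := n) hT0 k
  have : ∑ k ∈ Finset.range k, gam n t k * (n / (n + 2 * k + k * t))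
    ≤ ∑ k ∈ Finset.range k, gam n T k * (n / (n + 2 * k + k * T)) :=
    Finset.sum_le_sum fun j _ => gam_mono ht hT j
  have e : (1 - t / T) + t / T * gam n T k = 1 + t * ∑ k ∈ Finset.range k, gam n T k * (n / (n + 2 * k + k * T)) := by
    rw [h']; generalize ∑ k ∈ Finset.range k, gam n T k * (n / (n + 2 * k + k * T)) = S; field_simp; ring
  rw [e, h]
  gcongr

theorem ev_gam [NeZero n] {t : ℝ} (ht : 0 < t) (k : ℕ) :
    (ev n (n / (t + 2)) k / E0 n (n / (t + 2)))⁻¹ = gam n t k := by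
  have hn : (0:ℝ) < n := by exact_mod_cast Nat.pos_of_ne_zero (NeZero.ne n)
  have hx : (n:ℝ) / (t+2) < n / 2 := by gcongr; linarith
  have hx0 : 0 < (n:ℝ) / (t+2) := by positivity
  have hE := (E0_pos hx).ne'
  induction k with
  | zero => simp [ev, gam, hE]
  | succ k ih =>
    rw [show gam n t (k+1) = gam n t k * (((n:ℝ) + 2 * k + (n + k) * t) / (n + 2 * k + k * t)) from
      Finset.prod_range_succ _ _, ← ih, ev, mul_div_assoc, mul_inv, mul_comm]
    congr 1
    have : (0:ℝ) ≤ k := by positivity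
    have h3 : (0:ℝ) < n + 2 * k + k * t := by positivity
    rw [inv_div, show (k:ℝ) + n - n / (t+2) = (n + 2 * k + (n + k) * t) / (t + 2) by field_simp; ring,
      show (k:ℝ) + n / (t+2) = (n + 2 * k + k * t) / (t + 2) by field_simp; ring]
    field_simp

end WFI

namespace WFI
variable {n : ℕ}

theorem base_int [NeZero n] {a : ℝ} (ha : a < n / 2) :
    Integrable (fun w : EuclideanSpace ℝ (Fin n) => (‖w‖ ^ 2) ^ (-a) * wt a w) := by
  have h := (integrable_sig _).1 (integrable_ker (n := n) ha 0)
  have hc := wt_pos (n := n) a 0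
  have hd := pow_pos (rho_pos (n := n) 0) n
  refine (h.const_mul (rho (0:EuclideanSpace ℝ (Fin n)) ^ n / wt a (0:EuclideanSpace ℝ (Fin n)))).congr (.of_forall fun w => ?_)
  have := ker_mul a 0 w
  simp only [KK, zero_sub, norm_neg] at this
  change _ / _ * (ker a 0 w * rho w ^ n) = _
  rw [div_mul_eq_mul_div, div_eq_iff hc.ne']
  linear_combination this

noncomputable def c0 (n : ℕ) (a : ℝ) : ℝ := ∫ w : EuclideanSpace ℝ (Fin n), (‖w‖ ^ 2) ^ (-a) * wt a w

theorem c0_nonneg (a : ℝ) : 0 ≤ c0 n a :=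
  integral_nonneg fun w => mul_nonneg (by positivity) (wt_pos a w).le

theorem scale_lint [NeZero n] {a : ℝ} (ha : a < n / 2) (x : EuclideanSpace ℝ (Fin n)) {r : ℝ} (hr : 0 < r) :
    ∫⁻ y, ENNReal.ofReal (KK a x y * wt a (r⁻¹ • (x - y))) = ENNReal.ofReal (r ^ ((n:ℝ) - 2 * a) * c0 n a) := by
  set f : EuclideanSpace ℝ (Fin n) → ℝ := fun w => (‖w‖ ^ 2) ^ (-a) * wt a w with hf
  have hfi : Integrable f := base_int ha
  have e : ∀ y, KK a x y * wt a (r⁻¹ • (x - y)) = r ^ (-(2 * a)) * f (r⁻¹ • (x - y)) := by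
    intro y
    simp only [hf, KK, norm_smul, norm_inv, Real.norm_eq_abs, abs_of_pos hr]
    rw [mul_pow, Real.mul_rpow (by positivity) (by positivity), ← Real.rpow_natCast r⁻¹, ← Real.rpow_mul (by positivity),
      Real.inv_rpow hr.le, ← Real.rpow_neg hr.le]
    have : r ^ (-(2 * a)) * r ^ (-(((2:ℕ):ℝ) * -a)) = 1 := by
      rw [← Real.rpow_add hr]; push_cast; ring_nf; simp
    rw [← mul_assoc, ← mul_assoc, this, one_mul]
  have hi : Integrable (fun y => r ^ (-(2 * a)) * f (r⁻¹ • (x - y))) :=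
    ((hfi.comp_smul (inv_ne_zero hr.ne')).comp_sub_left x).const_mul _
  simp_rw [e]
  rw [← ofReal_integral_eq_lintegral_ofReal hi (.of_forall fun y => by
    simp only [hf]; have := wt_pos a (r⁻¹ • (x - y)); positivity), integral_const_mul,
    integral_sub_left_eq_self (fun z => f (r⁻¹ • z)), Measure.integral_comp_smul]
  congr 1
  rw [finrank_euclideanSpace, Fintype.card_fin, smul_eq_mul, ← mul_assoc, inv_pow, inv_inv, abs_of_pos (by positivity)]
  congr 1
  rw [sub_eq_add_neg, Real.rpow_add hr, Real.rpow_natCast, mul_comm]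

theorem hedberg_pt [NeZero n] {a : ℝ} (h0 : 0 < a) (ha : a < n / 2) {A H : ℝ} (hA : 0 < A) (hH : 0 ≤ H) (hHA : H ≤ A)
    (z : EuclideanSpace ℝ (Fin n)) :
    H * (‖z‖ ^ 2) ^ (-a) ≤ A ^ (a / (n - a)) * H ^ ((n:ℝ) / (n - a)) +
      A * ((‖z‖ ^ 2) ^ (-a) * wt a ((A ^ (-1 / (n - a)))⁻¹ • z)) := by
  have hn : (0:ℝ) < n := by exact_mod_cast Nat.pos_of_ne_zero (NeZero.ne n)
  have h1 : 0 < (n:ℝ) - a := by linarith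
  have hw := wt_pos a ((A ^ (-1 / (n - a)))⁻¹ • z)
  rcases eq_or_ne z 0 with hz | hz
  · subst hz
    have : ((‖(0:EuclideanSpace ℝ (Fin n))‖:ℝ) ^ 2) ^ (-a) = 0 := by
      rw [norm_zero, zero_pow (by norm_num), Real.zero_rpow (by linarith)]
    rw [this]
    simp only [mul_zero, zero_mul, add_zero]
    positivity
  have hz0 : 0 < ‖z‖ := norm_pos_iff.2 hz
  set r := A ^ (-1 / ((n:ℝ) - a)) with hr
  have hr0 : 0 < r := by positivity
  set w := r⁻¹ • z with hwdef
  have hwn : ‖w‖ = ‖z‖ / r := by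
    rw [hwdef, norm_smul, norm_inv, Real.norm_eq_abs, abs_of_pos hr0]; ring
  set k := (‖z‖ ^ 2) ^ (-a) with hk
  have hk0 : 0 < k := by positivity
  rcases le_or_gt ‖w‖ 1 with hle | hgt
  · have : 1 ≤ wt a w := by
      unfold wt
      apply Real.one_le_rpow _ h1.le
      unfold rho
      rw [le_div_iff₀ (by positivity)]
      nlinarith [norm_nonneg w]
    have e1 : H * k ≤ A * (k * wt a w) := by
      calc H * k ≤ A * k := by gcongr
        _ = A * (k * 1) := by ring
        _ ≤ _ := by gcongr
    have : 0 ≤ A ^ (a / (n - a)) * H ^ ((n:ℝ) / (n - a)) := by positivity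
    linarith
  · have hwt : (‖z‖ ^ 2) ^ (-((n:ℝ) - a)) * (A ^ 2)⁻¹ ≤ wt a w := by
      have : (‖w‖ ^ 2)⁻¹ ≤ rho w := by
        unfold rho
        rw [inv_eq_one_div, div_le_div_iff₀ (by positivity) (by positivity)]
        nlinarith
      calc _ = ((‖w‖ ^ 2)⁻¹) ^ ((n:ℝ) - a) := by
            rw [hwn, div_pow, inv_div, Real.div_rpow (by positivity) (by positivity), Real.rpow_neg (by positivity),
              div_eq_mul_inv, mul_comm, ← Real.rpow_natCast r, ← Real.rpow_mul hr0.le, hr, ← Real.rpow_mul hA.le]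
            congr 1
            rw [show -1 / ((n:ℝ) - a) * (((2:ℕ):ℝ) * (n - a)) = -((2:ℕ):ℝ) by field_simp, Real.rpow_neg hA.le, Real.rpow_natCast]
        _ ≤ _ := by unfold wt; gcongr
    rcases le_or_gt ((‖z‖ ^ 2) ^ (-((n:ℝ) - a))) (A * H) with hc | hc
    · have e1 : k ≤ (A * H) ^ (a / (n - a)) := by
        calc k = ((‖z‖ ^ 2) ^ (-((n:ℝ) - a))) ^ (a / (n - a)) := by
              rw [← Real.rpow_mul (by positivity), hk]; congr 1; field_simp
          _ ≤ _ := by gcongr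
      rw [Real.mul_rpow hA.le hH] at e1
      have e2 : H * k ≤ A ^ (a / (n - a)) * H ^ ((n:ℝ) / (n - a)) := by
        calc H * k ≤ H * (A ^ (a / (n - a)) * H ^ (a / (n - a))) := by gcongr
          _ = A ^ (a / (n - a)) * (H ^ (1:ℝ) * H ^ (a / (n - a))) := by rw [Real.rpow_one]; ring
          _ = _ := by
            rw [← Real.rpow_add_of_nonneg hH (by norm_num) (by positivity)]
            congr 2; field_simp; ring
      have : 0 ≤ A * (k * wt a w) := by positivity
      linarith
    · have e1 : H ≤ A * ((‖z‖ ^ 2) ^ (-((n:ℝ) - a)) * (A ^ 2)⁻¹) := by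
        have : A * ((‖z‖ ^ 2) ^ (-((n:ℝ) - a)) * (A ^ 2)⁻¹) = (‖z‖ ^ 2) ^ (-((n:ℝ) - a)) / A := by field_simp
        rw [this, le_div_iff₀ hA]; linarith
      have e2 : H * k ≤ A * (k * wt a w) := by
        calc H * k ≤ A * ((‖z‖ ^ 2) ^ (-((n:ℝ) - a)) * (A ^ 2)⁻¹) * k := by gcongr
          _ ≤ A * wt a w * k := by gcongr
          _ = _ := by ring
      have : 0 ≤ A ^ (a / (n - a)) * H ^ ((n:ℝ) / (n - a)) := by positivity
      linarith

theorem hedberg_inner [NeZero n] {a : ℝ} (h0 : 0 < a) (ha : a < n / 2) {H : EuclideanSpace ℝ (Fin n) → ℝ}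
    (hm : Measurable H) (hH : ∀ x, 0 ≤ H x)
    (hN : ∫⁻ x, ENNReal.ofReal (H x ^ ((n:ℝ) / (n - a))) = 1) (x : EuclideanSpace ℝ (Fin n)) :
    ∫⁻ y, (if H y ≤ H x then ENNReal.ofReal (H x * H y * KK a x y) else 0)
      ≤ ENNReal.ofReal (1 + c0 n a) * ENNReal.ofReal (H x ^ ((n:ℝ) / (n - a))) := by
  have hn : (0:ℝ) < n := by exact_mod_cast Nat.pos_of_ne_zero (NeZero.ne n)
  have h1 : 0 < (n:ℝ) - a := by linarith
  rcases (hH x).eq_or_lt with hx | hx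
  · simp [← hx]
  set A := H x with hA
  have hp : A * A ^ (a / (n - a)) = A ^ ((n:ℝ) / (n - a)) := by
    nth_rewrite 1 [← Real.rpow_one A]
    rw [← Real.rpow_add hx]; congr 1; field_simp; ring
  have hc := c0_nonneg (n := n) a
  set r := A ^ (-1 / ((n:ℝ) - a)) with hr
  have hr0 : 0 < r := by positivity
  calc _ ≤ ∫⁻ y, (ENNReal.ofReal (A ^ ((n:ℝ) / (n - a))) * ENNReal.ofReal (H y ^ ((n:ℝ) / (n - a)))
        + ENNReal.ofReal (A ^ 2) * ENNReal.ofReal (KK a x y * wt a (r⁻¹ • (x - y)))) := by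
        refine lintegral_mono fun y => ?_
        split_ifs with h
        · have := hedberg_pt h0 ha hx (hH y) h (x - y)
          rw [← ENNReal.ofReal_mul (by positivity), ← ENNReal.ofReal_mul (by positivity), ← ENNReal.ofReal_add
            (mul_nonneg (by positivity) (Real.rpow_nonneg (hH y) _)) (mul_nonneg (by positivity) (mul_nonneg (KK_nonneg _ _ _) (wt_pos _ _).le))]
          apply ENNReal.ofReal_le_ofReal
          rw [← hp]
          have h2 := mul_le_mul_of_nonneg_left this hx.le
          change A * (H y * KK a x y) ≤ A * (_ + A * (KK a x y * wt a (r⁻¹ • (x - y)))) at h2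
          linarith
        · exact zero_le
    _ = ENNReal.ofReal (A ^ ((n:ℝ) / (n - a))) + ENNReal.ofReal (A ^ 2) * ENNReal.ofReal (r ^ ((n:ℝ) - 2 * a) * c0 n a) := by
        rw [lintegral_add_left (by fun_prop), lintegral_const_mul _ (by fun_prop), hN, mul_one,
          lintegral_const_mul' _ _ (by simp), scale_lint ha x hr0]
    _ = _ := by
      rw [← ENNReal.ofReal_mul (by positivity), ← ENNReal.ofReal_add (by positivity) (by positivity), ← ENNReal.ofReal_mul (by positivity)]
      congr 1
      have : A ^ 2 * r ^ ((n:ℝ) - 2 * a) = A ^ ((n:ℝ) / (n - a)) := by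
        rw [hr, ← Real.rpow_mul hx.le, ← Real.rpow_natCast A 2, ← Real.rpow_add hx]
        congr 1; push_cast; field_simp; ring
      rw [← mul_assoc, this]; ring

theorem hedberg [NeZero n] {a : ℝ} (h0 : 0 < a) (ha : a < n / 2) {H : EuclideanSpace ℝ (Fin n) → ℝ}
    (hm : Measurable H) (hH : ∀ x, 0 ≤ H x)
    (hN : ∫⁻ x, ENNReal.ofReal (H x ^ ((n:ℝ) / (n - a))) = 1) :
    ∫⁻ z, ENNReal.ofReal (H z.1 * H z.2 * KK a z.1 z.2)
      ∂((volume : Measure (EuclideanSpace ℝ (Fin n))).prod volume) ≤ ENNReal.ofReal (2 * (1 + c0 n a)) := by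
  have hc := c0_nonneg (n := n) a
  have hKm := KK_meas (n := n) a
  set F : EuclideanSpace ℝ (Fin n) × EuclideanSpace ℝ (Fin n) → ENNReal :=
    fun z => if H z.2 ≤ H z.1 then ENNReal.ofReal (H z.1 * H z.2 * KK a z.1 z.2) else 0 with hF
  have hFm : Measurable F := by
    refine Measurable.ite (measurableSet_le (by fun_prop) (by fun_prop)) (by fun_prop) measurable_const
  have hI : ∫⁻ z, F z ∂((volume : Measure (EuclideanSpace ℝ (Fin n))).prod volume) ≤ ENNReal.ofReal (1 + c0 n a) := by
    rw [lintegral_prod _ hFm.aemeasurable]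
    calc _ ≤ ∫⁻ x, ENNReal.ofReal (1 + c0 n a) * ENNReal.ofReal (H x ^ ((n:ℝ) / (n - a))) :=
          lintegral_mono fun x => hedberg_inner h0 ha hm hH hN x
      _ = _ := by rw [lintegral_const_mul _ (by fun_prop), hN, mul_one]
  calc _ ≤ ∫⁻ z, (F z + F z.swap) ∂((volume : Measure (EuclideanSpace ℝ (Fin n))).prod volume) := by
        refine lintegral_mono fun z => ?_
        simp only [hF, Prod.fst_swap, Prod.snd_swap]
        rcases le_total (H z.2) (H z.1) with h | h
        · rw [if_pos h]; exact le_self_add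
        · rw [if_pos h]
          refine le_trans (le_of_eq ?_) le_add_self
          unfold KK
          rw [norm_sub_rev, mul_comm (H z.1)]
    _ = ∫⁻ z, F z ∂((volume : Measure (EuclideanSpace ℝ (Fin n))).prod volume) + ∫⁻ z, F z ∂((volume : Measure (EuclideanSpace ℝ (Fin n))).prod volume) := by
        rw [lintegral_add_left hFm]
        congr 1
        exact lintegral_prod_swap (μ := volume) (ν := volume) F
    _ ≤ ENNReal.ofReal (1 + c0 n a) + ENNReal.ofReal (1 + c0 n a) := add_le_add hI hI
    _ = _ := by rw [← ENNReal.ofReal_add (by positivity) (by positivity)]; congr 1; ring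

/-- bounded measurable functions -/
def Bd (h : EuclideanSpace ℝ (Fin n) → ℝ) : Prop := Measurable h ∧ ∃ M, ∀ x, |h x| ≤ M

theorem Bd.memLp [NeZero n] {h : EuclideanSpace ℝ (Fin n) → ℝ} (hh : Bd h) (p : ENNReal) : MemLp h p (sig n) := by
  obtain ⟨hm, M, hM⟩ := hh
  exact MemLp.of_bound hm.aestronglyMeasurable M (.of_forall hM)

theorem Bd.integrable [NeZero n] {h : EuclideanSpace ℝ (Fin n) → ℝ} (hh : Bd h) : Integrable h (sig n) :=
  (hh.memLp 1).integrable le_rfl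

theorem Bd.abs {h : EuclideanSpace ℝ (Fin n) → ℝ} (hh : Bd h) : Bd (fun x => |h x|) := by
  obtain ⟨hm, M, hM⟩ := hh
  exact ⟨hm.abs, M, fun x => by rw [abs_abs]; exact hM x⟩

theorem Bd.rpow {h : EuclideanSpace ℝ (Fin n) → ℝ} (hh : Bd h) {p : ℝ} (hp : 0 ≤ p) : Bd (fun x => |h x| ^ p) := by
  obtain ⟨hm, M, hM⟩ := hh
  refine ⟨by fun_prop, M ^ p, fun x => ?_⟩
  rw [abs_of_nonneg (by positivity)]
  exact Real.rpow_le_rpow (abs_nonneg _) (hM x) hp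

theorem Bd.mul {h g : EuclideanSpace ℝ (Fin n) → ℝ} (hh : Bd h) (hg : Bd g) : Bd (fun x => h x * g x) := by
  obtain ⟨hm, M, hM⟩ := hh
  obtain ⟨hm', M', hM'⟩ := hg
  refine ⟨hm.mul hm', M * M', fun x => ?_⟩
  rw [abs_mul]
  exact mul_le_mul (hM x) (hM' x) (abs_nonneg _) ((abs_nonneg _).trans (hM x))

theorem wt_rpow [NeZero n] {a : ℝ} (ha : a < n / 2) (x : EuclideanSpace ℝ (Fin n)) :
    wt a x ^ ((n:ℝ) / (n - a)) = rho x ^ n := by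
  have hn : (0:ℝ) < n := by exact_mod_cast Nat.pos_of_ne_zero (NeZero.ne n)
  have h1 : 0 < (n:ℝ) - a := by linarith
  unfold wt
  rw [← Real.rpow_mul (rho_pos x).le, mul_div_cancel₀ _ h1.ne', Real.rpow_natCast]

theorem nonsharp [NeZero n] {a : ℝ} (h0 : 0 < a) (ha : a < n / 2) {h : EuclideanSpace ℝ (Fin n) → ℝ} (hh : Bd h)
    (hN : ∫ x, |h x| ^ ((n:ℝ) / (n - a)) ∂(sig n) = 1) : bf a h h ≤ 2 * (1 + c0 n a) := by
  have hn : (0:ℝ) < n := by exact_mod_cast Nat.pos_of_ne_zero (NeZero.ne n)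
  have h1 : 0 < (n:ℝ) - a := by linarith
  have hc := c0_nonneg (n := n) a
  have e1 : bf a h h ≤ bf a (fun x => |h x|) (fun x => |h x|) := by
    unfold bf
    refine integral_mono (bf_integrable ha (hh.memLp 2) (hh.memLp 2)) (bf_integrable ha (hh.abs.memLp 2) (hh.abs.memLp 2)) ?_
    intro z
    refine mul_le_mul_of_nonneg_right ?_ (ker_nonneg _ _ _)
    rw [← abs_mul]; exact le_abs_self _
  refine e1.trans ?_
  rw [bf_vol]
  set H : EuclideanSpace ℝ (Fin n) → ℝ := fun x => |h x| * wt a x with hH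
  have hHn : ∀ x, 0 ≤ H x := fun x => mul_nonneg (abs_nonneg _) (wt_pos a x).le
  have hHm : Measurable H := by have := hh.1; fun_prop
  have hHN : ∫⁻ x, ENNReal.ofReal (H x ^ ((n:ℝ) / (n - a))) = 1 := by
    have e : ∀ x, H x ^ ((n:ℝ) / (n - a)) = |h x| ^ ((n:ℝ) / (n - a)) * rho x ^ n := by
      intro x
      rw [hH, Real.mul_rpow (abs_nonneg _) (wt_pos a x).le, wt_rpow ha]
    rw [int_sig] at hN
    simp_rw [e]
    rw [← ofReal_integral_eq_lintegral_ofReal, hN, ENNReal.ofReal_one]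
    · exact (integrable_sig _).1 (hh.rpow (by positivity)).integrable
    · exact .of_forall fun x => mul_nonneg (by positivity) (pow_nonneg (rho_pos x).le _)
  have hKm := KK_meas (n := n) a
  rw [integral_eq_lintegral_of_nonneg_ae]
  · exact ENNReal.toReal_le_of_le_ofReal (by positivity) (hedberg h0 ha hHm hHn hHN)
  · exact .of_forall fun z => mul_nonneg (mul_nonneg (hHn _) (hHn _)) (KK_nonneg _ _ _)
  · have : Measurable fun z : EuclideanSpace ℝ (Fin n) × EuclideanSpace ℝ (Fin n) => H z.1 * H z.2 * KK a z.1 z.2 := by fun_prop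
    exact this.aestronglyMeasurable

end WFI

namespace WFI
variable {n : ℕ}

noncomputable def act (a δ : ℝ) (b : EuclideanSpace ℝ (Fin n)) (h : EuclideanSpace ℝ (Fin n) → ℝ)
    (x : EuclideanSpace ℝ (Fin n)) : ℝ :=
  h (δ • x + b) * (δ * rho (δ • x + b) / rho x) ^ ((n:ℝ) - a)

theorem sq_bound (δ : ℝ) (hδ : 0 < δ) (b y : EuclideanSpace ℝ (Fin n)) :
    1 + ‖y‖ ^ 2 ≤ ((1 + 2 * ‖b‖ ^ 2) / δ ^ 2 + 2) * (δ ^ 2 + ‖y - b‖ ^ 2) := by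
  have h1 : ‖y‖ ≤ ‖y - b‖ + ‖b‖ := by simpa using norm_add_le (y - b) b
  have h2 : ‖y‖ ^ 2 ≤ 2 * ‖y - b‖ ^ 2 + 2 * ‖b‖ ^ 2 := by
    nlinarith [norm_nonneg y, norm_nonneg b, norm_nonneg (y - b), sq_nonneg (‖y - b‖ - ‖b‖)]
  have h3 : ((1 + 2 * ‖b‖ ^ 2) / δ ^ 2 + 2) * (δ ^ 2 + ‖y - b‖ ^ 2)
    = (1 + 2 * ‖b‖ ^ 2) + (1 + 2 * ‖b‖ ^ 2) / δ ^ 2 * ‖y - b‖ ^ 2 + 2 * δ ^ 2 + 2 * ‖y - b‖ ^ 2 := by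
    field_simp; ring
  rw [h3]
  have : 0 ≤ (1 + 2 * ‖b‖ ^ 2) / δ ^ 2 * ‖y - b‖ ^ 2 := by positivity
  nlinarith [sq_nonneg δ]

theorem sq_bound' (δ : ℝ) (b y : EuclideanSpace ℝ (Fin n)) :
    δ ^ 2 + ‖y - b‖ ^ 2 ≤ (δ ^ 2 + 2 + 2 * ‖b‖ ^ 2) * (1 + ‖y‖ ^ 2) := by
  have h1 : ‖y - b‖ ≤ ‖y‖ + ‖b‖ := norm_sub_le y b
  have h2 : ‖y - b‖ ^ 2 ≤ 2 * ‖y‖ ^ 2 + 2 * ‖b‖ ^ 2 := by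
    nlinarith [norm_nonneg y, norm_nonneg b, norm_nonneg (y - b), sq_nonneg (‖y‖ - ‖b‖)]
  nlinarith [sq_nonneg δ, sq_nonneg ‖b‖, sq_nonneg ‖y‖, mul_nonneg (sq_nonneg δ) (sq_nonneg ‖y‖), mul_nonneg (sq_nonneg ‖b‖) (sq_nonneg ‖y‖)]

theorem rho_aff_le {δ : ℝ} (hδ : 0 < δ) (b x : EuclideanSpace ℝ (Fin n)) :
    rho (δ • x + b) / rho x ≤ (δ ^ 2 + 2 + 2 * ‖b‖ ^ 2) / δ ^ 2 := by
  have h := sq_bound' δ b (δ • x + b)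
  rw [add_sub_cancel_right, norm_smul, Real.norm_eq_abs, abs_of_pos hδ] at h
  unfold rho
  rw [div_div_div_cancel_left' _ _ (by norm_num), div_le_div_iff₀ (by positivity) (by positivity)]
  linarith

noncomputable def JJ (δ : ℝ) (b x : EuclideanSpace ℝ (Fin n)) : ℝ := δ * rho (δ • x + b) / rho x

theorem JJ_pos {δ : ℝ} (hδ : 0 < δ) (b x : EuclideanSpace ℝ (Fin n)) : 0 < JJ δ b x := by
  have hx := rho_pos x
  have hy := rho_pos (δ • x + b)
  unfold JJ; positivity

theorem JJ_cocycle (δ δ' : ℝ) (b b' x : EuclideanSpace ℝ (Fin n)) :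
    JJ δ' b' (δ • x + b) * JJ δ b x = JJ (δ' * δ) (δ' • b + b') x := by
  have hx := rho_pos x
  have hy := rho_pos (δ • x + b)
  unfold JJ
  rw [show δ' • (δ • x + b) + b' = (δ' * δ) • x + (δ' • b + b') by rw [smul_add, mul_smul, add_assoc]]
  field_simp

theorem JJ_le {δ : ℝ} (hδ : 0 < δ) (b x : EuclideanSpace ℝ (Fin n)) :
    JJ δ b x ≤ δ * ((δ ^ 2 + 2 + 2 * ‖b‖ ^ 2) / δ ^ 2) := by
  unfold JJ
  rw [mul_div_assoc]
  exact mul_le_mul_of_nonneg_left (rho_aff_le hδ b x) hδ.le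

theorem JJ_one (x : EuclideanSpace ℝ (Fin n)) : JJ 1 0 x = 1 := by
  have hx := rho_pos x
  unfold JJ; simp [hx.ne']

theorem JJ_inv {δ : ℝ} (hδ : 0 < δ) (b x : EuclideanSpace ℝ (Fin n)) :
    (JJ δ b x)⁻¹ = JJ δ⁻¹ (-(δ⁻¹ • b)) (δ • x + b) := by
  have h := JJ_cocycle δ δ⁻¹ b (-(δ⁻¹ • b)) x
  rw [inv_mul_cancel₀ hδ.ne', add_neg_cancel, JJ_one] at h
  exact (eq_inv_of_mul_eq_one_left h).symm

theorem JJ_meas (δ : ℝ) (b : EuclideanSpace ℝ (Fin n)) : Measurable (JJ δ b) := by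
  unfold JJ; fun_prop

theorem logJJ_bd {δ : ℝ} (hδ : 0 < δ) (b : EuclideanSpace ℝ (Fin n)) : Bd (fun x => Real.log (JJ δ b x)) := by
  refine ⟨(JJ_meas δ b).log, δ * ((δ ^ 2 + 2 + 2 * ‖b‖ ^ 2) / δ ^ 2) + δ⁻¹ * ((δ⁻¹ ^ 2 + 2 + 2 * ‖-(δ⁻¹ • b)‖ ^ 2) / δ⁻¹ ^ 2), fun x => ?_⟩
  have h0 := JJ_pos hδ b x
  have h1 := JJ_le hδ b x
  have h2 := JJ_le (inv_pos.2 hδ) (-(δ⁻¹ • b)) (δ • x + b)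
  rw [← JJ_inv hδ] at h2
  have h3 := Real.log_le_sub_one_of_pos h0
  have h4 := Real.log_le_sub_one_of_pos (inv_pos.2 h0)
  rw [Real.log_inv] at h4
  have h5 := inv_pos.2 h0
  refine abs_le.2 ⟨?_, ?_⟩ <;> linarith

theorem act_eq (a δ : ℝ) (b : EuclideanSpace ℝ (Fin n)) (h : EuclideanSpace ℝ (Fin n) → ℝ)
    (x : EuclideanSpace ℝ (Fin n)) : act a δ b h x = h (δ • x + b) * JJ δ b x ^ ((n:ℝ) - a) := rfl

theorem Bd.act [NeZero n] {a δ : ℝ} (ha : a < n / 2) (hδ : 0 < δ) (b : EuclideanSpace ℝ (Fin n))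
    {h : EuclideanSpace ℝ (Fin n) → ℝ} (hh : Bd h) : Bd (act a δ b h) := by
  have hn : (0:ℝ) < n := by exact_mod_cast Nat.pos_of_ne_zero (NeZero.ne n)
  have h1 : 0 < (n:ℝ) - a := by linarith
  obtain ⟨hm, M, hM⟩ := hh
  refine ⟨by unfold WFI.act; fun_prop, M * (δ * ((δ ^ 2 + 2 + 2 * ‖b‖ ^ 2) / δ ^ 2)) ^ ((n:ℝ) - a), fun x => ?_⟩
  have hJ := JJ_pos hδ b x
  rw [act_eq, abs_mul]
  refine mul_le_mul (hM _) ?_ (abs_nonneg _) ((abs_nonneg _).trans (hM x))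
  rw [abs_of_nonneg (by positivity)]
  exact Real.rpow_le_rpow hJ.le (JJ_le hδ b x) h1.le

theorem act_wt {a δ : ℝ} (hδ : 0 < δ) (b : EuclideanSpace ℝ (Fin n))
    (h : EuclideanSpace ℝ (Fin n) → ℝ) (x : EuclideanSpace ℝ (Fin n)) :
    act a δ b h x * wt a x = δ ^ ((n:ℝ) - a) * (h (δ • x + b) * wt a (δ • x + b)) := by
  have hx := rho_pos x
  have hy := rho_pos (δ • x + b)
  unfold act wt
  rw [Real.div_rpow (by positivity) hx.le, Real.mul_rpow hδ.le hy.le]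
  have : rho x ^ ((n:ℝ) - a) ≠ 0 := by positivity
  field_simp

theorem bf_act [NeZero n] {a δ : ℝ} (hδ : 0 < δ) (b : EuclideanSpace ℝ (Fin n))
    (h : EuclideanSpace ℝ (Fin n) → ℝ) : bf a (act a δ b h) (act a δ b h) = bf a h h := by
  rw [bf_vol, bf_vol]
  set G : EuclideanSpace ℝ (Fin n) × EuclideanSpace ℝ (Fin n) → ℝ :=
    fun z => (h z.1 * wt a z.1) * (h z.2 * wt a z.2) * KK a z.1 z.2 with hG
  have e : ∀ z : EuclideanSpace ℝ (Fin n) × EuclideanSpace ℝ (Fin n),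
      (act a δ b h z.1 * wt a z.1) * (act a δ b h z.2 * wt a z.2) * KK a z.1 z.2
      = δ ^ (2 * n) * G (δ • z + (b, b)) := by
    intro z
    rw [act_wt hδ, act_wt hδ]
    simp only [hG, Prod.fst_add, Prod.snd_add, Prod.smul_fst, Prod.smul_snd]
    have : KK a (δ • z.1 + b) (δ • z.2 + b) = δ ^ (-(2 * a)) * KK a z.1 z.2 := by
      unfold KK
      rw [add_sub_add_right_eq_sub, ← smul_sub, norm_smul, Real.norm_eq_abs, abs_of_pos hδ, mul_pow,
        Real.mul_rpow (by positivity) (by positivity), ← Real.rpow_natCast δ, ← Real.rpow_mul hδ.le]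
      congr 2; push_cast; ring
    rw [this]
    have e2 : δ ^ ((n:ℝ) - a) * δ ^ ((n:ℝ) - a) = δ ^ (2 * n) * δ ^ (-(2 * a)) := by
      rw [← Real.rpow_natCast, ← Real.rpow_add hδ, ← Real.rpow_add hδ]; congr 1; push_cast; ring
    linear_combination (h (δ • z.1 + b) * wt a (δ • z.1 + b) * (h (δ • z.2 + b) * wt a (δ • z.2 + b)) * KK a z.1 z.2) * e2
  simp_rw [e]
  rw [integral_const_mul, Measure.integral_comp_smul (volume.prod volume) (fun z => G (z + (b, b))),
    integral_add_right_eq_self G]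
  rw [Module.finrank_prod, finrank_euclideanSpace, Fintype.card_fin, smul_eq_mul, ← mul_assoc, ← two_mul, abs_of_pos (by positivity),
    mul_inv_cancel₀ (by positivity), one_mul]

theorem int_act [NeZero n] {a δ : ℝ} (ha : a < n / 2) (hδ : 0 < δ) (b : EuclideanSpace ℝ (Fin n))
    (h F : EuclideanSpace ℝ (Fin n) → ℝ) :
    ∫ x, F x * |act a δ b h x| ^ ((n:ℝ) / (n - a)) ∂(sig n) =
    ∫ y, F (δ⁻¹ • (y - b)) * |h y| ^ ((n:ℝ) / (n - a)) ∂(sig n) := by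
  have hn : (0:ℝ) < n := by exact_mod_cast Nat.pos_of_ne_zero (NeZero.ne n)
  have h1 : 0 < (n:ℝ) - a := by linarith
  rw [int_sig, int_sig]
  have key : ∀ (g : EuclideanSpace ℝ (Fin n) → ℝ) x, |g x| ^ ((n:ℝ) / (n - a)) * rho x ^ n = |g x * wt a x| ^ ((n:ℝ) / (n - a)) := by
    intro g x
    rw [abs_mul, Real.mul_rpow (abs_nonneg _) (abs_nonneg _), abs_of_pos (wt_pos a x), wt_rpow ha]
  simp_rw [mul_assoc, key, act_wt hδ]
  set G : EuclideanSpace ℝ (Fin n) → ℝ := fun y => F (δ⁻¹ • (y - b)) * |h y * wt a y| ^ ((n:ℝ) / (n - a)) with hG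
  have e : ∀ x, F x * |δ ^ ((n:ℝ) - a) * (h (δ • x + b) * wt a (δ • x + b))| ^ ((n:ℝ) / (n - a))
      = δ ^ n * G (δ • x + b) := by
    intro x
    simp only [hG]
    rw [add_sub_cancel_right, inv_smul_smul₀ hδ.ne', abs_mul, abs_of_pos (by positivity : 0 < δ ^ ((n:ℝ) - a)),
      Real.mul_rpow (by positivity) (abs_nonneg _), ← Real.rpow_mul hδ.le, mul_div_cancel₀ _ h1.ne', Real.rpow_natCast]
    ring
  simp_rw [e]
  rw [integral_const_mul, Measure.integral_comp_smul volume (fun z => G (z + b)), integral_add_right_eq_self G,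
    finrank_euclideanSpace, Fintype.card_fin, smul_eq_mul, ← mul_assoc, abs_of_pos (by positivity),
    mul_inv_cancel₀ (by positivity), one_mul]

theorem int_JJ [NeZero n] {δ : ℝ} (hδ : 0 < δ) (b : EuclideanSpace ℝ (Fin n)) :
    ∫ x, JJ δ b x ^ n ∂(sig n) = E0 n 0 := by
  have hn : (0:ℝ) < n := by exact_mod_cast Nat.pos_of_ne_zero (NeZero.ne n)
  have h := int_act (a := 0) (by positivity) hδ b (fun _ => 1) (fun _ => 1)
  simp only [one_mul, abs_one, Real.one_rpow, integral_const, smul_eq_mul, mul_one, sig_real] at h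
  rw [← h]
  refine integral_congr_ae (.of_forall fun x => ?_)
  have hJ := JJ_pos hδ b x
  simp only [act_eq]
  rw [sub_zero, one_mul, Real.rpow_natCast, div_self hn.ne', Real.rpow_one, abs_of_pos (by positivity)]

theorem Bd.mono_int [NeZero n] {f g : EuclideanSpace ℝ (Fin n) → ℝ} (hf : Bd f) (hg : Bd g) (h : ∀ x, f x ≤ g x) :
    ∫ x, f x ∂(sig n) ≤ ∫ x, g x ∂(sig n) :=
  integral_mono hf.integrable hg.integrable h

theorem xi_bd (i : Option (Fin n)) : Bd (xi i) :=
  ⟨(xi_contDiff i).continuous.measurable, 1, abs_xi_le i⟩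

theorem centering [NeZero n] {a : ℝ} (h0 : 0 < a) (ha : a < n / 2) {h : EuclideanSpace ℝ (Fin n) → ℝ} (hh : Bd h)
    (hN : ∫ x, |h x| ^ ((n:ℝ) / (n - a)) ∂(sig n) = 1) {t : ℝ} (ht : 0 < t) (ht1 : t ≤ 1) :
    ∃ δ > 0, ∃ b, ∀ i, |∫ x, xi i x * |act a δ b h x| ^ ((n:ℝ) / (n - a)) ∂(sig n)| ≤ 3 * t := by
  have hn : (0:ℝ) < n := by exact_mod_cast Nat.pos_of_ne_zero (NeZero.ne n)
  have h1 : 0 < (n:ℝ) - a := by linarith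
  set p := (n:ℝ) / (n - a) with hp
  have hp0 : 0 ≤ p := by positivity
  have hw : Bd (fun x => |h x| ^ p) := hh.rpow hp0
  set Φ : Set.Ioi (0:ℝ) × EuclideanSpace ℝ (Fin n) → ℝ := fun d => ∫ x, Real.log (JJ d.1 d.2 x) * |h x| ^ p ∂(sig n) with hΦ
  obtain ⟨_, M, hM⟩ := id hw
  have hbd : BddAbove (Set.range Φ) := by
    refine ⟨M * E0 n 0 / n, ?_⟩
    rintro _ ⟨⟨⟨δ, hδ⟩, b⟩, rfl⟩
    have hδ : 0 < δ := hδ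
    rw [le_div_iff₀ hn, ← int_JJ hδ b, ← integral_const_mul, ← integral_mul_const]
    have hJb : Bd (fun x => JJ δ b x ^ n) := by
      refine ⟨(JJ_meas δ b).pow_const n, (δ * ((δ ^ 2 + 2 + 2 * ‖b‖ ^ 2) / δ ^ 2)) ^ n, fun x => ?_⟩
      have hJ := JJ_pos hδ b x
      rw [abs_of_pos (by positivity)]
      exact pow_le_pow_left₀ hJ.le (JJ_le hδ b x) n
    refine integral_mono ((((logJJ_bd hδ b).mul hw).integrable).mul_const _) ((hJb.integrable).const_mul _) fun x => ?_
    have hJ := JJ_pos hδ b x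
    have e : Real.log (JJ δ b x) * n = Real.log (JJ δ b x ^ n) := by rw [Real.log_pow]; ring
    have e2 := Real.log_le_sub_one_of_pos (pow_pos hJ n)
    have e3 := hM x
    rw [abs_of_nonneg (by positivity)] at e3
    have e4 : 0 ≤ |h x| ^ p := by positivity
    calc Real.log (JJ δ b x) * |h x| ^ p * n = Real.log (JJ δ b x ^ n) * |h x| ^ p := by rw [← e]; ring
      _ ≤ JJ δ b x ^ n * |h x| ^ p := by gcongr; linarith
      _ ≤ JJ δ b x ^ n * M := by gcongr
      _ = _ := by ring
  have : Nonempty (Set.Ioi (0:ℝ) × EuclideanSpace ℝ (Fin n)) := ⟨⟨⟨1, Set.mem_Ioi.2 one_pos⟩, 0⟩⟩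
  obtain ⟨⟨⟨δ, hδ⟩, b⟩, hd⟩ := exists_lt_of_lt_ciSup (sub_lt_self (⨆ d, Φ d) (by positivity : 0 < t ^ 2))
  have hδ : 0 < δ := hδ
  refine ⟨δ⁻¹, inv_pos.2 hδ, -(δ⁻¹ • b), ?_⟩
  set g := act a δ⁻¹ (-(δ⁻¹ • b)) h with hg
  have hgb : Bd g := hh.act ha (inv_pos.2 hδ) _
  have hgw : Bd (fun x => |g x| ^ p) := hgb.rpow hp0
  have hpt : ∀ y : EuclideanSpace ℝ (Fin n), δ⁻¹⁻¹ • (y - -(δ⁻¹ • b)) = δ • y + b := by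
    intro y
    rw [inv_inv, sub_neg_eq_add, smul_add, smul_inv_smul₀ hδ.ne']
  have hgN : ∫ x, |g x| ^ p ∂(sig n) = 1 := by
    have := int_act ha (inv_pos.2 hδ) (-(δ⁻¹ • b)) h (fun _ => 1)
    simp only [one_mul] at this
    rw [← hN]; exact this
  have hvar : ∀ (d : ℝ) (hd0 : 0 < d) (c : EuclideanSpace ℝ (Fin n)), ∫ x, (1 - (JJ d c x)⁻¹) * |g x| ^ p ∂(sig n) ≤ t ^ 2 := by
    intro d hd0 c
    have hib : Bd (fun x => 1 - (JJ d c x)⁻¹) := by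
      refine ⟨by have := JJ_meas d c; fun_prop, 1 + d⁻¹ * ((d⁻¹ ^ 2 + 2 + 2 * ‖-(d⁻¹ • c)‖ ^ 2) / d⁻¹ ^ 2), fun x => ?_⟩
      have h2 := JJ_le (inv_pos.2 hd0) (-(d⁻¹ • c)) (d • x + c)
      rw [← JJ_inv hd0] at h2
      have h5 := inv_pos.2 (JJ_pos hd0 c x)
      rw [abs_le]; constructor <;> linarith
    calc _ ≤ ∫ x, Real.log (JJ d c x) * |g x| ^ p ∂(sig n) := by
          refine (hib.mul hgw).mono_int ((logJJ_bd hd0 c).mul hgw) fun x => ?_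
          have := Real.one_sub_inv_le_log_of_pos (JJ_pos hd0 c x)
          gcongr
      _ = ∫ y, Real.log (JJ d c (δ • y + b)) * |h y| ^ p ∂(sig n) := by
          rw [hg, int_act ha (inv_pos.2 hδ) (-(δ⁻¹ • b)) h (fun x => Real.log (JJ d c x))]
          simp_rw [hpt]
          rfl
      _ = Φ (⟨d * δ, mul_pos hd0 hδ⟩, d • b + c) - Φ (⟨δ, hδ⟩, b) := by
          simp only [hΦ]
          rw [← integral_sub ((logJJ_bd (mul_pos hd0 hδ) _).mul hw).integrable ((logJJ_bd hδ b).mul hw).integrable]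
          refine integral_congr_ae (.of_forall fun y => ?_)
          simp only
          rw [← JJ_cocycle, Real.log_mul (JJ_pos hd0 _ _).ne' (JJ_pos hδ _ _).ne']
          ring
      _ ≤ t ^ 2 := by
          have := le_ciSup hbd (⟨d * δ, mul_pos hd0 hδ⟩, d • b + c)
          linarith
  have hxi : ∀ i, Integrable (fun x => xi i x * |g x| ^ p) (sig n) := fun i => ((xi_bd i).mul hgw).integrable
  -- general reduction: pointwise bound
  have hred : ∀ (d : ℝ) (hd0 : 0 < d) (c : EuclideanSpace ℝ (Fin n)) (i : Option (Fin n)) (A B : ℝ),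
      (∀ x, A * xi i x - B ≤ 1 - (JJ d c x)⁻¹) → A * (∫ x, xi i x * |g x| ^ p ∂(sig n)) - B ≤ t ^ 2 := by
    intro d hd0 c i A B hAB
    refine le_trans ?_ (hvar d hd0 c)
    have hib : Bd (fun x => 1 - (JJ d c x)⁻¹) := by
      refine ⟨by have := JJ_meas d c; fun_prop, 1 + d⁻¹ * ((d⁻¹ ^ 2 + 2 + 2 * ‖-(d⁻¹ • c)‖ ^ 2) / d⁻¹ ^ 2), fun x => ?_⟩
      have h2 := JJ_le (inv_pos.2 hd0) (-(d⁻¹ • c)) (d • x + c)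
      rw [← JJ_inv hd0] at h2
      have h5 := inv_pos.2 (JJ_pos hd0 c x)
      rw [abs_le]; constructor <;> linarith
    calc _ = ∫ x, (A * (xi i x * |g x| ^ p) - B * |g x| ^ p) ∂(sig n) := by
          rw [integral_sub ((hxi i).const_mul _) (hgw.integrable.const_mul _), integral_const_mul, integral_const_mul, hgN, mul_one]
      _ ≤ _ := by
          refine integral_mono (((hxi i).const_mul _).sub (hgw.integrable.const_mul _)) (hib.mul hgw).integrable fun x => ?_
          have := mul_le_mul_of_nonneg_right (hAB x) (by positivity : 0 ≤ |g x| ^ p)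
          simp only
          linarith
  have hinv : ∀ (d : ℝ) (hd0 : 0 < d) (c x : EuclideanSpace ℝ (Fin n)), (JJ d c x)⁻¹ = rho x * (1 + ‖d • x + c‖ ^ 2) / (2 * d) := by
    intro d hd0 c x
    have hx := rho_pos x
    unfold JJ
    rw [show rho (d • x + c) = 2 / (1 + ‖d • x + c‖ ^ 2) from rfl]
    field_simp
  intro i
  cases i with
  | some i =>
    have key : ∀ u : ℝ, u ^ 2 = t ^ 2 → -u * (∫ x, xi (some i) x * |g x| ^ p ∂(sig n)) - t ^ 2 ≤ t ^ 2 := by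
      intro u hu
      refine hred 1 one_pos (EuclideanSpace.single i u) (some i) (-u) (t ^ 2) fun x => ?_
      rw [hinv 1 one_pos, one_smul]
      have e : ‖x + EuclideanSpace.single i u‖ ^ 2 = ‖x‖ ^ 2 + 2 * (u * x i) + t ^ 2 := by
        rw [norm_add_sq_real, EuclideanSpace.inner_single_right, EuclideanSpace.norm_single, Real.norm_eq_abs, sq_abs, hu]
        simp
      rw [e]
      simp only [xi]
      have := rho_normsq x
      have h3 := rho_le x
      have h4 : rho x * t ^ 2 ≤ 2 * t ^ 2 := by gcongr
      have h5 : rho x * (1 + (‖x‖ ^ 2 + 2 * (u * x i) + t ^ 2)) / (2 * 1) = 1 + u * (rho x * x i) + rho x * t ^ 2 / 2 := by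
        linear_combination this / 2
      rw [h5]; linarith
    have k1 := key t rfl
    have k2 := key (-t) (by ring)
    rw [abs_le]
    constructor <;> nlinarith
  | none =>
    have hpn : ∀ (d : ℝ) (hd0 : 0 < d), ∀ x : EuclideanSpace ℝ (Fin n),
        -((d ^ 2 - 1) / (2 * d)) * xi none x - (1 - d) ^ 2 / (2 * d) ≤ 1 - (JJ d 0 x)⁻¹ := by
      intro d hd0 x
      rw [hinv d hd0, add_zero, norm_smul, Real.norm_eq_abs, abs_of_pos hd0]
      simp only [xi]
      have := rho_normsq x
      apply le_of_eq
      field_simp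
      linear_combination d ^ 2 * this
    have k1 := hred (1 + t) (by positivity) 0 none _ _ (hpn (1 + t) (by positivity))
    have k2 := hred (1 + t)⁻¹ (by positivity) 0 none _ _ (hpn (1 + t)⁻¹ (by positivity))
    generalize (∫ x, xi none x * |g x| ^ p ∂(sig n)) = m at k1 k2 ⊢
    have e1 : ((1 + t) ^ 2 - 1) / (2 * (1 + t)) = t * (2 + t) / (2 * (1 + t)) := by congr 1; ring
    have e2 : (((1 + t)⁻¹) ^ 2 - 1) / (2 * (1 + t)⁻¹) = -(t * (2 + t) / (2 * (1 + t))) := by field_simp; ring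
    have e3 : (1 - (1 + t)) ^ 2 / (2 * (1 + t)) = t ^ 2 / (2 * (1 + t)) := by congr 1; ring
    have e4 : (1 - (1 + t)⁻¹) ^ 2 / (2 * (1 + t)⁻¹) = t ^ 2 / (2 * (1 + t)) := by field_simp; ring
    rw [e1, e3] at k1
    rw [e2, e4] at k2
    have f1 : -m * (2 + t) ≤ 5 * t := by
      have : -(t * (2 + t) / (2 * (1 + t))) * m - t ^ 2 / (2 * (1 + t)) = t * (-m * (2 + t) - t) / (2 * (1 + t)) := by ring
      rw [this, div_le_iff₀ (by positivity)] at k1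
      nlinarith
    have f2 : m * (2 + t) ≤ 5 * t := by
      have : - -(t * (2 + t) / (2 * (1 + t))) * m - t ^ 2 / (2 * (1 + t)) = t * (m * (2 + t) - t) / (2 * (1 + t)) := by ring
      rw [this, div_le_iff₀ (by positivity)] at k2
      nlinarith
    rw [abs_le]
    constructor <;> nlinarith

end WFI

namespace WFI
variable {n : ℕ}

theorem taylor_rpow {r η : ℝ} (hr : 1 < r) (hη : 0 < η) :
    ∃ ε > 0, ∀ y, |y| ≤ ε → 0 ≤ 1 + y ∧ (1 + y) ^ r ≤ 1 + r * y + (r * (r - 1) / 2 + η) * y ^ 2 := by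
  set φ : ℝ → ℝ := fun y => 1 + r * y + (r * (r - 1) / 2 + η) * y ^ 2 - (1 + y) ^ r with hφ
  have hd : ∀ y, -1 < y → HasDerivAt φ (r + (r * (r - 1) / 2 + η) * (2 * y) - r * (1 + y) ^ (r - 1)) y := by
    intro y hy
    have h1 : HasDerivAt (fun y : ℝ => (1 + y) ^ r) (r * (1 + y) ^ (r - 1)) y := by
      have := ((hasDerivAt_id y).const_add 1).rpow_const (p := r) (Or.inl (by simp; linarith))
      simpa using this
    have h2 : HasDerivAt (fun y : ℝ => 1 + r * y) r y := by
      simpa using ((hasDerivAt_id y).const_mul r).const_add 1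
    have h3 : HasDerivAt (fun y : ℝ => (r * (r - 1) / 2 + η) * y ^ 2) ((r * (r - 1) / 2 + η) * (2 * y)) y := by
      simpa using (hasDerivAt_pow 2 y).const_mul (r * (r - 1) / 2 + η)
    exact (h2.add h3).sub h1
  have hd2 : HasDerivAt (fun y : ℝ => r + (r * (r - 1) / 2 + η) * (2 * y) - r * (1 + y) ^ (r - 1)) (2 * η) 0 := by
    have h1 : HasDerivAt (fun y : ℝ => (1 + y) ^ (r - 1)) (r - 1) 0 := by
      have := ((hasDerivAt_id (0:ℝ)).const_add 1).rpow_const (p := r - 1) (Or.inl (by simp))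
      simpa using this
    have h3 : HasDerivAt (fun y : ℝ => r + (r * (r - 1) / 2 + η) * (2 * y)) ((r * (r - 1) / 2 + η) * 2) 0 := by
      simpa using (((hasDerivAt_id (0:ℝ)).const_mul 2).const_mul (r * (r - 1) / 2 + η)).const_add r
    exact (h3.sub (h1.const_mul r)).congr_deriv (by ring)
  have hev : deriv φ =ᶠ[nhds 0] fun y : ℝ => r + (r * (r - 1) / 2 + η) * (2 * y) - r * (1 + y) ^ (r - 1) := by
    filter_upwards [lt_mem_nhds (show (-1:ℝ) < 0 by norm_num)] with y hy using (hd y hy).deriv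
  have hmin : IsLocalMin φ 0 := by
    refine isLocalMin_of_deriv_deriv_pos ?_ ?_ (hd 0 (by norm_num)).continuousAt
    · rw [hev.deriv_eq, hd2.deriv]; positivity
    · rw [(hd 0 (by norm_num)).deriv]; simp
  obtain ⟨ε, hε, hb⟩ := Metric.eventually_nhds_iff.1 hmin
  refine ⟨min (ε / 2) 1, by positivity, fun y hy => ⟨?_, ?_⟩⟩
  · have := (abs_le.1 (hy.trans (min_le_right _ _))).1; linarith
  · have := hb (y := y) (by rw [Real.dist_eq, sub_zero]; exact (hy.trans (min_le_left _ _)).trans_lt (by linarith))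
    simp only [hφ] at this
    norm_num at this
    linarith

theorem holder_one [NeZero n] {p : ℝ} (hp : 1 < p) {h : EuclideanSpace ℝ (Fin n) → ℝ} (hh : Bd h)
    (hN : ∫ x, |h x| ^ p ∂(sig n) = 1) : (∫ x, h x ∂(sig n)) ^ 2 ≤ E0 n 0 ^ (2 - 2 / p) := by
  have hE : 0 < E0 n 0 := E0_pos (by have := Nat.pos_of_ne_zero (NeZero.ne n); positivity)
  have hpq := Real.HolderConjugate.conjExponent hp
  have hc : Bd (n := n) (fun _ => (1:ℝ)) := ⟨measurable_const, 1, fun x => by simp⟩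
  have := integral_mul_le_Lp_mul_Lq_of_nonneg hpq (μ := sig n) (f := fun x => |h x|) (g := fun _ => 1)
    (.of_forall fun x => abs_nonneg _) (.of_forall fun x => zero_le_one) (hh.abs.memLp _) (hc.memLp _)
  simp only [mul_one, hN, Real.one_rpow, one_mul, integral_const, smul_eq_mul, sig_real] at this
  have h2 : |∫ x, h x ∂(sig n)| ≤ E0 n 0 ^ (1 / p.conjExponent) := abs_integral_le_integral_abs.trans this
  rw [← sq_abs]
  calc _ ≤ (E0 n 0 ^ (1 / p.conjExponent)) ^ 2 := by gcongr
    _ = _ := by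
      rw [← Real.rpow_natCast, ← Real.rpow_mul hE.le]
      congr 1
      have := hpq.inv_add_inv_eq_one
      push_cast
      rw [one_div, eq_sub_of_add_eq' this]; ring

theorem hom_bound [NeZero n] {a p S : ℝ} (hp : 1 < p)
    (hS : ∀ h : EuclideanSpace ℝ (Fin n) → ℝ, Bd h → ∫ x, |h x| ^ p ∂(sig n) = 1 → bf a h h ≤ S)
    {h : EuclideanSpace ℝ (Fin n) → ℝ} (hh : Bd h) :
    bf a h h ≤ S * (∫ x, |h x| ^ p ∂(sig n)) ^ (2 / p) := by
  have hnn : 0 ≤ ∫ x, |h x| ^ p ∂(sig n) := integral_nonneg fun x => by positivity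
  set I := ∫ x, |h x| ^ p ∂(sig n) with hI
  have hp0 : 0 < p := by linarith
  rcases hnn.eq_or_lt with h0 | h0
  · have hz := (integral_eq_zero_iff_of_nonneg (fun x => by positivity) (hh.rpow hp0.le).integrable).1 h0.symm
    have hz' : h =ᵐ[sig n] (0:ℝ) • h := by
      filter_upwards [hz] with x hx
      simp only [Pi.zero_apply] at hx
      have := (Real.rpow_eq_zero (abs_nonneg _) hp0.ne').1 hx
      simpa using this
    rw [bf_congr hz' hz', bf_smul_left, ← h0, Real.zero_rpow (by positivity)]
    simp
  · set c := I ^ (-1 / p) with hc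
    have hc0 : 0 < c := by positivity
    have e : Bd (c • h) := ⟨hh.1.const_smul c, by
      obtain ⟨_, M, hM⟩ := hh
      exact ⟨c * M, fun x => by simp [abs_mul, abs_of_pos hc0]; gcongr; exact hM x⟩⟩
    have e2 := hS _ e (by
      simp only [Pi.smul_apply, smul_eq_mul, abs_mul, abs_of_pos hc0]
      simp_rw [Real.mul_rpow hc0.le (abs_nonneg _)]
      rw [integral_const_mul, ← hI, hc, ← Real.rpow_mul h0.le, div_mul_cancel₀ _ hp0.ne', Real.rpow_neg_one, inv_mul_cancel₀ h0.ne'])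
    rw [bf_smul_left, bf_smul_right] at e2
    have e3 : c * c * I ^ (2 / p) = 1 := by
      rw [hc, ← Real.rpow_add h0, ← Real.rpow_add h0]
      ring_nf; simp
    calc bf a h h = (c * (c * bf a h h)) * I ^ (2 / p) := by linear_combination -(bf a h h) * e3
      _ ≤ _ := by gcongr

/-- second variation estimate -/
theorem second_var [NeZero n] {a p S ε η ε0 ε1 : ℝ} (ha : a < n / 2) (hp : 1 < p) (hp2 : p < 2) (hS0 : 0 ≤ S)
    (hS : ∀ h : EuclideanSpace ℝ (Fin n) → ℝ, Bd h → ∫ x, |h x| ^ p ∂(sig n) = 1 → bf a h h ≤ S)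
    (hη : 0 < η) (hη1 : η ≤ 1) (hε : 0 < ε) (hε' : ε ≤ 1)
    (hε0 : ε ≤ ε0) (hε1 : 4 * ε ^ 2 ≤ ε1)
    (hT0 : ∀ y, |y| ≤ ε0 → 0 ≤ 1 + y ∧ (1 + y) ^ p ≤ 1 + p * y + (p * (p - 1) / 2 + η) * y ^ 2)
    (hT1 : ∀ y, |y| ≤ ε1 → 0 ≤ 1 + y ∧ (1 + y) ^ (2 / p) ≤ 1 + (2 / p) * y + ((2 / p) * (2 / p - 1) / 2 + 1) * y ^ 2)
    {h : EuclideanSpace ℝ (Fin n) → ℝ} (hh : Bd h) (hN : ∫ x, |h x| ^ p ∂(sig n) = 1)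
    (hQ : S - ε ^ 4 ≤ bf a h h) (i : Option (Fin n))
    (hm : |∫ x, xi i x * |h x| ^ p ∂(sig n)| ≤ ε ^ 2) :
    bf a (xi i * h) (xi i * h) ≤
      ε ^ 2 + S * ((p - 1 + 2 * η) * (∫ x, xi i x ^ 2 * |h x| ^ p ∂(sig n)) + 32 * ε ^ 2) := by
  have hp0 : 0 < p := by linarith
  have hw : Bd (fun x => |h x| ^ p) := hh.rpow hp0.le
  have hx1 : Integrable (fun x => xi i x * |h x| ^ p) (sig n) := ((xi_bd i).mul hw).integrable
  have hx2 : Integrable (fun x => xi i x ^ 2 * |h x| ^ p) (sig n) := by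
    have := (((xi_bd i).mul (xi_bd i)).mul hw).integrable
    simpa only [sq] using this
  have hxh : Bd (xi i * h) := (xi_bd i).mul hh
  set m := ∫ x, xi i x * |h x| ^ p ∂(sig n) with hmd
  set v := ∫ x, xi i x ^ 2 * |h x| ^ p ∂(sig n) with hv
  have hxi2 : ∀ x, xi i x ^ 2 ≤ 1 := fun x => by
    have := abs_xi_le i x
    rw [← sq_abs]; exact pow_le_one₀ (abs_nonneg _) this
  have hv0 : 0 ≤ v := integral_nonneg fun x => by positivity
  have hv1 : v ≤ 1 := by
    rw [← hN]
    refine integral_mono hx2 hw.integrable fun x => ?_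
    have := mul_le_mul_of_nonneg_right (hxi2 x) (by positivity : 0 ≤ |h x| ^ p)
    simpa using this
  set C := p * (p - 1) / 2 + η with hC
  have hC0 : 0 ≤ C := by have : 0 ≤ p * (p - 1) / 2 := by nlinarith
                         linarith
  have hC2 : C ≤ 2 := by nlinarith
  have hr2 : (2 / p) * (2 / p - 1) / 2 + 1 ≤ 2 := by
    have : 2 / p ≤ 2 := by rw [div_le_iff₀ hp0]; linarith
    have : 0 < 2 / p := by positivity
    nlinarith
  have key : ∀ u : ℝ, |u| = ε → bf a h h + 2 * u * bf a h (xi i * h) + u ^ 2 * bf a (xi i * h) (xi i * h)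
      ≤ S * (1 + (2 / p) * (p * u * m + C * ε ^ 2 * v) + 32 * ε ^ 4) := by
    intro u hu
    have hg : Bd (h + u • (xi i * h)) := by
      refine ⟨hh.1.add (hxh.1.const_smul u), ?_⟩
      obtain ⟨_, M, hM⟩ := hh
      refine ⟨M + |u| * M, fun x => ?_⟩
      simp only [Pi.add_apply, Pi.smul_apply, Pi.mul_apply, smul_eq_mul]
      refine (abs_add_le _ _).trans ?_
      have : |u * (xi i x * h x)| ≤ |u| * M := by
        rw [abs_mul, abs_mul]
        gcongr
        calc _ ≤ 1 * M := mul_le_mul (abs_xi_le i x) (hM x) (abs_nonneg _) zero_le_one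
          _ = M := one_mul M
      have := hM x
      linarith
    have h1 := hom_bound hp hS hg
    have h2 := hh.memLp 2
    have h3 := hxh.memLp 2
    have h4 : MemLp (u • (xi i * h)) 2 (sig n) := h3.const_smul u
    rw [bf_add_left ha h2 h4 (h2.add h4), bf_add_right ha h2 h2 h4, bf_add_right ha h4 h2 h4, bf_smul_left, bf_smul_left,
      bf_smul_right, bf_smul_right, bf_symm a (xi i * h) h] at h1
    have hX : |p * u * m + C * ε ^ 2 * v| ≤ 4 * ε ^ 2 := by
      refine (abs_add_le _ _).trans ?_
      rw [abs_mul, abs_mul, hu, abs_of_pos hp0, abs_of_nonneg (by positivity : 0 ≤ C * ε ^ 2 * v)]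
      have e1 : p * ε * |m| ≤ 2 * 1 * ε ^ 2 := by gcongr
      have e2 : C * ε ^ 2 * v ≤ 2 * ε ^ 2 * 1 := by gcongr
      linarith
    have hI : ∫ x, |(h + u • (xi i * h)) x| ^ p ∂(sig n) ≤ 1 + (p * u * m + C * ε ^ 2 * v) := by
      have : 1 + (p * u * m + C * ε ^ 2 * v) = ∫ x, (|h x| ^ p + (p * u * (xi i x * |h x| ^ p) + C * ε ^ 2 * (xi i x ^ 2 * |h x| ^ p))) ∂(sig n) := by
        have hsi : Integrable (fun x => p * u * (xi i x * |h x| ^ p) + C * ε ^ 2 * (xi i x ^ 2 * |h x| ^ p)) (sig n) :=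
          (hx1.const_mul _).add (hx2.const_mul _)
        rw [integral_add hw.integrable hsi, integral_add (hx1.const_mul _) (hx2.const_mul _),
          integral_const_mul, integral_const_mul, hN]
      rw [this]
      refine integral_mono (hg.rpow hp0.le).integrable (hw.integrable.add ((hx1.const_mul _).add (hx2.const_mul _))) fun x => ?_
      obtain ⟨t1, t2⟩ := hT0 (u * xi i x) (by
        rw [abs_mul, hu]
        calc _ ≤ ε * 1 := by gcongr; exact abs_xi_le i x
          _ ≤ _ := by linarith)
      have e : (h + u • (xi i * h)) x = h x * (1 + u * xi i x) := by simp; ring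
      simp only [e]
      rw [abs_mul, abs_of_nonneg t1, Real.mul_rpow (abs_nonneg _) t1]
      have := mul_le_mul_of_nonneg_left t2 (by positivity : 0 ≤ |h x| ^ p)
      rw [mul_pow, ← sq_abs u, hu] at this
      linarith
    have hI0 : 0 ≤ ∫ x, |(h + u • (xi i * h)) x| ^ p ∂(sig n) := integral_nonneg fun x => by positivity
    have h5 : (∫ x, |(h + u • (xi i * h)) x| ^ p ∂(sig n)) ^ (2 / p) ≤ 1 + (2 / p) * (p * u * m + C * ε ^ 2 * v) + 32 * ε ^ 4 := by
      refine (Real.rpow_le_rpow hI0 hI (by positivity)).trans ?_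
      refine (hT1 _ (hX.trans hε1)).2.trans ?_
      have e1 : (p * u * m + C * ε ^ 2 * v) ^ 2 ≤ (4 * ε ^ 2) ^ 2 := by rw [← sq_abs]; gcongr
      have e2 : ((2 / p) * (2 / p - 1) / 2 + 1) * (p * u * m + C * ε ^ 2 * v) ^ 2 ≤ 2 * (4 * ε ^ 2) ^ 2 :=
        mul_le_mul hr2 e1 (sq_nonneg _) (by norm_num)
      nlinarith
    have h6 := mul_le_mul_of_nonneg_left h5 hS0
    linarith
  have k1 := key ε (abs_of_pos hε)
  have k2 := key (-ε) (by rw [abs_neg, abs_of_pos hε])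
  have h7 : 2 * ε ^ 2 * bf a (xi i * h) (xi i * h) ≤ 2 * ε ^ 2 *
      (ε ^ 2 + S * ((2 / p) * C * v + 32 * ε ^ 2)) := by
    nlinarith
  have h8 := le_of_mul_le_mul_left h7 (by positivity)
  refine h8.trans ?_
  have h9 : 2 / p * C ≤ p - 1 + 2 * η := by
    rw [hC, div_mul_eq_mul_div, div_le_iff₀ hp0]
    nlinarith
  gcongr

set_option maxHeartbeats 2000000 in
theorem sharp_HLS [NeZero n] {a : ℝ} (h0 : 0 < a) (ha : a < n / 2) {h : EuclideanSpace ℝ (Fin n) → ℝ} (hh : Bd h) :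
    bf a h h ≤ E0 n a * E0 n 0 ^ (1 - 2 / ((n:ℝ) / (n - a))) *
      (∫ x, |h x| ^ ((n:ℝ) / (n - a)) ∂(sig n)) ^ (2 / ((n:ℝ) / (n - a))) := by
  have hn : (0:ℝ) < n := by exact_mod_cast Nat.pos_of_ne_zero (NeZero.ne n)
  have h1 : 0 < (n:ℝ) - a := by linarith
  set p := (n:ℝ) / (n - a) with hp
  have hp1 : 1 < p := by rw [hp, one_lt_div h1]; linarith
  have hp2 : p < 2 := by rw [hp, div_lt_iff₀ h1]; linarith
  have hE : 0 < E0 n 0 := E0_pos (by positivity)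
  have hEa : 0 < E0 n a := E0_pos ha
  set T : Set ℝ := {r | ∃ h : EuclideanSpace ℝ (Fin n) → ℝ, Bd h ∧ ∫ x, |h x| ^ p ∂(sig n) = 1 ∧ bf a h h = r} with hT
  have hTb : BddAbove T := by
    refine ⟨2 * (1 + c0 n a), ?_⟩
    rintro _ ⟨h, hh, hN, rfl⟩
    exact nonsharp h0 ha hh hN
  have hTne : T.Nonempty := by
    refine ⟨_, fun _ => E0 n 0 ^ (-1 / p), ⟨measurable_const, E0 n 0 ^ (-1 / p), fun x => by rw [abs_of_pos (by positivity)]⟩, ?_, rfl⟩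
    have hp0 : 0 < p := by linarith
    rw [integral_const, sig_real, abs_of_pos (by positivity), ← Real.rpow_mul hE.le, div_mul_cancel₀ _ hp0.ne', Real.rpow_neg_one,
      smul_eq_mul, mul_inv_cancel₀ hE.ne']
  set S := sSup T with hSdef
  have hS : ∀ h : EuclideanSpace ℝ (Fin n) → ℝ, Bd h → ∫ x, |h x| ^ p ∂(sig n) = 1 → bf a h h ≤ S :=
    fun h hh hN => le_csSup hTb ⟨h, hh, hN, rfl⟩
  suffices hC : S ≤ E0 n a * E0 n 0 ^ (1 - 2 / p) by
    refine (hom_bound hp1 hS hh).trans ?_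
    have : 0 ≤ ∫ x, |h x| ^ p ∂(sig n) := integral_nonneg fun x => by positivity
    gcongr
  by_contra! hlt
  set Cs := E0 n a * E0 n 0 ^ (1 - 2 / p) with hCs
  have hCs0 : 0 < Cs := by positivity
  have hS0 : 0 < S := hCs0.trans hlt
  set τ := ((n:ℝ) - 2 * a) / (n - a) with hτ
  have hτ0 : 0 < τ := div_pos (by linarith) h1
  have hτp : 1 - τ = p - 1 := by rw [hτ, hp]; field_simp; ring
  set c := τ / (n - a + 1) with hc
  have hc0 : 0 < c := by positivity
  set D := c * (S - Cs) with hD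
  have hD0 : 0 < D := mul_pos hc0 (by linarith)
  set η := min 1 (D / (8 * S)) with hη
  have hη0 : 0 < η := by positivity
  have hηS : 2 * η * S ≤ D / 4 := by
    have : η ≤ D / (8 * S) := min_le_right _ _
    rw [le_div_iff₀ (by positivity)] at this
    linarith
  obtain ⟨ε0, hε0, hT0⟩ := taylor_rpow hp1 hη0
  obtain ⟨ε1, hε1, hT1⟩ := taylor_rpow (r := 2 / p) (by rw [one_lt_div (by linarith)]; exact hp2) one_pos
  set K := ((n:ℝ) + 1) * (1 + 32 * S) + (p - 1 + c) with hK
  have hK0 : 0 < K := by have : 0 < p - 1 := by linarith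
                         positivity
  set ε := min (min 1 ε0) (min (ε1 / 4) (D / (4 * K))) with hε
  have hεp : 0 < ε := by positivity
  have hεa : ε ≤ 1 := (min_le_left _ _).trans (min_le_left _ _)
  have hεb : ε ≤ ε0 := (min_le_left _ _).trans (min_le_right _ _)
  have hεc : ε ≤ ε1 / 4 := (min_le_right _ _).trans (min_le_left _ _)
  have hεd : ε ≤ D / (4 * K) := (min_le_right _ _).trans (min_le_right _ _)
  have hsq : ε ^ 2 ≤ ε := by nlinarith
  have hε4 : ε ^ 4 ≤ ε ^ 2 := by nlinarith [sq_nonneg ε]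
  obtain ⟨_, ⟨g, hg, hgN, rfl⟩, hgQ⟩ := exists_lt_of_lt_csSup hTne (sub_lt_self S (by positivity : 0 < ε ^ 4))
  obtain ⟨δ, hδ, b, hcen⟩ := centering h0 ha hg hgN (t := ε ^ 2 / 3) (by positivity) (by linarith)
  set f := act a δ b g with hf
  have hfb : Bd f := hg.act ha hδ b
  have hfQ : bf a f f = bf a g g := bf_act hδ b g
  have hfN : ∫ x, |f x| ^ p ∂(sig n) = 1 := by
    have := int_act ha hδ b g (fun _ => 1)
    simp only [one_mul] at this
    rw [← hgN]; exact this
  have hI := I1 h0 ha (hfb.memLp 2)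
  simp only at hI
  rw [← hτ, ← hc, hτp] at hI
  have hsum : ∑ i, bf a (xi i * f) (xi i * f) ≤ (n + 1) * ε ^ 2 * (1 + 32 * S) + S * (p - 1 + 2 * η) := by
    have hw : Bd (fun x => |f x| ^ p) := hfb.rpow (by linarith)
    have hv : ∑ i, ∫ x, xi i x ^ 2 * |f x| ^ p ∂(sig n) = 1 := by
      rw [← integral_finsetSum]
      · simp_rw [← Finset.sum_mul, sum_xi_sq, one_mul]; exact hfN
      · intro i _
        have := (((xi_bd i).mul (xi_bd i)).mul hw).integrable
        simpa only [sq] using this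
    calc _ ≤ ∑ i : Option (Fin n), (ε ^ 2 + S * ((p - 1 + 2 * η) * (∫ x, xi i x ^ 2 * |f x| ^ p ∂(sig n)) + 32 * ε ^ 2)) := by
          refine Finset.sum_le_sum fun i _ => ?_
          refine second_var ha hp1 hp2 hS0.le hS hη0 (min_le_left _ _) hεp hεa hεb (by linarith) hT0 hT1 hfb hfN (by linarith) i ?_
          have := hcen i
          linarith
      _ = _ := by
          rw [Finset.sum_add_distrib, ← Finset.mul_sum, Finset.sum_add_distrib, ← Finset.mul_sum, hv]
          simp only [Finset.sum_const, Finset.card_univ, Fintype.card_option, Fintype.card_fin, nsmul_eq_mul]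
          push_cast; ring
  have hH := holder_one hp1 hfb hfN
  have hE2 : E0 n a / E0 n 0 * (∫ x, f x ∂(sig n)) ^ 2 ≤ Cs := by
    calc _ ≤ E0 n a / E0 n 0 * E0 n 0 ^ (2 - 2 / p) := by gcongr
      _ = _ := by
        rw [hCs, show 2 - 2 / p = 1 + (1 - 2 / p) by ring, Real.rpow_add hE, Real.rpow_one]
        field_simp
  have hfin : D ≤ 2 * η * S + K * ε ^ 2 := by
    have e1 : (p - 1 + c) * (S - ε ^ 2) ≤ (p - 1 + c) * bf a f f := by
      apply mul_le_mul_of_nonneg_left _ (by linarith)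
      linarith
    have e2 := mul_le_mul_of_nonneg_left hE2 hc0.le
    rw [hK, hD]
    nlinarith
  have : K * ε ^ 2 ≤ D / 4 := by
    have : ε ^ 2 ≤ D / (4 * K) := hsq.trans hεd
    rw [le_div_iff₀ (by positivity)] at this
    linarith
  linarith

end WFI

namespace WFI
variable {n : ℕ}

theorem lint_gamma_inv {r b : ℝ} (hr : 0 < r) (hb : 0 < b) :
    ∫⁻ t in Set.Ioi 0, ENNReal.ofReal (t ^ (-r - 1) * rexp (-(b / t))) = ENNReal.ofReal (Gamma r * b ^ (-r)) := by
  rw [← lint_gamma hr hb]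
  have himg : (fun x : ℝ => x⁻¹) '' Set.Ioi 0 = Set.Ioi 0 := by
    ext y
    simp only [Set.mem_image, Set.mem_Ioi]
    constructor
    · rintro ⟨x, hx, rfl⟩; positivity
    · intro hy; exact ⟨y⁻¹, by positivity, inv_inv y⟩
  have h := lintegral_image_eq_lintegral_abs_deriv_mul (s := Set.Ioi 0) (f := fun x : ℝ => x⁻¹) (f' := fun x => -(x ^ 2)⁻¹)
    measurableSet_Ioi (fun x hx => (hasDerivAt_inv (ne_of_gt hx)).hasDerivWithinAt) (fun x _ y _ hxy => inv_injective hxy)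
    (fun t => ENNReal.ofReal (t ^ (r - 1) * rexp (-(b * t))))
  rw [himg] at h
  rw [h]
  refine setLIntegral_congr_fun measurableSet_Ioi fun t ht => ?_
  have ht : 0 < t := ht
  rw [← ENNReal.ofReal_mul (abs_nonneg _), abs_neg, abs_of_pos (by positivity)]
  congr 1
  rw [← mul_assoc, div_eq_mul_inv]
  congr 1
  rw [Real.inv_rpow ht.le, ← Real.rpow_neg ht.le, ← Real.rpow_natCast, ← Real.rpow_neg ht.le, ← Real.rpow_add ht]
  congr 1; push_cast; ring

theorem Dec.integrable [NeZero n] {a : ℝ} (ha : a < n / 2) {G : EuclideanSpace ℝ (Fin n) → ℝ} (hG : Dec a G) :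
    Integrable G := by
  obtain ⟨hm, C, hC⟩ := hG
  have h1 : Integrable (wt (n := n) a) := by
    have := (integrable_rpow_neg_one_add_norm_sq (E := EuclideanSpace ℝ (Fin n)) (μ := volume) (r := 2 * ((n:ℝ) - a))
      (by rw [finrank_euclideanSpace, Fintype.card_fin]; linarith)).const_mul (2 ^ ((n:ℝ) - a))
    refine this.congr (.of_forall fun x => ?_)
    simp only [wt, rho]
    rw [Real.div_rpow (by norm_num) (by positivity), div_eq_mul_inv (2 ^ ((n:ℝ) - a)), ← Real.rpow_neg (by positivity)]
    congr 2; ring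
  refine (h1.const_mul C).mono hm.aestronglyMeasurable (.of_forall fun x => ?_)
  rw [Real.norm_eq_abs, Real.norm_eq_abs]
  exact (hC x).trans (le_abs_self _)

noncomputable def hat (G : EuclideanSpace ℝ (Fin n) → ℝ) (ξ : EuclideanSpace ℝ (Fin n)) : ℂ := 𝓕 (fun x => (G x : ℂ)) ξ

theorem hat_cont {G : EuclideanSpace ℝ (Fin n) → ℝ} (hG : Integrable G) : Continuous (hat G) := by
  have := VectorFourier.fourierIntegral_continuous (V := EuclideanSpace ℝ (Fin n)) (W := EuclideanSpace ℝ (Fin n)) Real.continuous_fourierChar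
    (L := innerₗ (EuclideanSpace ℝ (Fin n))) (by exact continuous_inner) (hG.ofReal (𝕜 := ℂ))
  exact this

theorem hat_le {G : EuclideanSpace ℝ (Fin n) → ℝ} (ξ : EuclideanSpace ℝ (Fin n)) : ‖hat G ξ‖ ≤ ∫ x, ‖G x‖ := by
  unfold hat
  rw [Real.fourier_eq']
  refine (norm_integral_le_integral_norm _).trans (le_of_eq ?_)
  congr 1; ext x
  rw [norm_smul, Complex.norm_exp_ofReal_mul_I, one_mul, Complex.norm_real]

theorem hat_sq {G : EuclideanSpace ℝ (Fin n) → ℝ} (ξ : EuclideanSpace ℝ (Fin n)) :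
    ((‖hat G ξ‖ ^ 2 : ℝ) : ℂ) = ∫ z : EuclideanSpace ℝ (Fin n) × EuclideanSpace ℝ (Fin n),
      Complex.exp (↑(-2 * π * inner ℝ ξ (z.1 - z.2)) * Complex.I) * ((G z.1 * G z.2 : ℝ) : ℂ) := by
  have h1 : ((‖hat G ξ‖ ^ 2 : ℝ) : ℂ) = hat G ξ * (starRingEnd ℂ) (hat G ξ) := by
    rw [Complex.mul_conj, Complex.normSq_eq_norm_sq]
  rw [h1]
  unfold hat
  rw [Real.fourier_eq', ← integral_conj]
  change _ = ∫ z : EuclideanSpace ℝ (Fin n) × EuclideanSpace ℝ (Fin n), _ ∂(volume.prod volume)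
  rw [← integral_prod_mul]
  congr 1; ext z
  simp only [smul_eq_mul, map_mul, Complex.conj_ofReal]
  rw [← Complex.exp_conj, map_mul, Complex.conj_I, Complex.conj_ofReal, inner_sub_right, real_inner_comm z.1 ξ, real_inner_comm z.2 ξ]
  have : Complex.exp (↑(-2 * π * (inner ℝ z.1 ξ - inner ℝ z.2 ξ)) * Complex.I) =
    Complex.exp (↑(-2 * π * (inner ℝ z.1 ξ)) * Complex.I) * Complex.exp (↑(-2 * π * (inner ℝ z.2 ξ)) * -Complex.I) := by
    rw [← Complex.exp_add]; congr 1; push_cast; ring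
  rw [this]; push_cast; ring

theorem gauss_id {G : EuclideanSpace ℝ (Fin n) → ℝ} (hG : Integrable G) {t : ℝ} (ht : 0 < t) :
    ∫ ξ, rexp (-(π * ‖ξ‖ ^ 2 / t)) * ‖hat G ξ‖ ^ 2 = t ^ ((n:ℝ) / 2) *
      ∫ z : EuclideanSpace ℝ (Fin n) × EuclideanSpace ℝ (Fin n), G z.1 * G z.2 * rexp (-(π * ‖z.1 - z.2‖ ^ 2 * t)) := by
  have hπ := Real.pi_pos
  have hgi : Integrable (fun ξ : EuclideanSpace ℝ (Fin n) => rexp (-(π * ‖ξ‖ ^ 2 / t))) := by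
    have := GaussianFourier.integrable_cexp_neg_mul_sq_norm_add (V := EuclideanSpace ℝ (Fin n)) (b := ((π / t : ℝ) : ℂ)) (by
      rw [Complex.ofReal_re]; positivity) 0 0
    refine this.re.congr (.of_forall fun ξ => ?_)
    simp only [zero_mul, add_zero]
    rw [show -((π / t : ℝ) : ℂ) * (‖ξ‖:ℂ) ^ 2 = ((-(π * ‖ξ‖ ^ 2 / t) : ℝ) : ℂ) by push_cast; ring, ← Complex.ofReal_exp]
    exact Complex.ofReal_re _
  have hgf : ∀ w : EuclideanSpace ℝ (Fin n), ∫ ξ : EuclideanSpace ℝ (Fin n), Complex.exp (↑(-2 * π * inner ℝ ξ w) * Complex.I) * ((rexp (-(π * ‖ξ‖ ^ 2 / t)) : ℝ) : ℂ)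
      = ((t ^ ((n:ℝ) / 2) * rexp (-(π * ‖w‖ ^ 2 * t)) : ℝ) : ℂ) := by
    intro w
    have := fourier_gaussian_innerProductSpace (V := EuclideanSpace ℝ (Fin n)) (b := ((π / t : ℝ) : ℂ)) (by
      rw [Complex.ofReal_re]; positivity) w
    rw [Real.fourier_eq'] at this
    convert this using 1
    · congr 1; ext ξ
      rw [smul_eq_mul]; congr 1
      push_cast; congr 1; ring
    · rw [finrank_euclideanSpace, Fintype.card_fin]
      push_cast
      rw [Complex.ofReal_cpow ht.le]
      congr 1
      · rw [div_div_cancel₀ (by exact_mod_cast hπ.ne')]; push_cast; rfl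
      · congr 1
        have h1 : (π:ℂ) ≠ 0 := by exact_mod_cast hπ.ne'
        have h2 : (t:ℂ) ≠ 0 := by exact_mod_cast ht.ne'
        field_simp
  have hGG : Integrable (fun z : EuclideanSpace ℝ (Fin n) × EuclideanSpace ℝ (Fin n) => ((G z.1 * G z.2 : ℝ) : ℂ)) (volume.prod volume) :=
    (hG.mul_prod hG).ofReal
  have hprod : Integrable (Function.uncurry fun (ξ : EuclideanSpace ℝ (Fin n)) (z : EuclideanSpace ℝ (Fin n) × EuclideanSpace ℝ (Fin n)) =>
      ((rexp (-(π * ‖ξ‖ ^ 2 / t)) : ℝ) : ℂ) * (Complex.exp (↑(-2 * π * inner ℝ ξ (z.1 - z.2)) * Complex.I) * ((G z.1 * G z.2 : ℝ) : ℂ)))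
      (volume.prod (volume.prod volume)) := by
    have h1 := (hgi.ofReal (𝕜 := ℂ)).mul_prod hGG
    have h2 : Continuous (fun q : EuclideanSpace ℝ (Fin n) × EuclideanSpace ℝ (Fin n) × EuclideanSpace ℝ (Fin n) =>
      Complex.exp (↑(-2 * π * inner ℝ q.1 (q.2.1 - q.2.2)) * Complex.I)) := by fun_prop
    refine (h1.bdd_mul (c := 1) h2.aestronglyMeasurable (.of_forall fun q => ?_)).congr (.of_forall fun q => ?_)
    · rw [Complex.norm_exp_ofReal_mul_I]
    · simp only [Function.uncurry, Complex.coe_algebraMap]; ring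
  apply Complex.ofReal_injective
  rw [← integral_complex_ofReal]
  simp_rw [Complex.ofReal_mul _ (‖hat G _‖ ^ 2), hat_sq, ← integral_const_mul]
  change ∫ ξ, ∫ z, _ ∂(volume.prod volume) = _
  rw [integral_integral_swap hprod]
  rw [← integral_complex_ofReal]
  congr 1; ext z
  have := hgf (z.1 - z.2)
  calc _ = ∫ ξ : EuclideanSpace ℝ (Fin n), ((G z.1 * G z.2 : ℝ) : ℂ) * (Complex.exp (↑(-2 * π * inner ℝ ξ (z.1 - z.2)) * Complex.I) * ((rexp (-(π * ‖ξ‖ ^ 2 / t)) : ℝ) : ℂ)) := by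
        congr 1; ext ξ; ring
    _ = _ := by
        rw [integral_const_mul, this]; push_cast; ring

theorem lint_hat [NeZero n] {a : ℝ} (h0 : 0 < a) (ha : a < n / 2) {G : EuclideanSpace ℝ (Fin n) → ℝ} (hG : Dec a G) :
    ∫⁻ ξ, ENNReal.ofReal (‖hat G ξ‖ ^ 2 * (Gamma ((n:ℝ) / 2 - a) * (π * ‖ξ‖ ^ 2) ^ (-((n:ℝ) / 2 - a)))) =
    ENNReal.ofReal (Gamma a * π ^ (-a) * ∫ z, G z.1 * G z.2 * KK a z.1 z.2 ∂(volume.prod volume)) ∧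
    0 ≤ Gamma a * π ^ (-a) * ∫ z, G z.1 * G z.2 * KK a z.1 z.2 ∂(volume.prod volume) := by
  have hπ := Real.pi_pos
  have hn : (0:ℝ) < n := by exact_mod_cast Nat.pos_of_ne_zero (NeZero.ne n)
  have hGi := hG.integrable ha
  have hGm : Measurable G := hG.1
  have hKi := IK_int ha hG hG
  have hb : 0 < (n:ℝ) / 2 - a := by linarith
  set F : ℝ → EuclideanSpace ℝ (Fin n) × EuclideanSpace ℝ (Fin n) → ℝ :=
    fun t z => t ^ (a - 1) * (G z.1 * G z.2 * rexp (-(π * ‖z.1 - z.2‖ ^ 2 * t))) with hF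
  have hne : ∀ᵐ z ∂((volume : Measure (EuclideanSpace ℝ (Fin n))).prod (volume : Measure (EuclideanSpace ℝ (Fin n)))), z.1 ≠ z.2 :=
    (vol_ac.prod vol_ac).ae_le (ae_ne (n := n))
  have hFt : ∀ z : EuclideanSpace ℝ (Fin n) × EuclideanSpace ℝ (Fin n), z.1 ≠ z.2 →
      IntegrableOn (fun t => t ^ (a - 1) * rexp (-(π * ‖z.1 - z.2‖ ^ 2 * t))) (Set.Ioi 0) ∧
      ∫ t in Set.Ioi 0, t ^ (a - 1) * rexp (-(π * ‖z.1 - z.2‖ ^ 2 * t)) = Gamma a * π ^ (-a) * KK a z.1 z.2 := by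
    intro z hz
    have hz' : 0 < ‖z.1 - z.2‖ := norm_pos_iff.2 (sub_ne_zero.2 hz)
    have e : ∫ t in Set.Ioi 0, t ^ (a - 1) * rexp (-(π * ‖z.1 - z.2‖ ^ 2 * t)) = Gamma a * π ^ (-a) * KK a z.1 z.2 := by
      rw [Real.integral_rpow_mul_exp_neg_mul_Ioi h0 (by positivity)]
      unfold KK
      rw [one_div, Real.inv_rpow (by positivity), ← Real.rpow_neg (by positivity), Real.mul_rpow hπ.le (by positivity)]
      ring
    refine ⟨?_, e⟩
    by_contra hc
    have h3 := integral_undef hc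
    rw [h3] at e
    have : 0 < Gamma a * π ^ (-a) * KK a z.1 z.2 := by
      have := Real.Gamma_pos_of_pos h0
      unfold KK; positivity
    linarith
  have hFm : Measurable (Function.uncurry F) := by
    simp only [hF, Function.uncurry_def]
    fun_prop
  have hFi : Integrable (Function.uncurry F) ((volume.restrict (Set.Ioi 0)).prod (volume.prod volume)) := by
    rw [integrable_prod_iff' hFm.aestronglyMeasurable]
    constructor
    · filter_upwards [hne] with z hz
      refine ((hFt z hz).1.integrable.const_mul (G z.1 * G z.2)).congr (.of_forall fun t => ?_)
      simp only [hF, Function.uncurry]; ring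
    · refine (hKi.norm.const_mul (Gamma a * π ^ (-a))).congr ?_
      filter_upwards [hne] with z hz
      rw [norm_mul, Real.norm_of_nonneg (KK_nonneg _ _ _)]
      calc _ = ‖G z.1 * G z.2‖ * (Gamma a * π ^ (-a) * KK a z.1 z.2) := by ring
        _ = ∫ t in Set.Ioi 0, ‖G z.1 * G z.2‖ * (t ^ (a - 1) * rexp (-(π * ‖z.1 - z.2‖ ^ 2 * t))) := by
            rw [integral_const_mul, (hFt z hz).2]
        _ = _ := by
            refine setIntegral_congr_fun measurableSet_Ioi fun t ht => ?_
            have ht : 0 < t := ht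
            simp only [hF, Function.uncurry]
            simp only [norm_mul]
            rw [Real.norm_of_nonneg (by positivity : 0 ≤ t ^ (a - 1)), Real.norm_of_nonneg (Real.exp_pos _).le]
            ring
  have hsw : ∫ t in Set.Ioi 0, ∫ z, F t z ∂(volume.prod volume) = Gamma a * π ^ (-a) * ∫ z, G z.1 * G z.2 * KK a z.1 z.2 ∂(volume.prod volume) := by
    rw [integral_integral_swap hFi, ← integral_const_mul]
    refine integral_congr_ae ?_
    filter_upwards [hne] with z hz
    calc _ = ∫ t in Set.Ioi 0, (G z.1 * G z.2) * (t ^ (a - 1) * rexp (-(π * ‖z.1 - z.2‖ ^ 2 * t))) := by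
          congr 1; ext t; simp only [hF]; ring
      _ = _ := by rw [integral_const_mul, (hFt z hz).2]; ring
  have hinner : ∀ t ∈ Set.Ioi (0:ℝ), ∫ z, F t z ∂(volume.prod volume) = t ^ (-((n:ℝ) / 2 - a) - 1) * ∫ ξ, rexp (-(π * ‖ξ‖ ^ 2 / t)) * ‖hat G ξ‖ ^ 2 := by
    intro t ht
    have ht : 0 < t := ht
    rw [gauss_id hGi ht, ← mul_assoc, ← Real.rpow_add ht]
    simp only [hF]
    rw [integral_const_mul]
    congr 2
    ring
  have hnn : 0 ≤ᵐ[volume.restrict (Set.Ioi (0:ℝ))] fun t => ∫ z, F t z ∂(volume.prod volume) := by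
    refine (ae_restrict_iff' measurableSet_Ioi).2 (.of_forall fun t ht => ?_)
    have ht' : 0 < t := ht
    simp only [Pi.zero_apply]
    rw [hinner t ht]
    refine mul_nonneg (by positivity) (integral_nonneg fun ξ => by positivity)
  have hGb : ∀ t : ℝ, 0 < t → Integrable (fun ξ : EuclideanSpace ℝ (Fin n) => rexp (-(π * ‖ξ‖ ^ 2 / t)) * ‖hat G ξ‖ ^ 2) := by
    intro t ht
    have hgi : Integrable (fun ξ : EuclideanSpace ℝ (Fin n) => rexp (-(π * ‖ξ‖ ^ 2 / t))) := by
      have := GaussianFourier.integrable_cexp_neg_mul_sq_norm_add (V := EuclideanSpace ℝ (Fin n)) (b := ((π / t : ℝ) : ℂ)) (by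
        rw [Complex.ofReal_re]; positivity) 0 0
      refine this.re.congr (.of_forall fun ξ => ?_)
      simp only [zero_mul, add_zero]
      rw [show -((π / t : ℝ) : ℂ) * (‖ξ‖:ℂ) ^ 2 = ((-(π * ‖ξ‖ ^ 2 / t) : ℝ) : ℂ) by push_cast; ring, ← Complex.ofReal_exp]
      exact Complex.ofReal_re _
    refine hgi.mul_bdd (c := (∫ x, ‖G x‖) ^ 2) ((hat_cont hGi).norm.pow 2).aestronglyMeasurable (.of_forall fun ξ => ?_)
    rw [norm_pow, norm_norm]
    gcongr
    exact hat_le ξ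
  have hcm : Measurable (hat G) := (hat_cont hGi).measurable
  have hFl : Integrable (fun t => ∫ z, F t z ∂(volume.prod volume)) (volume.restrict (Set.Ioi (0:ℝ))) := hFi.integral_prod_left
  rw [← hsw]
  refine ⟨?_, integral_nonneg_of_ae hnn⟩
  rw [ofReal_integral_eq_lintegral_ofReal hFl hnn]
  calc _ = ∫⁻ ξ : EuclideanSpace ℝ (Fin n), ∫⁻ t in Set.Ioi 0, ENNReal.ofReal (t ^ (-((n:ℝ) / 2 - a) - 1) * (rexp (-(π * ‖ξ‖ ^ 2 / t)) * ‖hat G ξ‖ ^ 2)) := by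
        refine lintegral_congr_ae ?_
        have : NeZero n := inferInstance
        have hnt : Nontrivial (EuclideanSpace ℝ (Fin n)) := by
          apply Module.nontrivial_of_finrank_pos (R := ℝ)
          rw [finrank_euclideanSpace, Fintype.card_fin]; exact Nat.pos_of_ne_zero (NeZero.ne n)
        have hx0 : ∀ᵐ ξ : EuclideanSpace ℝ (Fin n), ξ ≠ 0 := by
          rw [ae_iff]; simp
        filter_upwards [hx0] with ξ hξ
        have : 0 < ‖ξ‖ := norm_pos_iff.2 hξ
        rw [ENNReal.ofReal_mul (by positivity), ← lint_gamma_inv hb (by positivity), ← lintegral_const_mul _ (by fun_prop)]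
        refine lintegral_congr fun t => ?_
        rw [← ENNReal.ofReal_mul (by positivity)]
        congr 1; ring
    _ = ∫⁻ t in Set.Ioi 0, ∫⁻ ξ : EuclideanSpace ℝ (Fin n), ENNReal.ofReal (t ^ (-((n:ℝ) / 2 - a) - 1) * (rexp (-(π * ‖ξ‖ ^ 2 / t)) * ‖hat G ξ‖ ^ 2)) := by
        rw [lintegral_lintegral_swap]
        have : Measurable (fun q : EuclideanSpace ℝ (Fin n) × ℝ => ENNReal.ofReal (q.2 ^ (-((n:ℝ) / 2 - a) - 1) * (rexp (-(π * ‖q.1‖ ^ 2 / q.2)) * ‖hat G q.1‖ ^ 2))) := by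
          fun_prop
        exact this.aemeasurable
    _ = _ := by
        refine setLIntegral_congr_fun measurableSet_Ioi fun t ht => ?_
        have ht' : 0 < t := ht
        change _ = ENNReal.ofReal (∫ z, F t z ∂(volume.prod volume))
        rw [hinner t ht, ← integral_const_mul, ofReal_integral_eq_lintegral_ofReal ((hGb t ht').const_mul _) (.of_forall fun ξ => by positivity)]

theorem cs_of_lam {I A B : ℝ} (hI : 0 ≤ I) (hA : 0 ≤ A) (hB : 0 ≤ B) (h : ∀ l > 0, 2 * I ≤ l * A + l⁻¹ * B) : I ^ 2 ≤ A * B := by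
  have : discrim A (-(2 * I)) B ≤ 0 := by
    refine discrim_le_zero fun x => ?_
    rcases le_or_gt x 0 with hx | hx
    · nlinarith [mul_self_nonneg x, mul_nonneg hA (mul_self_nonneg x), mul_nonneg hI (neg_nonneg.2 hx)]
    · have h1 := mul_le_mul_of_nonneg_right (h x hx) hx.le
      have : x⁻¹ * B * x = B := by field_simp
      nlinarith
  unfold discrim at this
  nlinarith

theorem parseval (f : SchwartzMap (EuclideanSpace ℝ (Fin n)) ℝ) {G : EuclideanSpace ℝ (Fin n) → ℝ} (hG : Integrable G) :
    ((∫ x, f x * G x : ℝ) : ℂ) = ∫ ξ, hat f (-ξ) * hat G ξ := by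
  set fc : SchwartzMap (EuclideanSpace ℝ (Fin n)) ℂ := SchwartzMap.postcompCLM (𝕜 := ℝ) (Complex.ofRealCLM) f with hfc
  have hfc' : ⇑fc = fun x => (f x : ℂ) := by ext x; simp [hfc]
  set φ : SchwartzMap (EuclideanSpace ℝ (Fin n)) ℂ := 𝓕⁻ fc with hφ
  have h1 : ∀ ξ, φ ξ = hat f (-ξ) := by
    intro ξ
    rw [hφ, SchwartzMap.fourierInv_coe, Real.fourierInv_eq_fourier_neg, hfc']
    rfl
  have h2 : ∀ x, 𝓕 (φ : EuclideanSpace ℝ (Fin n) → ℂ) x = (f x : ℂ) := by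
    intro x
    rw [← SchwartzMap.fourier_coe, hφ, FourierTransform.fourier_fourierInv_eq, hfc']
  have := VectorFourier.integral_fourierIntegral_smul_eq_flip (V := EuclideanSpace ℝ (Fin n)) (W := EuclideanSpace ℝ (Fin n)) Real.continuous_fourierChar
    (L := innerₗ (EuclideanSpace ℝ (Fin n))) (by exact continuous_inner) (φ.integrable (μ := volume)) (hG.ofReal (𝕜 := ℂ))
  rw [flip_innerₗ] at this
  calc _ = ∫ x, 𝓕 (φ : EuclideanSpace ℝ (Fin n) → ℂ) x • ((G x : ℝ) : ℂ) := by
        rw [← integral_complex_ofReal]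
        congr 1; ext x
        rw [h2, smul_eq_mul]; push_cast; rfl
    _ = ∫ x, φ x • 𝓕 (fun x => ((G x : ℝ) : ℂ)) x := this
    _ = _ := by
        congr 1

theorem hat_schwartz_integrable (f : SchwartzMap (EuclideanSpace ℝ (Fin n)) ℝ) {s : ℝ} (hs : 0 < s) (hsn : s ≤ n) :
    Integrable (fun ξ => (2 * π * ‖ξ‖) ^ s * ‖hat f ξ‖ ^ 2) := by
  have hπ := Real.pi_pos
  set fc : SchwartzMap (EuclideanSpace ℝ (Fin n)) ℂ := SchwartzMap.postcompCLM (𝕜 := ℝ) (Complex.ofRealCLM) f with hfc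
  have hfc' : ⇑fc = fun x => (f x : ℂ) := by ext x; simp [hfc]
  set ψ : SchwartzMap (EuclideanSpace ℝ (Fin n)) ℂ := 𝓕 fc with hψ
  have h1 : ∀ ξ, hat f ξ = ψ ξ := by
    intro ξ
    rw [hψ, SchwartzMap.fourier_coe, hfc']
    rfl
  simp_rw [h1]
  have i0 := ψ.integrable_pow_mul volume 0
  have i1 := ψ.integrable_pow_mul volume n
  have hC := fun ξ => hat_le (G := f) ξ
  simp_rw [h1] at hC
  refine (((i0.add (i1.const_mul ((2 * π) ^ n))).const_mul (∫ x, ‖f x‖))).mono (by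
    have : Continuous ψ := ψ.continuous
    have hm : Measurable (fun ξ : EuclideanSpace ℝ (Fin n) => (2 * π * ‖ξ‖) ^ s * ‖ψ ξ‖ ^ 2) := by
      have := this.measurable
      fun_prop
    exact hm.aestronglyMeasurable) (.of_forall fun ξ => ?_)
  have hc0 : 0 ≤ ∫ x, ‖f x‖ := integral_nonneg fun x => norm_nonneg _
  rw [Real.norm_of_nonneg (by positivity)]
  simp only [Pi.add_apply, pow_zero, one_mul]
  rw [Real.norm_of_nonneg (by positivity)]
  have h2 : (2 * π * ‖ξ‖) ^ s ≤ 1 + (2 * π) ^ n * ‖ξ‖ ^ n := by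
    rw [← mul_pow]
    rcases le_or_gt (2 * π * ‖ξ‖) 1 with h | h
    · have := Real.rpow_le_one (by positivity) h hs.le
      have : 0 ≤ (2 * π * ‖ξ‖) ^ n := by positivity
      linarith
    · have := Real.rpow_le_rpow_of_exponent_le h.le hsn
      rw [Real.rpow_natCast] at this
      linarith
  calc (2 * π * ‖ξ‖) ^ s * ‖ψ ξ‖ ^ 2 ≤ (1 + (2 * π) ^ n * ‖ξ‖ ^ n) * (‖ψ ξ‖ * ∫ x, ‖f x‖) := by
        rw [sq]; gcongr; exact hC ξ
    _ = _ := by ring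

theorem fourier_ineq [NeZero n] {a : ℝ} (h0 : 0 < a) (ha : a < n / 2) (f : SchwartzMap (EuclideanSpace ℝ (Fin n)) ℝ)
    {G : EuclideanSpace ℝ (Fin n) → ℝ} (hG : Dec a G) :
    (∫ x, f x * G x) ^ 2 ≤ (∫ ξ, (2 * π * ‖ξ‖) ^ ((n:ℝ) - 2 * a) * ‖hat f ξ‖ ^ 2) *
      ((2:ℝ) ^ (-((n:ℝ) - 2 * a)) * π ^ (-((n:ℝ) / 2)) * (Gamma a / Gamma ((n:ℝ) / 2 - a)) *
        ∫ z, G z.1 * G z.2 * KK a z.1 z.2 ∂(volume.prod volume)) := by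
  have hπ := Real.pi_pos
  have hn : (0:ℝ) < n := by exact_mod_cast Nat.pos_of_ne_zero (NeZero.ne n)
  have hGi := hG.integrable ha
  have hb : 0 < (n:ℝ) / 2 - a := by linarith
  have hΓ := Real.Gamma_pos_of_pos hb
  obtain ⟨hL, hQ0⟩ := lint_hat h0 ha hG
  have hcm : Measurable (hat G) := (hat_cont hGi).measurable
  set Q := ∫ z, G z.1 * G z.2 * KK a z.1 z.2 ∂(volume.prod volume) with hQ
  have hBm : Measurable (fun ξ => ‖hat G ξ‖ ^ 2 * (Gamma ((n:ℝ) / 2 - a) * (π * ‖ξ‖ ^ 2) ^ (-((n:ℝ) / 2 - a)))) := by fun_prop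
  have hBi : Integrable (fun ξ => ‖hat G ξ‖ ^ 2 * (Gamma ((n:ℝ) / 2 - a) * (π * ‖ξ‖ ^ 2) ^ (-((n:ℝ) / 2 - a)))) := by
    refine ⟨hBm.aestronglyMeasurable, ?_⟩
    rw [hasFiniteIntegral_iff_ofReal (.of_forall fun ξ => by positivity), hL]
    exact ENNReal.ofReal_lt_top
  have hBv : ∫ ξ, ‖hat G ξ‖ ^ 2 * (Gamma ((n:ℝ) / 2 - a) * (π * ‖ξ‖ ^ 2) ^ (-((n:ℝ) / 2 - a))) = Gamma a * π ^ (-a) * Q := by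
    rw [integral_eq_lintegral_of_nonneg_ae (.of_forall fun ξ => by positivity) hBm.aestronglyMeasurable, hL, ENNReal.toReal_ofReal hQ0]
  set c : ℝ := 2 ^ (-((n:ℝ) - 2 * a)) * π ^ (-((n:ℝ) / 2 - a)) / Gamma ((n:ℝ) / 2 - a) with hc
  have hpt : ∀ ξ : EuclideanSpace ℝ (Fin n), ξ ≠ 0 → (2 * π * ‖ξ‖) ^ (-((n:ℝ) - 2 * a)) * ‖hat G ξ‖ ^ 2 =
      c * (‖hat G ξ‖ ^ 2 * (Gamma ((n:ℝ) / 2 - a) * (π * ‖ξ‖ ^ 2) ^ (-((n:ℝ) / 2 - a)))) := by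
    intro ξ hξ
    have hp : 0 < ‖ξ‖ := norm_pos_iff.2 hξ
    rw [hc, Real.mul_rpow hπ.le (by positivity), ← Real.rpow_natCast ‖ξ‖ 2, ← Real.rpow_mul hp.le,
      Real.mul_rpow (by positivity) hp.le, Real.mul_rpow (by norm_num) hπ.le,
      show ((2:ℕ):ℝ) * -((n:ℝ) / 2 - a) = -((n:ℝ) - 2 * a) by push_cast; ring,
      show π ^ (-((n:ℝ) - 2 * a)) = π ^ (-((n:ℝ) / 2 - a)) * π ^ (-((n:ℝ) / 2 - a)) by
        rw [← Real.rpow_add hπ]; congr 1; ring]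
    generalize Gamma ((n:ℝ) / 2 - a) = g at hΓ
    field_simp
  have hnt : Nontrivial (EuclideanSpace ℝ (Fin n)) := by
    apply Module.nontrivial_of_finrank_pos (R := ℝ)
    rw [finrank_euclideanSpace, Fintype.card_fin]; exact Nat.pos_of_ne_zero (NeZero.ne n)
  have hx0 : ∀ᵐ ξ : EuclideanSpace ℝ (Fin n), ξ ≠ 0 := by
    rw [ae_iff]; simp
  set A := ∫ ξ, (2 * π * ‖ξ‖) ^ ((n:ℝ) - 2 * a) * ‖hat f ξ‖ ^ 2 with hA
  have hAi := hat_schwartz_integrable f (s := (n:ℝ) - 2 * a) (by linarith) (by linarith)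
  have hAi' : Integrable (fun ξ => (2 * π * ‖ξ‖) ^ ((n:ℝ) - 2 * a) * ‖hat f (-ξ)‖ ^ 2) := by
    have := hAi.comp_neg
    simpa only [norm_neg] using this
  have hA' : ∫ ξ, (2 * π * ‖ξ‖) ^ ((n:ℝ) - 2 * a) * ‖hat f (-ξ)‖ ^ 2 = A := by
    rw [hA, ← integral_neg_eq_self]
    simp only [norm_neg, neg_neg]
  have hBi' := hBi.const_mul c
  have hB' : ∫ ξ, c * (‖hat G ξ‖ ^ 2 * (Gamma ((n:ℝ) / 2 - a) * (π * ‖ξ‖ ^ 2) ^ (-((n:ℝ) / 2 - a)))) =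
      (2:ℝ) ^ (-((n:ℝ) - 2 * a)) * π ^ (-((n:ℝ) / 2)) * (Gamma a / Gamma ((n:ℝ) / 2 - a)) * Q := by
    rw [integral_const_mul, hBv, hc, show π ^ (-((n:ℝ) / 2)) = π ^ (-((n:ℝ) / 2 - a)) * π ^ (-a) by
      rw [← Real.rpow_add hπ]; congr 1; ring]
    ring
  rw [← hB', ← sq_abs]
  have hI := parseval f hGi
  have hI2 : |∫ x, f x * G x| = ‖∫ ξ, hat f (-ξ) * hat G ξ‖ := by
    rw [← hI, Complex.norm_real, Real.norm_eq_abs]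
  rw [hI2]
  refine cs_of_lam (norm_nonneg _) (integral_nonneg fun ξ => by positivity) (integral_nonneg fun ξ => by positivity) fun l hl => ?_
  have hgint : Integrable (fun ξ => l / 2 * ((2 * π * ‖ξ‖) ^ ((n:ℝ) - 2 * a) * ‖hat f (-ξ)‖ ^ 2) +
      l⁻¹ / 2 * (c * (‖hat G ξ‖ ^ 2 * (Gamma ((n:ℝ) / 2 - a) * (π * ‖ξ‖ ^ 2) ^ (-((n:ℝ) / 2 - a)))))) :=
    (hAi'.const_mul _).add (hBi'.const_mul _)
  have key : ‖∫ ξ, hat f (-ξ) * hat G ξ‖ ≤ ∫ ξ, (l / 2 * ((2 * π * ‖ξ‖) ^ ((n:ℝ) - 2 * a) * ‖hat f (-ξ)‖ ^ 2) +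
      l⁻¹ / 2 * (c * (‖hat G ξ‖ ^ 2 * (Gamma ((n:ℝ) / 2 - a) * (π * ‖ξ‖ ^ 2) ^ (-((n:ℝ) / 2 - a)))))) := by
    refine norm_integral_le_of_norm_le hgint ?_
    filter_upwards [hx0] with ξ hξ
    rw [← hpt ξ hξ, norm_mul]
    have hp : 0 < ‖ξ‖ := norm_pos_iff.2 hξ
    have hw : 0 < (2 * π * ‖ξ‖) ^ ((n:ℝ) - 2 * a) := by positivity
    rw [Real.rpow_neg (by positivity)]
    generalize (2 * π * ‖ξ‖) ^ ((n:ℝ) - 2 * a) = w at hw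
    generalize ‖hat f (-ξ)‖ = x
    generalize ‖hat G ξ‖ = y
    have e : l / 2 * (w * x ^ 2) + l⁻¹ / 2 * (w⁻¹ * y ^ 2) - x * y = (l * w * x - y) ^ 2 / (2 * l * w) := by
      field_simp; ring
    have : 0 ≤ (l * w * x - y) ^ 2 / (2 * l * w) := by positivity
    linarith
  have e2 := integral_add (hAi'.const_mul (l / 2)) (hBi'.const_mul (l⁻¹ / 2))
  rw [e2, integral_const_mul, integral_const_mul, hA'] at key
  linarith

end WFI

namespace WFI
variable {n : ℕ}

theorem schwartz_bd (f : SchwartzMap (EuclideanSpace ℝ (Fin n)) ℝ) {a : ℝ} (h0 : 0 < a) (ha : a < n / 2) :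
    Bd (fun x => f x * rho x ^ (-a)) := by
  have hm : Measurable f := f.continuous.measurable
  refine ⟨by fun_prop, 2 ^ n * (Finset.Iic (n, 0)).sup (fun m => SchwartzMap.seminorm ℝ m.1 m.2) f, fun x => ?_⟩
  · have h1 := SchwartzMap.one_add_le_sup_seminorm_apply (𝕜 := ℝ) (m := (n, 0)) (k := n) (n := 0) le_rfl le_rfl f x
    rw [norm_iteratedFDeriv_zero] at h1
    refine le_trans ?_ h1
    have hr : rho x ^ (-a) ≤ (1 + ‖x‖) ^ n := by
      unfold rho
      rw [Real.rpow_neg (by positivity), ← Real.inv_rpow (by positivity), inv_div]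
      calc ((1 + ‖x‖ ^ 2) / 2) ^ a ≤ ((1 + ‖x‖) ^ 2) ^ a := by
            refine Real.rpow_le_rpow (by positivity) ?_ h0.le
            have := norm_nonneg x
            nlinarith
        _ = (1 + ‖x‖) ^ (2 * a) := by
            rw [← Real.rpow_natCast, ← Real.rpow_mul (by positivity)]; norm_num
        _ ≤ (1 + ‖x‖) ^ (n:ℝ) := by
            refine Real.rpow_le_rpow_of_exponent_le ?_ (by linarith)
            linarith [norm_nonneg x]
        _ = _ := Real.rpow_natCast _ _
    have := rho_pos x
    rw [abs_mul, abs_of_pos (by positivity : 0 < rho x ^ (-a)), mul_comm, Real.norm_eq_abs]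
    gcongr

theorem E0_zero [NeZero n] : E0 n 0 = 2 * π ^ (((n : ℝ) + 1) / 2) / Gamma (((n : ℝ) + 1) / 2) := by
  have hπ := Real.pi_pos
  have hn : (0:ℝ) < n := by exact_mod_cast Nat.pos_of_ne_zero (NeZero.ne n)
  have h := Real.Gamma_mul_Gamma_add_half ((n:ℝ) / 2)
  have h1 := Real.Gamma_pos_of_pos hn
  have h2 := Real.Gamma_pos_of_pos (show 0 < ((n:ℝ) + 1) / 2 by positivity)
  rw [show (n:ℝ) / 2 + 1 / 2 = (n + 1) / 2 by ring, show 2 * ((n:ℝ) / 2) = n by ring] at h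
  unfold E0
  rw [show (n:ℝ) - 0 - n / 2 = n / 2 by ring, show (n:ℝ) - 0 = n by ring, show (n:ℝ) - 2 * 0 = n by ring]
  rw [← mul_div_assoc, div_eq_div_iff h1.ne' h2.ne']
  calc _ = 2 ^ (n:ℝ) * π ^ ((n:ℝ) / 2) * (Gamma ((n:ℝ) / 2) * Gamma (((n:ℝ) + 1) / 2)) := by ring
    _ = (2 ^ (n:ℝ) * 2 ^ (1 - (n:ℝ))) * (π ^ ((n:ℝ) / 2) * √π) * Gamma n := by rw [h]; ring
    _ = _ := by
        rw [← Real.rpow_add two_pos, Real.sqrt_eq_rpow, ← Real.rpow_add hπ,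
          show (n:ℝ) + (1 - n) = 1 by ring, Real.rpow_one, show (n:ℝ) / 2 + 1 / 2 = (n + 1) / 2 by ring]

theorem E0_kappa [NeZero n] {a : ℝ} (h0 : 0 < a) (ha : a < n / 2) :
    (2:ℝ) ^ (-((n:ℝ) - 2 * a)) * π ^ (-((n:ℝ) / 2)) * (Gamma a / Gamma ((n:ℝ) / 2 - a)) =
      Gamma a / Gamma (n - a) * (E0 n a)⁻¹ := by
  have hπ := Real.pi_pos
  have hn : (0:ℝ) < n := by exact_mod_cast Nat.pos_of_ne_zero (NeZero.ne n)
  have h1 := Real.Gamma_pos_of_pos (show 0 < (n:ℝ) - a by linarith)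
  have h2 := Real.Gamma_pos_of_pos (show 0 < (n:ℝ) / 2 - a by linarith)
  unfold E0
  rw [show (n:ℝ) - a - n / 2 = n / 2 - a by ring, Real.rpow_neg two_pos.le, Real.rpow_neg hπ.le]
  generalize Gamma ((n:ℝ) / 2 - a) = g at h2
  generalize Gamma ((n:ℝ) - a) = g' at h1
  generalize (2:ℝ) ^ ((n:ℝ) - 2 * a) = w
  generalize π ^ ((n:ℝ) / 2) = w'
  field_simp

theorem dual_ineq [NeZero n] {a : ℝ} (h0 : 0 < a) (ha : a < n / 2) (f : SchwartzMap (EuclideanSpace ℝ (Fin n)) ℝ)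
    {k : ℕ} {P : EuclideanSpace ℝ (Fin n) → ℝ} (hP : P ∈ V n k) :
    ip (fun x => f x * rho x ^ (-a)) P ^ 2 ≤
      (Gamma a / Gamma (n - a) * ∫ ξ, (2 * π * ‖ξ‖) ^ ((n:ℝ) - 2 * a) * ‖hat f ξ‖ ^ 2) * ((E0 n a)⁻¹ * bf a P P) := by
  have hD : Dec a (fun x => P x * wt a x) := by
    have hm : Measurable P := (V_contDiff k P hP).continuous.measurable
    obtain ⟨C, hC⟩ := V_bdd k P hP
    refine ⟨by fun_prop, C, fun x => ?_⟩
    have := wt_pos a x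
    rw [abs_mul, abs_of_pos this]
    gcongr
    exact hC x
  have h := fourier_ineq h0 ha f hD
  have e : ip (fun x => f x * rho x ^ (-a)) P = ∫ x, f x * (P x * wt a x) := by
    unfold ip
    rw [int_sig]
    congr 1; ext x
    unfold wt
    rw [show (n:ℝ) - a = -a + n by ring, Real.rpow_add (rho_pos x), Real.rpow_natCast]
    ring
  rw [e]
  refine h.trans (le_of_eq ?_)
  rw [E0_kappa h0 ha, bf_vol]
  ring

theorem core [NeZero n] {s q qs : ℝ} (hs : 0 < s) (hsn : s < n) (hqs : qs = 2 * n / (n - s)) (hq : 2 < q) (hq' : q < qs)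
    (f : SchwartzMap (EuclideanSpace ℝ (Fin n)) ℝ) :
    (∫ x, |f x * rho x ^ (-(((n:ℝ) - s) / 2))| ^ q ∂(sig n)) ^ (2 / q) ≤
      ((1 - (q - 2) / (qs - 2)) * (∫ x, (f x * rho x ^ (-(((n:ℝ) - s) / 2))) ^ 2 ∂(sig n)) +
        (q - 2) / (qs - 2) * (Gamma ((n - s) / 2) / Gamma ((n + s) / 2) * ∫ ξ, (2 * π * ‖ξ‖) ^ s * ‖hat f ξ‖ ^ 2)) *
        (E0 n 0) ^ (2 / q - 1) := by
  have hn : (0:ℝ) < n := by exact_mod_cast Nat.pos_of_ne_zero (NeZero.ne n)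
  have hπ := Real.pi_pos
  have hns : 0 < (n:ℝ) - s := by linarith
  set a₁ : ℝ := ((n:ℝ) - s) / 2 with ha₁
  have h10 : 0 < a₁ := by rw [ha₁]; linarith
  have h1n : a₁ < n / 2 := by rw [ha₁]; linarith
  have hq0 : 0 < q := by linarith
  set a₂ : ℝ := (n:ℝ) / q with ha₂
  have h20 : 0 < a₂ := by rw [ha₂]; positivity
  have h2n : a₂ < n / 2 := by rw [ha₂]; gcongr
  have ht : (n:ℝ) / ((q - 2) + 2) = a₂ := by rw [ha₂]; congr 1; ring
  have hT : (n:ℝ) / ((qs - 2) + 2) = a₁ := by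
    rw [ha₁, sub_add_cancel, hqs]; field_simp
  set θ : ℝ := (q - 2) / (qs - 2) with hθ
  have hθ0 : 0 ≤ θ := div_nonneg (by linarith) (by linarith)
  have hθ1 : θ ≤ 1 := by rw [hθ, div_le_one (by linarith)]; linarith
  set u : EuclideanSpace ℝ (Fin n) → ℝ := fun x => f x * rho x ^ (-a₁) with hu
  have hub : Bd u := schwartz_bd f h10 h1n
  set h : EuclideanSpace ℝ (Fin n) → ℝ := fun x => |u x| ^ (q - 2) * u x with hh
  have hhb : Bd h := (hub.rpow (by linarith)).mul hub
  set N : ℝ := Gamma a₁ / Gamma ((n + s) / 2) * ∫ ξ, (2 * π * ‖ξ‖) ^ s * ‖hat f ξ‖ ^ 2 with hN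
  have hN0 : 0 ≤ N := by
    have := Real.Gamma_pos_of_pos h10
    have := Real.Gamma_pos_of_pos (show 0 < ((n:ℝ) + s) / 2 by positivity)
    refine mul_nonneg (by positivity) (integral_nonneg fun ξ => by positivity)
  have hE1 := E0_pos (n := n) h1n
  have hE2 := E0_pos (n := n) h2n
  have D1 : Diag (W n) ((E0 n a₁)⁻¹ • bform n a₁ h1n) (fun k => ev n a₁ k / E0 n a₁) := by
    intro k w hw v
    have := bform_diag h1n k w hw v
    simp only [smul_apply, smul_eq_mul, this]
    ring
  have D2 : Diag (W n) ((E0 n a₂)⁻¹ • bform n a₂ h2n) (fun k => ev n a₂ k / E0 n a₂) := by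
    intro k w hw v
    have := bform_diag h2n k w hw v
    simp only [smul_apply, smul_eq_mul, this]
    ring
  have key := abstract_A4 W_mono W_dense D2 D1
    (fun v w => by simp only [smul_apply, smul_eq_mul]; rw [bform_symm])
    (fun k => div_pos (ev_pos h20 h2n k) hE2) (fun k => div_pos (ev_pos h10 h1n k) hE1) hθ0 hθ1
    (fun k => by
      have e1 := ev_gam (n := n) (t := q - 2) (by linarith) k
      have e2 := ev_gam (n := n) (t := qs - 2) (by linarith) k
      rw [ht] at e1
      rw [hT] at e2
      rw [e1, e2]
      exact gam_cmp (by linarith) (by linarith) k) hN0 ((hub.memLp 2).toLp u)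
    (fun k g hg => by
      obtain ⟨P, hP, rfl⟩ := mem_W.1 hg
      rw [inner_toLp]
      simp only [smul_apply, smul_eq_mul]
      rw [bform_toLp]
      have := dual_ineq h10 h1n f hP
      rw [show (n:ℝ) - a₁ = (n + s) / 2 by rw [ha₁]; ring, show (n:ℝ) - 2 * a₁ = s by rw [ha₁]; ring] at this
      exact this) ((hhb.memLp 2).toLp h)
  simp only [smul_apply, smul_eq_mul] at key
  rw [inner_toLp, bform_toLp, ← real_inner_self_eq_norm_sq, inner_toLp] at key
  set I := ∫ x, |u x| ^ q ∂(sig n) with hI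
  have hI0 : 0 ≤ I := integral_nonneg fun x => by positivity
  have e1 : ip u h = I := by
    unfold ip
    rw [hI]; congr 1; ext x
    simp only [hh]
    rcases eq_or_ne (u x) 0 with h0 | h0
    · rw [h0, abs_zero, Real.zero_rpow hq0.ne']; ring
    · rw [show q = (q - 2) + (2:ℕ) by push_cast; ring, Real.rpow_add_natCast (abs_ne_zero.2 h0), sq_abs]
      rw [show q - 2 + (2:ℕ) - 2 = q - 2 by push_cast; ring]; ring
  have e2 : ip u u = ∫ x, u x ^ 2 ∂(sig n) := by
    unfold ip; congr 1; ext x; ring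
  have hp : (n:ℝ) / (n - a₂) = q / (q - 1) := by
    have : q - 1 ≠ 0 := by linarith
    have h3 : (n:ℝ) - a₂ ≠ 0 := by linarith
    rw [div_eq_div_iff h3 this, ha₂]; field_simp
  have e3 : ∫ x, |h x| ^ ((n:ℝ) / (n - a₂)) ∂(sig n) = I := by
    rw [hI, hp]; congr 1; ext x
    simp only [hh]
    have hq1 : 0 < q - 1 := by linarith
    rcases eq_or_ne (u x) 0 with h0 | h0
    · rw [h0, mul_zero, abs_zero, Real.zero_rpow hq0.ne', Real.zero_rpow (by positivity)]
    · have hx := abs_pos.2 h0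
      rw [abs_mul, abs_of_pos (by positivity : 0 < |u x| ^ (q - 2))]
      nth_rewrite 2 [← Real.rpow_one |u x|]
      rw [← Real.rpow_add hx, ← Real.rpow_mul hx.le]
      congr 1; field_simp; ring
  have hH := sharp_HLS h20 h2n hhb
  rw [e3, hp] at hH
  rw [e1, e2] at key
  have hq1 : 0 < q - 1 := by linarith
  have x1 : 1 - 2 / (q / (q - 1)) = 2 / q - 1 := by field_simp; ring
  have x2 : 2 / (q / (q - 1)) = 2 - 2 / q := by field_simp
  rw [x1, x2] at hH
  set M := (1 - θ) * (∫ x, u x ^ 2 ∂(sig n)) + θ * N with hM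
  have hM0 : 0 ≤ M := add_nonneg (mul_nonneg (by linarith) (integral_nonneg fun x => by positivity)) (mul_nonneg hθ0 hN0)
  have hZ := E0_pos (n := n) (a := 0) (by positivity)
  rcases hI0.eq_or_lt with hI0 | hI0
  · rw [← hI0, Real.zero_rpow (by positivity)]; positivity
  have k2 : I ^ 2 ≤ M * (E0 n 0 ^ (2 / q - 1) * I ^ (2 - 2 / q)) := by
    refine key.trans (mul_le_mul_of_nonneg_left ?_ hM0)
    rw [inv_mul_le_iff₀ hE2]
    linarith
  rw [Real.rpow_sub hI0, Real.rpow_two] at k2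
  have hI2 : 0 < I ^ (2 / q) := by positivity
  have k3 : I ^ 2 * I ^ (2 / q) ≤ I ^ 2 * (M * E0 n 0 ^ (2 / q - 1)) := by
    calc _ ≤ M * (E0 n 0 ^ (2 / q - 1) * (I ^ 2 / I ^ (2 / q))) * I ^ (2 / q) := by gcongr
      _ = _ := by field_simp
  exact le_of_mul_le_mul_left k3 (by positivity)

theorem weight_conv (f : SchwartzMap (EuclideanSpace ℝ (Fin n)) ℝ) {a q : ℝ} :
    ∫ x, |f x * rho x ^ (-a)| ^ q ∂(sig n) = 2 ^ ((n:ℝ) - a * q) * ∫ x, |f x| ^ q * (1 + ‖x‖ ^ 2) ^ (-((n:ℝ) - a * q)) := by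
  rw [int_sig, ← integral_const_mul]
  congr 1; ext x
  have hr := rho_pos x
  rw [abs_mul, abs_of_pos (by positivity : 0 < rho x ^ (-a)), Real.mul_rpow (abs_nonneg _) (by positivity),
    ← Real.rpow_mul hr.le, mul_assoc, ← Real.rpow_natCast, ← Real.rpow_add hr,
    show -a * q + n = (n:ℝ) - a * q by ring]
  unfold rho
  rw [Real.div_rpow two_pos.le (by positivity), Real.rpow_neg (by positivity)]
  ring

theorem final (n : ℕ) (hn : 1 ≤ n) (s qstar q β κ a b : ℝ)
    (hs : s ∈ Set.Ioo (0 : ℝ) (n : ℝ))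
    (hqstar : qstar = 2 * n / (n - s))
    (hq : q ∈ Set.Ioo 2 qstar)
    (hβ : β = 2 * n * (1 - q / qstar))
    (hκ : κ = Gamma ((n - s) / 2) / Gamma ((n + s) / 2))
    (ha : a = (q - 2) / (qstar - 2) * κ * 2 ^ ((n : ℝ) * (2 / qstar - 2 / q)) *
      (2 * π ^ (((n : ℝ) + 1) / 2) / Gamma (((n : ℝ) + 1) / 2)) ^ (2 / q - 1))
    (hb : b = (qstar - q) / (qstar - 2) * 2 ^ ((n : ℝ) * (1 - 2 / q)) *
      (2 * π ^ (((n : ℝ) + 1) / 2) / Gamma (((n : ℝ) + 1) / 2)) ^ (2 / q - 1))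
    (f : SchwartzMap (EuclideanSpace ℝ (Fin n)) ℝ) :
      (∫ x : EuclideanSpace ℝ (Fin n), |f x| ^ q * (1 + ‖x‖ ^ 2) ^ (-β / 2)) ^ (2 / q)
        ≤ a * (∫ ξ, (2 * π * ‖ξ‖) ^ s * ‖hat f ξ‖ ^ 2)
          + b * ∫ x : EuclideanSpace ℝ (Fin n), |f x| ^ 2 * (1 + ‖x‖ ^ 2) ^ (-s) := by
  have : NeZero n := ⟨by omega⟩
  obtain ⟨hs0, hsn⟩ := hs
  obtain ⟨hq2, hqq⟩ := hq
  have hn0 : (0:ℝ) < n := by exact_mod_cast hn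
  have hns : 0 < (n:ℝ) - s := by linarith
  have hq0 : 0 < q := by linarith
  have hqs0 : 0 < qstar := by linarith
  have C := core hs0 hsn hqstar hq2 hqq f
  have w1 := weight_conv f (a := ((n:ℝ) - s) / 2) (q := q)
  have w2 := weight_conv f (a := ((n:ℝ) - s) / 2) (q := 2)
  have hqi : (n:ℝ) - s = 2 * n / qstar := by rw [hqstar]; field_simp
  rw [show (n:ℝ) - (n - s) / 2 * 2 = s by ring] at w2
  have x1 : (n:ℝ) - (n - s) / 2 * q = β / 2 := by rw [hβ, hqi]; field_simp
  rw [x1, ← neg_div 2 β] at w1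
  simp only [Real.rpow_two, sq_abs] at w2
  rw [w1, w2, E0_zero, ← hκ] at C
  simp only [sq_abs]
  set Z := (2 * π ^ (((n : ℝ) + 1) / 2) / Gamma (((n : ℝ) + 1) / 2)) ^ (2 / q - 1)
  set J := ∫ x : EuclideanSpace ℝ (Fin n), |f x| ^ q * (1 + ‖x‖ ^ 2) ^ (-β / 2) with hJ
  have hJ0 : 0 ≤ J := integral_nonneg fun x => by positivity
  set A := ∫ ξ, (2 * π * ‖ξ‖) ^ s * ‖hat f ξ‖ ^ 2
  set B := ∫ x : EuclideanSpace ℝ (Fin n), f x ^ 2 * (1 + ‖x‖ ^ 2) ^ (-s)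
  rw [Real.mul_rpow (by positivity) hJ0, ← Real.rpow_mul two_pos.le] at C
  have x2 : β / 2 * (2 / q) = -((n : ℝ) * (2 / qstar - 2 / q)) := by
    rw [hβ]; field_simp; ring
  have x3 : (n : ℝ) * (1 - 2 / q) = (n : ℝ) * (2 / qstar - 2 / q) + s := by
    have : (n:ℝ) * (2 / qstar) = n - s := by rw [hqi]; ring
    linarith
  rw [x2, Real.rpow_neg two_pos.le] at C
  rw [x3, Real.rpow_add two_pos] at hb
  have x4 : (qstar - q) / (qstar - 2) = 1 - (q - 2) / (qstar - 2) := by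
    have : qstar - 2 ≠ 0 := by linarith
    field_simp; ring
  rw [x4] at hb
  have hw : 0 < (2:ℝ) ^ ((n : ℝ) * (2 / qstar - 2 / q)) := by positivity
  rw [inv_mul_le_iff₀ hw] at C
  refine C.trans (le_of_eq ?_)
  rw [ha, hb]; ring

end WFI

/-- Weighted fractional interpolation inequality on Euclidean space (Theorem 1.4). -/
theorem weighted_fractional_interpolation (n : ℕ) (hn : 1 ≤ n) (s qstar q β κ a b : ℝ)
    (hs : s ∈ Set.Ioo (0 : ℝ) (n : ℝ))
    (hqstar : qstar = 2 * n / (n - s))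
    (hq : q ∈ Set.Ioo 2 qstar)
    (hβ : β = 2 * n * (1 - q / qstar))
    (hκ : κ = Gamma ((n - s) / 2) / Gamma ((n + s) / 2))
    (ha : a = (q - 2) / (qstar - 2) * κ * 2 ^ ((n : ℝ) * (2 / qstar - 2 / q)) *
      (2 * π ^ (((n : ℝ) + 1) / 2) / Gamma (((n : ℝ) + 1) / 2)) ^ (2 / q - 1))
    (hb : b = (qstar - q) / (qstar - 2) * 2 ^ ((n : ℝ) * (1 - 2 / q)) *
      (2 * π ^ (((n : ℝ) + 1) / 2) / Gamma (((n : ℝ) + 1) / 2)) ^ (2 / q - 1)) :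
    ∀ f : SchwartzMap (EuclideanSpace ℝ (Fin n)) ℝ,
      (∫ x : EuclideanSpace ℝ (Fin n), |f x| ^ q * (1 + ‖x‖ ^ 2) ^ (-β / 2)) ^ (2 / q)
        ≤ a * homogSobolevNormSq n s f
          + b * ∫ x : EuclideanSpace ℝ (Fin n), |f x| ^ 2 * (1 + ‖x‖ ^ 2) ^ (-s) := by
  intro f
  exact WFI.final n hn s qstar q β κ a b hs hqstar hq hβ hκ ha hb f
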